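/- arXiv:1810.12572 — 9 statements merged into one kernel-verified Lean document; each statement's English description precedes it below -/
import Mathlib

section
/- Under the stated assumptions on Z, V, X, R and F, for every ρ > 0 and every κ > 0 there exists a constant C_{ρ,κ} > 0 such that for all z₁, z₂ ∈ Z with ‖z₁‖_Z ≤ ρ and ‖z₂‖_Z ≤ ρ one has |⟨DF(z₁) − DF(z₂), z₁ − z₂⟩| ≤ κ‖z₁ − z₂‖_Z² + C_{ρ,κ} · min{R(z₁ − z₂), R(z₂ − z₁)} · ‖z₁ − z₂‖_𝕍. -/
theorem ehrling_aux {Z V X : Type*}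
    [NormedAddCommGroup Z] [NormedSpace ℝ Z]
    [NormedAddCommGroup V] [NormedSpace ℝ V]
    [NormedAddCommGroup X] [NormedSpace ℝ X]
    (j : Z →L[ℝ] V) (hj : IsCompactOperator j)
    (k : V →L[ℝ] X) (hk : Function.Injective k) (ε : ℝ) (hε : 0 < ε) :
    ∃ K > (0:ℝ), ∀ z : Z, ‖j z‖ ≤ ε * ‖z‖ + K * ‖k (j z)‖ := by
  obtain ⟨S, hS, hsub⟩ := hj.image_closedBall_subset_compact (𝕜₁ := ℝ) (f := (j : Z →ₗ[ℝ] V)) 1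
  have hT : IsCompact (S ∩ {v : V | ε ≤ ‖v‖}) :=
    hS.inter_right (isClosed_le continuous_const continuous_norm)
  have key : ∃ m > (0:ℝ), ∀ v ∈ S ∩ {v : V | ε ≤ ‖v‖}, m ≤ ‖k v‖ := by
    rcases (S ∩ {v : V | ε ≤ ‖v‖}).eq_empty_or_nonempty with he | hne
    · exact ⟨1, one_pos, by simp [he]⟩
    · obtain ⟨v, hv, hmin⟩ := hT.exists_isMinOn hne (k.continuous.norm.continuousOn)
      refine ⟨‖k v‖, ?_, fun w hw => hmin hw⟩
      rw [gt_iff_lt, norm_pos_iff]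
      intro h0
      have : v = 0 := hk (by rw [h0, map_zero])
      have h2 : ε ≤ ‖v‖ := hv.2
      rw [this, norm_zero] at h2
      linarith
  obtain ⟨m, hm, hmin⟩ := key
  refine ⟨(‖j‖ + 1) / m, by positivity, fun z => ?_⟩
  by_cases hz : z = 0
  · simp [hz]
  have hzp : 0 < ‖z‖ := norm_pos_iff.mpr hz
  set u := (‖z‖)⁻¹ • z with hu
  have hun : ‖u‖ = 1 := by
    rw [hu, norm_smul, norm_inv, norm_norm, inv_mul_cancel₀ hzp.ne']
  have hzu : z = ‖z‖ • u := by
    rw [hu, smul_smul, mul_inv_cancel₀ hzp.ne', one_smul]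
  have huS : j u ∈ S := hsub ⟨u, by simp [hun], rfl⟩
  have main : ‖j u‖ ≤ ε + (‖j‖ + 1) / m * ‖k (j u)‖ := by
    by_cases h : ε ≤ ‖j u‖
    · have h1 := hmin _ ⟨huS, h⟩
      have h2 := j.le_opNorm u
      rw [hun] at h2
      have h3 : (‖j‖ + 1) / m * m ≤ (‖j‖ + 1) / m * ‖k (j u)‖ := by gcongr
      rw [div_mul_cancel₀ _ hm.ne'] at h3
      linarith
    · have : 0 ≤ (‖j‖ + 1) / m * ‖k (j u)‖ := by positivity
      linarith
  have e1 : ‖j z‖ = ‖z‖ * ‖j u‖ := by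
    conv_lhs => rw [hzu, map_smul, norm_smul, norm_norm]
  have e2 : ‖k (j z)‖ = ‖z‖ * ‖k (j u)‖ := by
    conv_lhs => rw [hzu, map_smul, map_smul, norm_smul, norm_norm]
  rw [e1, e2]
  have := mul_le_mul_of_nonneg_left main hzp.le
  linarith

/-- Interpolation estimate for the nonconvex lower order term `F`
(Lemma `lem.estDF` of the paper).  `Z, V` are separable real Hilbert spaces,
`X` a Banach space, `jZV : Z ↪ V` a compact injective embedding, `jVX : V ↪ X`
a continuous injective embedding, `VV` is the elliptic symmetric operator `𝕍`
(realized as a bilinear form), `R` the one-homogeneous bounded dissipation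
potential and `F` the `C²` nonconvexity with `D²F`-growth bound. -/
theorem stmt0
    {Z V X : Type*}
    [NormedAddCommGroup Z] [InnerProductSpace ℝ Z] [CompleteSpace Z]
    [TopologicalSpace.SeparableSpace Z]
    [NormedAddCommGroup V] [InnerProductSpace ℝ V] [CompleteSpace V]
    [TopologicalSpace.SeparableSpace V]
    [NormedAddCommGroup X] [NormedSpace ℝ X]
    (jZV : Z →L[ℝ] V) (hjZV_inj : Function.Injective jZV)
    (hjZV_cpt : IsCompactOperator jZV)
    (jVX : V →L[ℝ] X) (hjVX_inj : Function.Injective jVX)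
    (VV : V →L[ℝ] V →L[ℝ] ℝ) (hVV_symm : ∀ u v : V, VV u v = VV v u)
    (γ : ℝ) (hγ : 0 < γ) (hVV_ell : ∀ v : V, γ * ‖v‖ ^ 2 ≤ VV v v)
    (R : X → ℝ) (hR_conv : ConvexOn ℝ Set.univ R) (hR_cont : Continuous R)
    (hR_hom : ∀ t : ℝ, 0 ≤ t → ∀ x : X, R (t • x) = t * R x)
    (c C : ℝ) (hc : 0 < c) (hC : 0 < C)
    (hR_low : ∀ x : X, c * ‖x‖ ≤ R x) (hR_up : ∀ x : X, R x ≤ C * ‖x‖)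
    (F : Z → ℝ) (hF_nonneg : ∀ z : Z, 0 ≤ F z)
    (DF : Z → V →L[ℝ] ℝ)
    (hDF : ∀ z : Z, HasFDerivAt F ((DF z).comp jZV) z)
    (D2F : Z → Z →L[ℝ] V →L[ℝ] ℝ)
    (hD2F : ∀ z : Z, HasFDerivAt DF (D2F z) z)
    (hD2F_cont : Continuous D2F)
    (C₀ q : ℝ) (hC₀ : 0 < C₀) (hq : 1 ≤ q)
    (hD2F_bound : ∀ z v : Z, ‖D2F z v‖ ≤ C₀ * (1 + ‖z‖ ^ q) * ‖v‖) :
    ∀ ρ > (0:ℝ), ∀ κ > (0:ℝ), ∃ Cρκ > (0:ℝ), ∀ z₁ z₂ : Z,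
      ‖z₁‖ ≤ ρ → ‖z₂‖ ≤ ρ →
      |DF z₁ (jZV (z₁ - z₂)) - DF z₂ (jZV (z₁ - z₂))| ≤
        κ * ‖z₁ - z₂‖ ^ 2 +
          Cρκ * min (R (jVX (jZV (z₁ - z₂)))) (R (jVX (jZV (z₂ - z₁)))) *
            Real.sqrt (VV (jZV (z₁ - z₂)) (jZV (z₁ - z₂))) := by
  intro ρ hρ κ hκ
  set M := C₀ * (1 + ρ ^ q) with hM
  have hMp : 0 < M := by positivity
  set a := ‖jZV‖ + 1 with ha
  have hap : 0 < a := by positivity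
  set B := M ^ 2 / (2 * κ) with hB
  have hBp : 0 < B := by positivity
  obtain ⟨K, hK, hE⟩ := ehrling_aux jZV hjZV_cpt jVX hjVX_inj (κ / (2 * B * a)) (by positivity)
  have hsγ : 0 < Real.sqrt γ := Real.sqrt_pos.mpr hγ
  refine ⟨B * K / (c * Real.sqrt γ), by positivity, fun z₁ z₂ h₁ h₂ => ?_⟩
  have hlip : ‖DF z₁ - DF z₂‖ ≤ M * ‖z₁ - z₂‖ := by
    refine (convex_closedBall (0:Z) ρ).norm_image_sub_le_of_norm_hasFDerivWithin_le
      (f := DF) (f' := D2F) (fun x _ => (hD2F x).hasFDerivWithinAt) (fun x hx => ?_)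
      (by simpa using h₂) (by simpa using h₁)
    refine ContinuousLinearMap.opNorm_le_bound _ hMp.le fun v => ?_
    refine (hD2F_bound x v).trans ?_
    have hx' : ‖x‖ ≤ ρ := by simpa using hx
    have : ‖x‖ ^ q ≤ ρ ^ q := Real.rpow_le_rpow (norm_nonneg _) hx' (by linarith)
    rw [hM]
    gcongr
  have hneg : jVX (jZV (z₂ - z₁)) = - jVX (jZV (z₁ - z₂)) := by
    rw [← map_neg, ← map_neg, neg_sub]
  rw [hneg, ← ContinuousLinearMap.sub_apply]
  set w := z₁ - z₂ with hw
  have h1 : |(DF z₁ - DF z₂) (jZV w)| ≤ M * ‖w‖ * ‖jZV w‖ := by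
    rw [← Real.norm_eq_abs]
    exact ((DF z₁ - DF z₂).le_opNorm _).trans (by gcongr)
  have hmin : c * ‖jVX (jZV w)‖ ≤ min (R (jVX (jZV w))) (R (-jVX (jZV w))) := by
    refine le_min (hR_low _) ?_
    have := hR_low (-jVX (jZV w))
    rwa [norm_neg] at this
  have hsq : Real.sqrt γ * ‖jZV w‖ ≤ Real.sqrt (VV (jZV w) (jZV w)) := by
    refine Real.le_sqrt_of_sq_le ?_
    rw [mul_pow, Real.sq_sqrt hγ.le]
    exact hVV_ell _
  have hprod : B * K * ‖jVX (jZV w)‖ * ‖jZV w‖ ≤ B * K / (c * Real.sqrt γ) *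
      min (R (jVX (jZV w))) (R (-jVX (jZV w))) * Real.sqrt (VV (jZV w) (jZV w)) := by
    calc B * K * ‖jVX (jZV w)‖ * ‖jZV w‖
        = B * K / (c * Real.sqrt γ) * (c * ‖jVX (jZV w)‖) * (Real.sqrt γ * ‖jZV w‖) := by
          field_simp
      _ ≤ _ := by
          have hm0 : 0 ≤ min (R (jVX (jZV w))) (R (-jVX (jZV w))) :=
            le_trans (by positivity) hmin
          gcongr
  have hja : ‖jZV w‖ ≤ a * ‖w‖ := (jZV.le_opNorm w).trans (by gcongr; rw [ha]; linarith)
  have hyoung : M * ‖w‖ * ‖jZV w‖ ≤ κ / 2 * ‖w‖ ^ 2 + B * ‖jZV w‖ ^ 2 := by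
    have : κ / 2 * ‖w‖ ^ 2 + B * ‖jZV w‖ ^ 2 - M * ‖w‖ * ‖jZV w‖
        = (κ * ‖w‖ - M * ‖jZV w‖) ^ 2 / (2 * κ) := by
      rw [hB]; field_simp; ring
    have h0 : 0 ≤ (κ * ‖w‖ - M * ‖jZV w‖) ^ 2 / (2 * κ) := by positivity
    linarith
  have hEw : B * ‖jZV w‖ ^ 2 ≤ κ / 2 * ‖w‖ ^ 2 + B * K * ‖jVX (jZV w)‖ * ‖jZV w‖ := by
    calc B * ‖jZV w‖ ^ 2 = B * ‖jZV w‖ * ‖jZV w‖ := by ring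
      _ ≤ B * (κ / (2 * B * a) * ‖w‖ + K * ‖jVX (jZV w)‖) * ‖jZV w‖ := by
          gcongr; exact hE w
      _ = B * (κ / (2 * B * a) * ‖w‖) * ‖jZV w‖ + B * K * ‖jVX (jZV w)‖ * ‖jZV w‖ := by ring
      _ ≤ B * (κ / (2 * B * a) * ‖w‖) * (a * ‖w‖) + B * K * ‖jVX (jZV w)‖ * ‖jZV w‖ := by
          gcongr
      _ = _ := by
          congr 1
          field_simp
  linarith
end

section
/- Under the stated assumptions on Z, V, X, A, R and F, for every ρ > 0 there exists λ = λ(ρ) > 0 such that for all z₁, z₂ ∈ Z with ‖z₁‖_Z ≤ ρ and ‖z₂‖_Z ≤ ρ one has ⟨DI(z₁) − DI(z₂), z₁ − z₂⟩ ≥ (α/2)‖z₁ − z₂‖_Z² − λ‖z₁ − z₂‖_𝕍². -/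
/-- λ-convexity of the energy on sublevels (estimate
`est.lambda-convex` of the paper): for every `ρ > 0` there is `λ = λ(ρ) > 0`
such that `⟨DI(z₁) − DI(z₂), z₁ − z₂⟩ ≥ (α/2)‖z₁−z₂‖_Z² − λ‖z₁−z₂‖_𝕍²`
whenever `‖zᵢ‖_Z ≤ ρ`.  Here `I(z) = ½⟨Az,z⟩ + F(z)` and
`DI(z) = Az + DF(z)`, realized through the bilinear forms `A` and the
`V*`-valued derivative `DF`. -/
theorem stmt1
    {Z V X : Type*}
    [NormedAddCommGroup Z] [InnerProductSpace ℝ Z] [CompleteSpace Z]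
    [TopologicalSpace.SeparableSpace Z]
    [NormedAddCommGroup V] [InnerProductSpace ℝ V] [CompleteSpace V]
    [TopologicalSpace.SeparableSpace V]
    [NormedAddCommGroup X] [NormedSpace ℝ X]
    (jZV : Z →L[ℝ] V) (hjZV_inj : Function.Injective jZV)
    (hjZV_cpt : IsCompactOperator jZV)
    (jVX : V →L[ℝ] X) (hjVX_inj : Function.Injective jVX)
    (A : Z →L[ℝ] Z →L[ℝ] ℝ) (hA_symm : ∀ z w : Z, A z w = A w z)
    (α : ℝ) (hα : 0 < α) (hA_ell : ∀ z : Z, α * ‖z‖ ^ 2 ≤ A z z)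
    (VV : V →L[ℝ] V →L[ℝ] ℝ) (hVV_symm : ∀ u v : V, VV u v = VV v u)
    (γ : ℝ) (hγ : 0 < γ) (hVV_ell : ∀ v : V, γ * ‖v‖ ^ 2 ≤ VV v v)
    (R : X → ℝ) (hR_conv : ConvexOn ℝ Set.univ R) (hR_cont : Continuous R)
    (hR_hom : ∀ t : ℝ, 0 ≤ t → ∀ x : X, R (t • x) = t * R x)
    (c C : ℝ) (hc : 0 < c) (hC : 0 < C)
    (hR_low : ∀ x : X, c * ‖x‖ ≤ R x) (hR_up : ∀ x : X, R x ≤ C * ‖x‖)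
    (F : Z → ℝ) (hF_nonneg : ∀ z : Z, 0 ≤ F z)
    (DF : Z → V →L[ℝ] ℝ)
    (hDF : ∀ z : Z, HasFDerivAt F ((DF z).comp jZV) z)
    (D2F : Z → Z →L[ℝ] V →L[ℝ] ℝ)
    (hD2F : ∀ z : Z, HasFDerivAt DF (D2F z) z)
    (hD2F_cont : Continuous D2F)
    (C₀ q : ℝ) (hC₀ : 0 < C₀) (hq : 1 ≤ q)
    (hD2F_bound : ∀ z v : Z, ‖D2F z v‖ ≤ C₀ * (1 + ‖z‖ ^ q) * ‖v‖) :
    ∀ ρ > (0:ℝ), ∃ lam > (0:ℝ), ∀ z₁ z₂ : Z,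
      ‖z₁‖ ≤ ρ → ‖z₂‖ ≤ ρ →
      (A z₁ (z₁ - z₂) + DF z₁ (jZV (z₁ - z₂)))
          - (A z₂ (z₁ - z₂) + DF z₂ (jZV (z₁ - z₂))) ≥
        α / 2 * ‖z₁ - z₂‖ ^ 2 - lam * VV (jZV (z₁ - z₂)) (jZV (z₁ - z₂)) := by
  intro ρ hρ
  have hM : 0 < C₀ * (1 + ρ ^ q) := by positivity
  obtain ⟨M, hMd⟩ : ∃ M, M = C₀ * (1 + ρ ^ q) := ⟨_, rfl⟩
  rw [← hMd] at hM
  refine ⟨M ^ 2 / (2 * α) / γ, by positivity, ?_⟩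
  intro z₁ z₂ h₁ h₂
  have hlip : ‖DF z₁ - DF z₂‖ ≤ M * ‖z₁ - z₂‖ := by
    refine (convex_closedBall (0 : Z) ρ).norm_image_sub_le_of_norm_hasFDerivWithin_le
      (f' := D2F) (fun x _ => (hD2F x).hasFDerivWithinAt) ?_
      (by simpa using h₂) (by simpa using h₁)
    intro x hx
    have hx' : ‖x‖ ≤ ρ := by simpa using hx
    refine ContinuousLinearMap.opNorm_le_bound _ hM.le fun v => ?_
    refine (hD2F_bound x v).trans ?_
    rw [hMd]
    have : ‖x‖ ^ q ≤ ρ ^ q := Real.rpow_le_rpow (norm_nonneg _) hx' (by linarith)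
    gcongr
  have hA := hA_ell (z₁ - z₂)
  have hV := hVV_ell (jZV (z₁ - z₂))
  have hA' : A (z₁ - z₂) (z₁ - z₂) = A z₁ (z₁ - z₂) - A z₂ (z₁ - z₂) := by
    rw [map_sub A]; rfl
  rw [hA'] at hA
  have hD : -(M * ‖z₁ - z₂‖ * ‖jZV (z₁ - z₂)‖)
      ≤ DF z₁ (jZV (z₁ - z₂)) - DF z₂ (jZV (z₁ - z₂)) := by
    have h := (DF z₁ - DF z₂).le_of_opNorm_le hlip (jZV (z₁ - z₂))
    rw [Real.norm_eq_abs] at h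
    exact (abs_le.mp h).1
  have hY : M * ‖z₁ - z₂‖ * ‖jZV (z₁ - z₂)‖ ≤ α / 2 * ‖z₁ - z₂‖ ^ 2
      + M ^ 2 / (2 * α) * ‖jZV (z₁ - z₂)‖ ^ 2 := by
    have e : α / 2 * ‖z₁ - z₂‖ ^ 2 + M ^ 2 / (2 * α) * ‖jZV (z₁ - z₂)‖ ^ 2
        - M * ‖z₁ - z₂‖ * ‖jZV (z₁ - z₂)‖
        = (α * ‖z₁ - z₂‖ - M * ‖jZV (z₁ - z₂)‖) ^ 2 / (2 * α) := by
      field_simp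
      ring
    have : 0 ≤ (α * ‖z₁ - z₂‖ - M * ‖jZV (z₁ - z₂)‖) ^ 2 / (2 * α) := by positivity
    linarith
  have hW : M ^ 2 / (2 * α) * ‖jZV (z₁ - z₂)‖ ^ 2
      ≤ M ^ 2 / (2 * α) / γ * VV (jZV (z₁ - z₂)) (jZV (z₁ - z₂)) := by
    have h := mul_le_mul_of_nonneg_left hV
      (show 0 ≤ M ^ 2 / (2 * α) / γ by positivity)
    rwa [← mul_assoc, div_mul_cancel₀ _ hγ.ne'] at h
  linarith
end

section
/- (Uniqueness for the autonomous viscous system on ℝ₊.) Under the stated assumptions on Z, V, X, A, 𝕍, R and F, let ℓ* ∈ V* and z₀ ∈ Z. If z₁, z₂ : [0,∞) → Z are two functions that are essentially bounded with values in Z, absolutely continuous as maps into V on each bounded interval with a.e. derivatives ż₁, ż₂ ∈ L¹((0,a);V) for every a > 0, satisfy z₁(0) = z₂(0) = z₀, and both solve the viscous inclusion 0 ∈ ∂R(ż(t)) + 𝕍ż(t) + DI(z(t)) − ℓ* for almost all t > 0, then z₁(t) = z₂(t) for all t ≥ 0. -/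
open MeasureTheory

set_option linter.unusedSectionVars false

section
variable {Z V X : Type*}
    [NormedAddCommGroup Z] [InnerProductSpace ℝ Z] [CompleteSpace Z]
    [NormedAddCommGroup V] [InnerProductSpace ℝ V] [CompleteSpace V]

theorem yos (i : Z →L[ℝ] V) (A : Z →L[ℝ] Z →L[ℝ] ℝ) (hAs : ∀ z w : Z, A z w = A w z)
    (α : ℝ) (hα : 0 < α) (hA : ∀ z : Z, α * ‖z‖ ^ 2 ≤ A z z)
    (VV : V →L[ℝ] V →L[ℝ] ℝ) (hVs : ∀ u v : V, VV u v = VV v u)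
    (γ : ℝ) (hγ : 0 < γ) (hV : ∀ v : V, γ * ‖v‖ ^ 2 ≤ VV v v) (ε : ℝ) (hε : 0 < ε) :
    ∃ Q : V →L[ℝ] V →L[ℝ] ℝ, (∀ u v, Q u v = Q v u) ∧
      ∀ y : Z, ∃ r : Z, (∀ u, Q (i y) u = VV (i r) u) ∧
        ∀ w, VV (i r) (i w) = A y w - ε * A r w := by
  let B : Z →L[ℝ] Z →L[ℝ] ℝ := VV.bilinearComp i i + ε • A
  have hB : ∀ v w, B v w = VV (i v) (i w) + ε * A v w := fun v w => by simp [B]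
  have hBs : ∀ v w, B v w = B w v := fun v w => by
    rw [hB, hB, hVs, hAs]
  have hc : IsCoercive B := by
    refine ⟨ε * α, by positivity, fun u => ?_⟩
    rw [hB]
    have h1 := hV (i u)
    have h2 := mul_le_mul_of_nonneg_left (hA u) hε.le
    have h3 : 0 ≤ γ * ‖i u‖ ^ 2 := by positivity
    nlinarith
  let E := hc.continuousLinearEquivOfBilin
  let P : V →L[ℝ] Z :=
    (ContinuousLinearMap.adjoint i).comp (InnerProductSpace.continuousLinearMapOfBilin VV)
  let J : V →L[ℝ] Z := (E.symm : Z →L[ℝ] Z).comp P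
  have hJ : ∀ v w, B (J v) w = VV v (i w) := by
    intro v w
    rw [← hc.continuousLinearEquivOfBilin_apply]
    have : hc.continuousLinearEquivOfBilin (J v) = P v := by
      simp [J, E]
    rw [this]
    simp only [P, ContinuousLinearMap.comp_apply]
    rw [ContinuousLinearMap.adjoint_inner_left,
      InnerProductSpace.continuousLinearMapOfBilin_apply]
  let Q : V →L[ℝ] V →L[ℝ] ℝ := (ε⁻¹) • (VV.comp (ContinuousLinearMap.id ℝ V - i.comp J))
  have hQ : ∀ u v, Q u v = ε⁻¹ * (VV u v - VV (i (J u)) v) := fun u v => by simp [Q]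
  refine ⟨Q, fun u v => ?_, fun y => ⟨ε⁻¹ • (y - J (i y)), fun u => ?_, fun w => ?_⟩⟩
  · rw [hQ, hQ, hVs u v, hVs (i (J u)) v, hVs (i (J v)) u, ← hJ, ← hJ, hBs]
  · rw [hQ]; simp
  · have h := hJ (i y) w
    rw [hB] at h
    simp only [map_smul, map_sub, smul_apply, sub_apply,
      smul_eq_mul]
    field_simp
    linarith

theorem yosConv (i : Z →L[ℝ] V) (A : Z →L[ℝ] Z →L[ℝ] ℝ)
    (α : ℝ) (hα : 0 < α) (hA : ∀ z : Z, α * ‖z‖ ^ 2 ≤ A z z)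
    (VV : V →L[ℝ] V →L[ℝ] ℝ)
    (γ : ℝ) (hγ : 0 < γ) (hV : ∀ v : V, γ * ‖v‖ ^ 2 ≤ VV v v)
    (e : ℕ → ℝ) (he : ∀ n, 0 < e n) (he0 : Filter.Tendsto e Filter.atTop (nhds 0))
    (y : Z) (r : ℕ → Z) (hr : ∀ n w, VV (i (r n)) (i w) = A y w - e n * A (r n) w)
    (ζ : V →L[ℝ] ℝ) (hζ : ∀ w, ζ (i w) = A y w) (u : V) (hu : u ∈ closure (Set.range i)) :
    Filter.Tendsto (fun n => VV (i (r n)) u) Filter.atTop (nhds (ζ u)) := by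
  have key : ∀ n, γ * ‖i (r n)‖ ^ 2 + e n * (α * ‖r n‖ ^ 2) ≤ ‖ζ‖ * ‖i (r n)‖ := by
    intro n
    have h1 := hr n (r n)
    have h2 := hV (i (r n))
    have h3 := mul_le_mul_of_nonneg_left (hA (r n)) (he n).le
    have h4 := (le_abs_self _).trans (ζ.le_opNorm (i (r n)))
    rw [hζ] at h4
    linarith
  have b1 : ∀ n, ‖i (r n)‖ ≤ ‖ζ‖ / γ := by
    intro n
    have h := key n
    have h3 : 0 ≤ e n * (α * ‖r n‖ ^ 2) := by have := he n; positivity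
    rw [le_div_iff₀ hγ]
    by_contra hcon
    push Not at hcon
    have hp : 0 < ‖i (r n)‖ := by
      rcases (norm_nonneg (i (r n))).eq_or_lt with h0 | h0
      · rw [← h0] at hcon; have := norm_nonneg ζ; nlinarith
      · exact h0
    nlinarith
  have b2 : ∀ n, e n * ‖r n‖ ≤ Real.sqrt (e n * (‖ζ‖ ^ 2 / γ / α)) := by
    intro n
    apply Real.le_sqrt_of_sq_le
    have h := key n
    have h1 : ‖ζ‖ * ‖i (r n)‖ ≤ ‖ζ‖ * (‖ζ‖ / γ) := by gcongr; exact b1 n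
    have h2 : 0 ≤ γ * ‖i (r n)‖ ^ 2 := by positivity
    have h3 : e n * ‖r n‖ ^ 2 ≤ ‖ζ‖ ^ 2 / γ / α := by
      rw [le_div_iff₀ hα]
      have : ‖ζ‖ * (‖ζ‖ / γ) = ‖ζ‖ ^ 2 / γ := by ring
      nlinarith
    have := mul_le_mul_of_nonneg_left h3 (he n).le
    nlinarith
  have b3 : Filter.Tendsto (fun n => e n * ‖r n‖) Filter.atTop (nhds 0) := by
    refine squeeze_zero (fun n => by have := he n; positivity) b2 ?_
    have : Filter.Tendsto (fun n => Real.sqrt (e n * (‖ζ‖ ^ 2 / γ / α))) Filter.atTop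
        (nhds (Real.sqrt (0 * (‖ζ‖ ^ 2 / γ / α)))) :=
      (Real.continuous_sqrt.tendsto _).comp (he0.mul_const _)
    simpa using this
  rw [Metric.tendsto_atTop]
  intro δ hδ
  set K := ‖VV‖ * (‖ζ‖ / γ) + ‖ζ‖ + 1 with hK
  have hKp : 0 < K := by positivity
  obtain ⟨_, ⟨w, rfl⟩, hw⟩ := Metric.mem_closure_iff.1 hu (δ / 2 / K) (by positivity)
  have b4 : Filter.Tendsto (fun n => e n * ‖r n‖ * (‖A‖ * ‖w‖)) Filter.atTop (nhds 0) := by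
    simpa using b3.mul_const (‖A‖ * ‖w‖)
  obtain ⟨N, hN⟩ := Metric.tendsto_atTop.1 b4 (δ / 2) (by positivity)
  refine ⟨N, fun n hn => ?_⟩
  have h1 := hN n hn
  rw [Real.dist_eq, sub_zero] at h1
  have h1' := (le_abs_self _).trans_lt h1
  rw [Real.dist_eq]
  have e1 : VV (i (r n)) u - ζ u = - (e n * A (r n) w) + (VV (i (r n)) (u - i w) - ζ (u - i w)) := by
    rw [map_sub, map_sub, hr, hζ]; ring
  rw [e1]
  have h2 : |e n * A (r n) w| ≤ e n * ‖r n‖ * (‖A‖ * ‖w‖) := by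
    rw [abs_mul, abs_of_pos (he n)]
    have := A.le_opNorm₂ (r n) w
    rw [Real.norm_eq_abs] at this
    have := mul_le_mul_of_nonneg_left this (he n).le
    linarith
  rw [dist_eq_norm] at hw
  have h3 : |VV (i (r n)) (u - i w)| ≤ ‖VV‖ * (‖ζ‖ / γ) * ‖u - i w‖ := by
    refine (VV.le_opNorm₂ _ _).trans ?_
    gcongr
    exact b1 n
  have h4 : |ζ (u - i w)| ≤ ‖ζ‖ * ‖u - i w‖ := ζ.le_opNorm _
  have h5 : K * ‖u - i w‖ < δ / 2 := by
    rw [lt_div_iff₀ hKp] at hw; linarith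
  have h6 : 0 ≤ ‖u - i w‖ := norm_nonneg _
  rw [abs_lt]
  rw [abs_le] at h2 h3 h4
  constructor <;> nlinarith

theorem acLem (T : ℝ) (hT : 0 ≤ T) (g y : ℝ → V) (hg : IntegrableOn g (Set.Ioc 0 T) volume)
    (hy : ∀ t ∈ Set.Icc 0 T, y t = ∫ s in Set.Ioc 0 t, g s)
    (hd : ∀ᵐ t : ℝ ∂volume, 0 < t → HasDerivAt y (g t) t)
    (Q : V →L[ℝ] V →L[ℝ] ℝ) (hQ : ∀ u v, Q u v = Q v u) :
    IntervalIntegrable (fun s => Q (y s) (g s)) volume 0 T ∧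
    ∫ s in (0:ℝ)..T, Q (y s) (g s) = Q (y T) (y T) / 2 := by
  have hcont : ContinuousOn y (Set.Icc 0 T) := by
    refine (intervalIntegral.continuousOn_primitive (f := g) (μ := volume) (a := 0) (b := T) ?_).congr hy
    rwa [integrableOn_Icc_iff_integrableOn_Ioc]
  obtain ⟨M, hM⟩ := isCompact_Icc.exists_bound_of_continuousOn hcont
  have hM0 : 0 ≤ M := (norm_nonneg _).trans (hM 0 ⟨le_rfl, hT⟩)
  have hgi : IntervalIntegrable g volume 0 T := by
    rwa [intervalIntegrable_iff_integrableOn_Ioc_of_le hT]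
  have hNac := hgi.norm.absolutelyContinuousOnInterval_intervalIntegral (c := 0) (by simp)
  have hyy : ∀ s ∈ Set.Icc 0 T, y s = ∫ r in (0:ℝ)..s, g r := by
    intro s hs
    rw [hy s hs, intervalIntegral.integral_of_le hs.1]
  have hsub : ∀ s ∈ Set.Icc 0 T, IntervalIntegrable g volume 0 s := fun s hs =>
    hgi.mono_set (by rw [Set.uIcc_of_le hs.1, Set.uIcc_of_le hT]; exact Set.Icc_subset_Icc_right hs.2)
  have hdist : ∀ s ∈ Set.Icc 0 T, ∀ t ∈ Set.Icc 0 T,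
      dist (Q (y s) (y s)) (Q (y t) (y t)) ≤ (2 * ‖Q‖ * M) *
        dist (∫ v in (0:ℝ)..s, ‖g v‖) (∫ v in (0:ℝ)..t, ‖g v‖) := by
    intro s hs t ht
    have h1 : ‖y s - y t‖ ≤ |(∫ v in (0:ℝ)..s, ‖g v‖) - ∫ v in (0:ℝ)..t, ‖g v‖| := by
      rw [hyy s hs, hyy t ht, intervalIntegral.integral_interval_sub_left (hsub s hs) (hsub t ht),
        intervalIntegral.integral_interval_sub_left (hsub s hs).norm (hsub t ht).norm]
      exact intervalIntegral.norm_integral_le_abs_integral_norm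
    rw [Real.dist_eq, Real.dist_eq]
    have e1 : Q (y s) (y s) - Q (y t) (y t) = Q (y s + y t) (y s - y t) := by
      simp only [map_add, map_sub, add_apply]
      rw [hQ (y t) (y s)]; ring
    rw [e1]
    have h2 := Q.le_opNorm₂ (y s + y t) (y s - y t)
    rw [Real.norm_eq_abs] at h2
    refine h2.trans ?_
    have h3 : ‖y s + y t‖ ≤ 2 * M := (norm_add_le _ _).trans (by linarith [hM s hs, hM t ht])
    calc ‖Q‖ * ‖y s + y t‖ * ‖y s - y t‖ ≤ ‖Q‖ * (2 * M) *
          |(∫ v in (0:ℝ)..s, ‖g v‖) - ∫ v in (0:ℝ)..t, ‖g v‖| := by gcongr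
      _ = _ := by ring
  have hac : AbsolutelyContinuousOnInterval (fun t => Q (y t) (y t)) 0 T := by
    rw [absolutelyContinuousOnInterval_iff] at hNac ⊢
    intro ε hε
    obtain ⟨δ, hδ, h⟩ := hNac (ε / (2 * ‖Q‖ * M + 1)) (by positivity)
    refine ⟨δ, hδ, fun E hE hE2 => ?_⟩
    have h1 := h E hE hE2
    rw [lt_div_iff₀ (by positivity)] at h1
    refine lt_of_le_of_lt ?_ h1
    rw [Finset.sum_mul]
    refine Finset.sum_le_sum fun k hk => ?_
    have hk' := hE.1 k hk
    rw [Set.uIcc_of_le hT] at hk'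
    refine (hdist _ hk'.1 _ hk'.2).trans ?_
    have : 0 ≤ dist (∫ v in (0:ℝ)..(E.2 k).1, ‖g v‖) (∫ v in (0:ℝ)..(E.2 k).2, ‖g v‖) := dist_nonneg
    nlinarith
  have hder : ∀ᵐ t : ℝ ∂volume, t ∈ Set.uIoc 0 T →
      deriv (fun t => Q (y t) (y t)) t = 2 * Q (y t) (g t) := by
    filter_upwards [hd] with t ht htm
    rw [Set.uIoc_of_le hT] at htm
    have h := ht htm.1
    have h2 : HasDerivAt (fun t => Q (y t) (y t)) (Q (y t) (g t) + Q (g t) (y t)) t := by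
      have h3 := (Q.hasFDerivAt.comp_hasDerivAt t h).clm_apply h
      rw [add_comm]
      exact h3
    rw [h2.deriv, hQ (g t)]; ring
  have hint := hac.integral_deriv_eq_sub
  have hii := hac.intervalIntegrable_deriv
  rw [intervalIntegral.integral_congr_ae hder, intervalIntegral.integral_const_mul] at hint
  have h0 : y 0 = 0 := by rw [hy 0 ⟨le_rfl, hT⟩]; simp
  simp only [h0, map_zero, sub_zero] at hint
  refine ⟨?_, by linarith⟩
  have h3 : IntervalIntegrable (fun t => 2 * Q (y t) (g t)) volume 0 T := by
    refine hii.congr_ae ?_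
    rw [Filter.EventuallyEq, ae_restrict_iff' measurableSet_uIoc]
    exact hder
  have h4 := h3.const_mul (1/2)
  refine h4.congr_ae (Filter.Eventually.of_forall fun t => ?_)
  simp only; ring

theorem core (i : Z →L[ℝ] V) (A : Z →L[ℝ] Z →L[ℝ] ℝ) (hAs : ∀ z w : Z, A z w = A w z)
    (α : ℝ) (hα : 0 < α) (hA : ∀ z : Z, α * ‖z‖ ^ 2 ≤ A z z)
    (VV : V →L[ℝ] V →L[ℝ] ℝ) (hVs : ∀ u v : V, VV u v = VV v u)
    (γ : ℝ) (hγ : 0 < γ) (hV : ∀ v : V, γ * ‖v‖ ^ 2 ≤ VV v v)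
    (g : ℝ → V) (y : ℝ → Z) (hg : ∀ a > (0:ℝ), IntegrableOn g (Set.Ioc 0 a) volume)
    (hy : ∀ t ≥ (0:ℝ), i (y t) = ∫ s in Set.Ioc 0 t, g s)
    (hd : ∀ᵐ t : ℝ ∂volume, 0 < t → HasDerivAt (fun τ => i (y τ)) (g t) t)
    (M0 D K : ℝ) (hM0 : 0 ≤ M0) (hK : 0 ≤ K)
    (hM : ∀ᵐ t : ℝ ∂volume, 0 < t → ‖y t‖ ^ 2 ≤ M0)
    (hS : ∀ᵐ t : ℝ ∂volume, 0 < t → g t ∈ closure (Set.range i) ∧ ∃ ζ : V →L[ℝ] ℝ,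
      (∀ w, ζ (i w) = A (y t) w) ∧ (∀ w, VV (g t) (i w) ≤ - A (y t) w + D * ‖i w‖) ∧
      ζ (g t) ≤ K * ‖y t‖ ^ 2) :
    ∀ t ≥ (0:ℝ), i (y t) = 0 := by
  have hepos : ∀ n : ℕ, (0:ℝ) < 1 / ((n:ℝ) + 1) := fun n => by positivity
  choose Q hQs r hr1 hr2 using fun n : ℕ =>
    yos i A hAs α hα hA VV hVs γ hγ hV (1 / ((n:ℝ) + 1)) (hepos n)
  have he0 : Filter.Tendsto (fun n : ℕ => 1 / ((n:ℝ) + 1)) Filter.atTop (nhds 0) :=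
    tendsto_one_div_add_atTop_nhds_zero_nat
  have hconv : ∀ (v : Z) (ζ : V →L[ℝ] ℝ), (∀ w, ζ (i w) = A v w) → ∀ u ∈ closure (Set.range i),
      Filter.Tendsto (fun n => Q n (i v) u) Filter.atTop (nhds (ζ u)) := by
    intro v ζ hζ u hu
    have := yosConv i A α hα hA VV γ hγ hV _ hepos he0 v (fun n => r n v) (fun n w => hr2 n v w)
      ζ hζ u hu
    simpa only [hr1] using this
  have hub : ∀ᵐ s : ℝ ∂volume, 0 < s → ∀ n, Q n (i (y s)) (g s) ≤ D ^ 2 / (4 * γ) := by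
    filter_upwards [hS] with s hs h0 n
    obtain ⟨-, ζ, -, h, -⟩ := hs h0
    have h1 := h (r n (y s))
    have h2 := hr2 n (y s) (r n (y s))
    have h3 := mul_le_mul_of_nonneg_left (hA (r n (y s))) (hepos n).le
    have h4 := hV (i (r n (y s)))
    have h5 : 0 ≤ (1 / ((n:ℝ) + 1)) * (α * ‖r n (y s)‖ ^ 2) :=
      mul_nonneg (hepos n).le (by positivity)
    rw [hr1, hVs]
    have h6 : VV (g s) (i (r n (y s))) ≤ - (γ * ‖i (r n (y s))‖ ^ 2) + D * ‖i (r n (y s))‖ := by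
      linarith
    refine h6.trans ?_
    rw [le_div_iff₀ (by positivity)]
    nlinarith [sq_nonneg (2 * γ * ‖i (r n (y s))‖ - D)]
  have step : ∀ b : ℝ → ℝ, Continuous b → (∀ s, 0 ≤ s → 0 ≤ b s) →
      (∀ᵐ s : ℝ ∂volume, 0 < s → ‖y s‖ ^ 2 ≤ b s) →
      ∀ᵐ t : ℝ ∂volume, 0 < t → ‖y t‖ ^ 2 ≤ (2 * K / α) * ∫ s in (0:ℝ)..t, b s := by
    intro b hbc hb0 hb
    filter_upwards [hS] with t ht h0
    obtain ⟨-, ζ, hζ, -, -⟩ := ht h0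
    have hlim := hconv (y t) ζ hζ (i (y t)) (subset_closure ⟨y t, rfl⟩)
    rw [hζ] at hlim
    have hac := fun n => acLem t h0.le g (fun τ => i (y τ)) (hg t h0)
      (fun s hs => hy s hs.1) hd (Q n) (hQs n)
    have hdct : Filter.Tendsto
        (fun n => ∫ s in (0:ℝ)..t, max (Q n (i (y s)) (g s)) (K * b s)) Filter.atTop
        (nhds (∫ s in (0:ℝ)..t, K * b s)) := by
      refine intervalIntegral.tendsto_integral_filter_of_dominated_convergence
        (fun s => D ^ 2 / (4 * γ) + K * b s) (Filter.Eventually.of_forall fun n => ?_)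
        (Filter.Eventually.of_forall fun n => ?_) ?_ ?_
      · have h1 := (intervalIntegrable_iff.1 (hac n).1).aestronglyMeasurable
        exact h1.sup (by fun_prop : Continuous fun s => K * b s).aestronglyMeasurable
      · filter_upwards [hub] with s hs hst
        rw [Set.uIoc_of_le h0.le] at hst
        have h1 := hs hst.1 n
        have h2 : 0 ≤ K * b s := mul_nonneg hK (hb0 s hst.1.le)
        have h3 : 0 ≤ D ^ 2 / (4 * γ) := by positivity
        rw [Real.norm_eq_abs, abs_of_nonneg (le_max_of_le_right h2)]
        exact max_le (by linarith) (by linarith)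
      · exact (by fun_prop : Continuous fun s => D ^ 2 / (4 * γ) + K * b s).intervalIntegrable _ _
      · filter_upwards [hS, hb] with s hs hbs hst
        rw [Set.uIoc_of_le h0.le] at hst
        obtain ⟨hgc, ξ, hξ, -, hle⟩ := hs hst.1
        have h1 := (hconv (y s) ξ hξ (g s) hgc).max (tendsto_const_nhds (x := K * b s))
        rwa [max_eq_right (hle.trans (mul_le_mul_of_nonneg_left (hbs hst.1) hK))] at h1
    have hle : ∀ n, Q n (i (y t)) (i (y t)) / 2 ≤
        ∫ s in (0:ℝ)..t, max (Q n (i (y s)) (g s)) (K * b s) := by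
      intro n
      rw [← (hac n).2]
      have hKb : IntervalIntegrable (fun s => K * b s) volume 0 t :=
        (by fun_prop : Continuous fun s => K * b s).intervalIntegrable _ _
      refine intervalIntegral.integral_mono_on h0.le (hac n).1 ?_ (fun s _ => le_max_left _ _)
      rw [intervalIntegrable_iff] at hKb ⊢
      exact (intervalIntegrable_iff.1 (hac n).1).sup hKb
    have hfin := le_of_tendsto_of_tendsto' (hlim.div_const 2) hdct hle
    rw [intervalIntegral.integral_const_mul] at hfin
    have h1 := hA (y t)
    rw [div_mul_eq_mul_div, le_div_iff₀ hα]
    linarith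
  set κ := 2 * K / α with hκ
  have hκ0 : 0 ≤ κ := by positivity
  have hiter : ∀ n : ℕ, ∀ᵐ t : ℝ ∂volume, 0 < t → ‖y t‖ ^ 2 ≤ M0 * ((κ * t) ^ n / n.factorial) := by
    intro n
    induction n with
    | zero => simpa using hM
    | succ n ih =>
      have h := step (fun t => M0 * ((κ * t) ^ n / n.factorial)) (by fun_prop)
        (fun s hs => by positivity) ih
      filter_upwards [h] with t ht h0
      refine (ht h0).trans (le_of_eq ?_)
      have : ∀ s : ℝ, M0 * ((κ * s) ^ n / n.factorial) = (M0 * κ ^ n / n.factorial) * s ^ n := by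
        intro s; rw [mul_pow]; ring
      simp_rw [this]
      rw [intervalIntegral.integral_const_mul, integral_pow, Nat.factorial_succ]
      push_cast
      have hn : ((n:ℝ) + 1) ≠ 0 := by positivity
      have hf : (n.factorial : ℝ) ≠ 0 := by positivity
      field_simp
      ring
  have hzero : ∀ᵐ t : ℝ ∂volume, 0 < t → i (y t) = 0 := by
    filter_upwards [ae_all_iff.2 hiter] with t ht h0
    have h1 := (FloorSemiring.tendsto_pow_div_factorial_atTop (κ * t)).const_mul M0
    rw [mul_zero] at h1
    have h2 := ge_of_tendsto' h1 (fun n => ht n h0)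
    have h3 : ‖y t‖ = 0 := by
      have := norm_nonneg (y t)
      nlinarith
    rw [norm_eq_zero.1 h3, map_zero]
  intro t ht
  have hT : (0:ℝ) < t + 1 := by linarith
  have hcont : ContinuousOn (fun τ => i (y τ)) (Set.Icc 0 (t + 1)) := by
    refine (intervalIntegral.continuousOn_primitive (f := g) (μ := volume) (a := 0) (b := t + 1)
      ?_).congr (fun s hs => hy s hs.1)
    rw [integrableOn_Icc_iff_integrableOn_Ioc]
    exact hg _ hT
  have heq := Measure.eqOn_Icc_of_ae_eq (volume : Measure ℝ) hT.ne (f := fun τ => i (y τ))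
    (g := fun _ => (0:V)) ?_ hcont continuousOn_const
  · exact heq ⟨ht, by linarith⟩
  · rw [Filter.EventuallyEq, Measure.restrict_congr_set Ioc_ae_eq_Icc.symm, ae_restrict_iff' measurableSet_Ioc]
    filter_upwards [hzero] with s hs hst using hs hst.1

theorem single (i : Z →L[ℝ] V) (ρ : V → ℝ) (hρc : Continuous ρ)
    (hρh : ∀ t : ℝ, 0 ≤ t → ∀ x : V, ρ (t • x) = t * ρ x)
    (η : V →L[ℝ] ℝ) (v : V) (hv : v ∈ closure (Set.range i))
    (h : ∀ w : Z, ρ (i w) ≥ ρ v + η (i w - v)) :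
    (∀ u ∈ closure (Set.range i), ρ u ≥ ρ v + η (u - v)) ∧ ∀ u : Z, η (i u) ≤ ρ (i u) := by
  have h1 : ∀ u ∈ closure (Set.range i), ρ u ≥ ρ v + η (u - v) := by
    have hc : IsClosed {u : V | ρ u ≥ ρ v + η (u - v)} :=
      isClosed_le (by fun_prop) hρc
    exact fun u hu => closure_minimal (by rintro _ ⟨w, rfl⟩; exact h w) hc hu
  have h2v : (2:ℝ) • v ∈ closure (Set.range i) := by
    refine map_mem_closure (f := fun x : V => (2:ℝ) • x) (continuous_const_smul (2:ℝ)) hv ?_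
    rintro _ ⟨w, rfl⟩
    exact ⟨(2:ℝ) • w, by simp⟩
  refine ⟨h1, fun u => ?_⟩
  have a1 := h1 _ h2v
  have a2 := h u
  rw [hρh 2 (by norm_num), map_sub, map_smul, smul_eq_mul] at a1
  rw [map_sub] at a2
  have a3 := h 0
  have a4 : ρ 0 = 0 := by simpa using hρh 0 le_rfl 0
  rw [map_zero, a4, zero_sub, map_neg] at a3
  linarith

theorem memCl (i : Z →L[ℝ] V) (z : ℝ → Z) (v : V) (t : ℝ)
    (h : HasDerivAt (fun τ => i (z τ)) v t) : v ∈ closure (Set.range i) := by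
  refine mem_closure_of_tendsto h.tendsto_slope (Filter.Eventually.of_forall fun s => ?_)
  exact ⟨(s - t)⁻¹ • (z s - z t), by simp [slope_def_module]⟩
end

/-- Uniqueness for the autonomous viscous system
`0 ∈ ∂R(ż) + 𝕍ż + DI(z) − ℓ*` on `ℝ₊` (Theorem `thm.viscRplusexregest`(1) of
the paper).  Two solutions that are essentially bounded in `Z`, absolutely
continuous into `V` on bounded intervals with derivative in `L¹`, start at the
same initial datum `z₀` and satisfy the subdifferential inclusion a.e.,
coincide.  The inclusion at time `t` states that the derivative `ż(t)` in `V`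
exists and `R(w) ≥ R(ż(t)) + ⟨ℓ* − 𝕍ż(t) − DI(z(t)), w − ż(t)⟩` for all
`w ∈ Z`, where `DI(z(t)) = A z(t) + DF(z(t))` acts through a `V*`-extension
`ξ`. -/
theorem stmt3
    {Z V X : Type*}
    [NormedAddCommGroup Z] [InnerProductSpace ℝ Z] [CompleteSpace Z]
    [TopologicalSpace.SeparableSpace Z]
    [NormedAddCommGroup V] [InnerProductSpace ℝ V] [CompleteSpace V]
    [TopologicalSpace.SeparableSpace V]
    [NormedAddCommGroup X] [NormedSpace ℝ X]
    (jZV : Z →L[ℝ] V) (hjZV_inj : Function.Injective jZV)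
    (hjZV_cpt : IsCompactOperator jZV)
    (jVX : V →L[ℝ] X) (hjVX_inj : Function.Injective jVX)
    (A : Z →L[ℝ] Z →L[ℝ] ℝ) (hA_symm : ∀ z w : Z, A z w = A w z)
    (α : ℝ) (hα : 0 < α) (hA_ell : ∀ z : Z, α * ‖z‖ ^ 2 ≤ A z z)
    (VV : V →L[ℝ] V →L[ℝ] ℝ) (hVV_symm : ∀ u v : V, VV u v = VV v u)
    (γ : ℝ) (hγ : 0 < γ) (hVV_ell : ∀ v : V, γ * ‖v‖ ^ 2 ≤ VV v v)
    (R : X → ℝ) (hR_conv : ConvexOn ℝ Set.univ R) (hR_cont : Continuous R)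
    (hR_hom : ∀ t : ℝ, 0 ≤ t → ∀ x : X, R (t • x) = t * R x)
    (c C : ℝ) (hc : 0 < c) (hC : 0 < C)
    (hR_low : ∀ x : X, c * ‖x‖ ≤ R x) (hR_up : ∀ x : X, R x ≤ C * ‖x‖)
    (F : Z → ℝ) (hF_nonneg : ∀ z : Z, 0 ≤ F z)
    (DF : Z → V →L[ℝ] ℝ)
    (hDF : ∀ z : Z, HasFDerivAt F ((DF z).comp jZV) z)
    (D2F : Z → Z →L[ℝ] V →L[ℝ] ℝ)
    (hD2F : ∀ z : Z, HasFDerivAt DF (D2F z) z)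
    (hD2F_cont : Continuous D2F)
    (C₀ q : ℝ) (hC₀ : 0 < C₀) (hq : 1 ≤ q)
    (hD2F_bound : ∀ z v : Z, ‖D2F z v‖ ≤ C₀ * (1 + ‖z‖ ^ q) * ‖v‖)
    -- data
    (lstar : V →L[ℝ] ℝ) (z₀ : Z)
    -- the two solutions and their derivatives
    (z₁ z₂ : ℝ → Z) (zd₁ zd₂ : ℝ → V)
    -- essential boundedness with values in Z
    (hbd₁ : ∃ M : ℝ, ∀ᵐ t : ℝ ∂volume, 0 ≤ t → ‖z₁ t‖ ≤ M)
    (hbd₂ : ∃ M : ℝ, ∀ᵐ t : ℝ ∂volume, 0 ≤ t → ‖z₂ t‖ ≤ M)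
    -- derivatives belong to L¹((0,a);V) for every a > 0
    (hint₁ : ∀ a > (0:ℝ), IntegrableOn zd₁ (Set.Ioc 0 a) volume)
    (hint₂ : ∀ a > (0:ℝ), IntegrableOn zd₂ (Set.Ioc 0 a) volume)
    -- absolute continuity into V
    (hAC₁ : ∀ t ≥ (0:ℝ), jZV (z₁ t) = jZV (z₁ 0) + ∫ r in Set.Ioc 0 t, zd₁ r)
    (hAC₂ : ∀ t ≥ (0:ℝ), jZV (z₂ t) = jZV (z₂ 0) + ∫ r in Set.Ioc 0 t, zd₂ r)
    -- initial conditions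
    (hini₁ : z₁ 0 = z₀) (hini₂ : z₂ 0 = z₀)
    -- the viscous inclusion holds a.e. on (0,∞)
    (hsol₁ : ∀ᵐ t : ℝ ∂volume, 0 < t →
      HasDerivAt (fun τ => jZV (z₁ τ)) (zd₁ t) t ∧
      ∃ ξ : V →L[ℝ] ℝ,
        (∀ w : Z, ξ (jZV w) = A (z₁ t) w + DF (z₁ t) (jZV w)) ∧
        ∀ w : Z, R (jVX (jZV w)) ≥ R (jVX (zd₁ t)) +
          (lstar (jZV w - zd₁ t) - VV (zd₁ t) (jZV w - zd₁ t)
            - ξ (jZV w - zd₁ t)))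
    (hsol₂ : ∀ᵐ t : ℝ ∂volume, 0 < t →
      HasDerivAt (fun τ => jZV (z₂ τ)) (zd₂ t) t ∧
      ∃ ξ : V →L[ℝ] ℝ,
        (∀ w : Z, ξ (jZV w) = A (z₂ t) w + DF (z₂ t) (jZV w)) ∧
        ∀ w : Z, R (jVX (jZV w)) ≥ R (jVX (zd₂ t)) +
          (lstar (jZV w - zd₂ t) - VV (zd₂ t) (jZV w - zd₂ t)
            - ξ (jZV w - zd₂ t))) :
    ∀ t ≥ (0:ℝ), z₁ t = z₂ t := by
  have hlip : ∀ M : ℝ, 0 ≤ M → ∀ a b : Z, ‖a‖ ≤ M → ‖b‖ ≤ M →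
      ‖DF a - DF b‖ ≤ C₀ * (1 + M ^ q) * ‖a - b‖ := by
    intro M hM a b ha hb
    refine Convex.norm_image_sub_le_of_norm_hasFDerivWithin_le (𝕜 := ℝ) (f := DF) (f' := D2F)
      (s := Metric.closedBall (0:Z) M) (fun x _ => (hD2F x).hasFDerivWithinAt) (fun x hx => ?_)
      (convex_closedBall _ _) (by simpa using hb) (by simpa using ha)
    have hx' : ‖x‖ ≤ M := by simpa using hx
    have hMq : 0 ≤ M ^ q := Real.rpow_nonneg hM q
    refine ContinuousLinearMap.opNorm_le_bound _ (by positivity) fun v => ?_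
    refine (hD2F_bound x v).trans ?_
    have : ‖x‖ ^ q ≤ M ^ q := Real.rpow_le_rpow (norm_nonneg _) hx' (by linarith)
    gcongr
  obtain ⟨M₁, hM₁⟩ := hbd₁
  obtain ⟨M₂, hM₂⟩ := hbd₂
  set M := max (max M₁ M₂) 0 with hMdef
  have hM0 : 0 ≤ M := le_max_right _ _
  have hM1 : M₁ ≤ M := (le_max_left _ _).trans (le_max_left _ _)
  have hM2 : M₂ ≤ M := (le_max_right _ _).trans (le_max_left _ _)
  set L := C₀ * (1 + M ^ q) with hL
  have hL0 : 0 ≤ L := by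
    have hMq : 0 ≤ M ^ q := Real.rpow_nonneg hM0 q
    positivity
  set ρ : V → ℝ := fun v => R (jVX v) with hρ
  have hρc : Continuous ρ := hR_cont.comp jVX.continuous
  have hρh : ∀ t : ℝ, 0 ≤ t → ∀ x : V, ρ (t • x) = t * ρ x := by
    intro t ht x
    simp only [hρ, map_smul]
    exact hR_hom t ht _
  have hρb : ∀ x : V, ρ x ≤ C * ‖jVX‖ * ‖x‖ := by
    intro x
    refine (hR_up _).trans ?_
    rw [mul_assoc]
    gcongr
    exact jVX.le_opNorm x
  have hcore := core jZV A hA_symm α hα hA_ell VV hVV_symm γ hγ hVV_ell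
    (fun t => zd₁ t - zd₂ t) (fun t => z₁ t - z₂ t)
    (fun a ha => (hint₁ a ha).sub (hint₂ a ha)) ?_ ?_
    ((2 * M) ^ 2) (2 * (C * ‖jVX‖) + L * (2 * M)) (L ^ 2 / (4 * γ)) (by positivity) (by positivity)
    ?_ ?_
  · intro t ht
    have h := hcore t ht
    rw [map_sub, sub_eq_zero] at h
    exact hjZV_inj h
  · intro t ht
    rcases (ge_iff_le.1 ht).eq_or_lt with h0 | h0
    · subst h0
      simp [hini₁, hini₂]
    · rw [integral_sub (hint₁ t h0) (hint₂ t h0), map_sub, hAC₁ t ht, hAC₂ t ht, hini₁, hini₂]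
      abel
  · filter_upwards [hsol₁, hsol₂] with t h1 h2 h0
    have h := (h1 h0).1.sub (h2 h0).1
    refine h.congr_of_eventuallyEq (Filter.Eventually.of_forall fun s => ?_)
    simp
  · filter_upwards [hM₁, hM₂] with t h1 h2 h0
    have a1 := (h1 h0.le).trans hM1
    have a2 := (h2 h0.le).trans hM2
    have a3 := norm_sub_le (z₁ t) (z₂ t)
    gcongr
    linarith
  · filter_upwards [hM₁, hM₂, hsol₁, hsol₂] with t b1 b2 h1 h2 h0
    have a1 := (b1 h0.le).trans hM1
    have a2 := (b2 h0.le).trans hM2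
    have a3 : ‖z₁ t - z₂ t‖ ≤ 2 * M := (norm_sub_le (z₁ t) (z₂ t)).trans (by linarith)
    have hl := hlip M hM0 _ _ a1 a2
    obtain ⟨hd1, ξ₁, hξ1, hi1⟩ := h1 h0
    obtain ⟨hd2, ξ₂, hξ2, hi2⟩ := h2 h0
    have m1 := memCl jZV z₁ _ t hd1
    have m2 := memCl jZV z₂ _ t hd2
    obtain ⟨s1, e1⟩ := single jZV ρ hρc hρh (lstar - VV (zd₁ t) - ξ₁) (zd₁ t) m1 hi1
    obtain ⟨s2, e2⟩ := single jZV ρ hρc hρh (lstar - VV (zd₂ t) - ξ₂) (zd₂ t) m2 hi2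
    have hdf : ∀ v : V, |(DF (z₁ t) - DF (z₂ t)) v| ≤ L * ‖z₁ t - z₂ t‖ * ‖v‖ := fun v =>
      ((DF (z₁ t) - DF (z₂ t)).le_opNorm v).trans (mul_le_mul_of_nonneg_right hl (norm_nonneg v))
    refine ⟨?_, (ξ₁ - DF (z₁ t)) - (ξ₂ - DF (z₂ t)), fun w => ?_, fun w => ?_, ?_⟩
    · refine memCl jZV (fun t => z₁ t - z₂ t) _ t ?_
      refine (hd1.sub hd2).congr_of_eventuallyEq (Filter.Eventually.of_forall fun s => ?_)
      simp
    · simp only [sub_apply, map_sub, hξ1, hξ2]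
      ring
    · have c1 := (e1 (-w)).trans (hρb _)
      have c2 := (e2 w).trans (hρb _)
      have c3 := (abs_le.1 (hdf (jZV w))).1
      have c4 : L * ‖z₁ t - z₂ t‖ * ‖jZV w‖ ≤ L * (2 * M) * ‖jZV w‖ := by gcongr
      simp only [sub_apply, map_sub, map_neg, hξ1, hξ2, norm_neg] at c1 c2 c3 ⊢
      linarith
    · have c1 := s1 _ m2
      have c2 := s2 _ m1
      have c3 := (abs_le.1 (hdf (zd₁ t - zd₂ t))).1
      have c4 := hVV_ell (zd₁ t - zd₂ t)
      have c5 : ((ξ₁ - DF (z₁ t)) - (ξ₂ - DF (z₂ t))) (zd₁ t - zd₂ t) ≤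
          - (γ * ‖zd₁ t - zd₂ t‖ ^ 2) + L * ‖z₁ t - z₂ t‖ * ‖zd₁ t - zd₂ t‖ := by
        simp only [sub_apply, map_sub] at c1 c2 c3 c4 ⊢
        linarith
      refine c5.trans ?_
      rw [div_mul_eq_mul_div, le_div_iff₀ (by positivity)]
      nlinarith [sq_nonneg (2 * γ * ‖zd₁ t - zd₂ t‖ - L * ‖z₁ t - z₂ t‖)]
end

section
/- (Existence and uniqueness for the δ-regularized system, with uniform bounds.) Under the stated assumptions on Z, V, X, A, 𝕍, R and F, for every δ > 0, every z₀ ∈ Z and every ℓ* ∈ V*, there exists a unique function z_δ : [0,∞) → Z with z_δ(0) = z₀ such that z_δ and its derivative ż_δ are Lipschitz continuous as maps into Z (i.e. z_δ ∈ W^{2,∞}((0,∞);Z)) and, for all t ≥ 0 and all w ∈ Z, R_δ(w) ≥ R_δ(ż_δ(t)) + ⟨ℓ* − DI(z_δ(t)), w − ż_δ(t)⟩, where R_δ(v) := R(v) + ½⟨𝕍v,v⟩ + (δ/2)⟨Av,v⟩. Moreover, for every ρ > 0 there exists C(ρ) > 0, independent of δ, such that whenever ‖z₀‖_Z + ‖ℓ*‖_{V*}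 ≤ ρ one has sup_{t≥0} ‖z_δ(t)‖_Z ≤ C(ρ) and ∫₀^∞ R_δ(ż_δ(t)) dt ≤ C(ρ). -/
open MeasureTheory

/-- A `W^{2,∞}`-solution of the `δ`-regularized system
`0 ∈ ∂R_δ(ż(t)) + DI(z(t)) − ℓ*`, `z(0) = z₀`: both `z` and its derivative
`zd` are Lipschitz maps into `Z` on `[0,∞)`, and for all `t ≥ 0` and `w ∈ Z`
one has `R_δ(w) ≥ R_δ(ż(t)) + ⟨ℓ* − DI(z(t)), w − ż(t)⟩`, where
`R_δ(v) = R(v) + ½⟨𝕍v,v⟩ + (δ/2)⟨Av,v⟩` and `DI(z) = Az + DF(z)`. -/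
def IsRegSol {Z V X : Type*}
    [NormedAddCommGroup Z] [InnerProductSpace ℝ Z]
    [NormedAddCommGroup V] [InnerProductSpace ℝ V]
    [NormedAddCommGroup X] [NormedSpace ℝ X]
    (jZV : Z →L[ℝ] V) (jVX : V →L[ℝ] X)
    (A : Z →L[ℝ] Z →L[ℝ] ℝ) (VV : V →L[ℝ] V →L[ℝ] ℝ) (R : X → ℝ)
    (DF : Z → V →L[ℝ] ℝ) (δ : ℝ) (lstar : V →L[ℝ] ℝ) (z₀ : Z)
    (z zd : ℝ → Z) : Prop :=
  z 0 = z₀ ∧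
  (∃ K₁ : NNReal, LipschitzOnWith K₁ z (Set.Ici 0)) ∧
  (∃ K₂ : NNReal, LipschitzOnWith K₂ zd (Set.Ici 0)) ∧
  (∀ t ≥ (0:ℝ), HasDerivWithinAt z (zd t) (Set.Ici 0) t) ∧
  (∀ t ≥ (0:ℝ), ∀ w : Z,
    R (jVX (jZV w)) + 1 / 2 * VV (jZV w) (jZV w) + δ / 2 * A w w ≥
      (R (jVX (jZV (zd t))) + 1 / 2 * VV (jZV (zd t)) (jZV (zd t))
        + δ / 2 * A (zd t) (zd t)) +
      (lstar (jZV (w - zd t))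
        - (A (z t) (w - zd t) + DF (z t) (jZV (w - zd t)))))

open Set Filter Topology

section RegAux

variable {Z : Type*} [NormedAddCommGroup Z] [InnerProductSpace ℝ Z]

lemma aux_mid (r : Z → ℝ) (hr : ConvexOn ℝ Set.univ r)
    (B : Z →L[ℝ] Z →L[ℝ] ℝ) (hB : ∀ z w, B z w = B w z) (ξ : Z →L[ℝ] ℝ) (u v : Z) :
    r ((1/2 : ℝ) • (u + v)) + 1/2 * B ((1/2 : ℝ) • (u + v)) ((1/2 : ℝ) • (u + v))
        - ξ ((1/2 : ℝ) • (u + v)) ≤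
      1/2 * (r u + 1/2 * B u u - ξ u) + 1/2 * (r v + 1/2 * B v v - ξ v)
        - 1/8 * B (u - v) (u - v) := by
  have h1 := hr.2 (mem_univ u) (mem_univ v) (by norm_num : (0:ℝ) ≤ 1/2)
    (by norm_num : (0:ℝ) ≤ 1/2) (by norm_num)
  rw [← smul_add] at h1
  have h2 := hB u v
  simp only [smul_eq_mul] at h1
  simp only [map_smul, map_add, map_sub, _root_.add_apply,
    _root_.smul_apply, _root_.sub_apply, smul_eq_mul]
  linarith

lemma aux_min [CompleteSpace Z] (r : Z → ℝ) (hr : ConvexOn ℝ Set.univ r) (hrc : Continuous r)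
    (hr0 : ∀ z, 0 ≤ r z)
    (B : Z →L[ℝ] Z →L[ℝ] ℝ) (hB : ∀ z w, B z w = B w z) (β : ℝ) (hβ : 0 < β)
    (hBe : ∀ z, β * ‖z‖ ^ 2 ≤ B z z) (ξ : Z →L[ℝ] ℝ) :
    ∃ u : Z, ∀ w, r u + 1/2 * B u u + ξ (w - u) ≤ r w + 1/2 * B w w := by
  set Φ : Z → ℝ := fun w => r w + 1/2 * B w w - ξ w with hΦ
  have hΦc : Continuous Φ := by
    have : Continuous fun w => B w w := B.continuous.clm_apply continuous_id
    fun_prop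
  have hbdd : BddBelow (range Φ) := by
    refine ⟨-(‖ξ‖^2 / (2 * β)), ?_⟩
    rintro _ ⟨w, rfl⟩
    have h1 := hr0 w
    have h2 := hBe w
    have h3 : ξ w ≤ ‖ξ‖ * ‖w‖ := (le_abs_self _).trans (ξ.le_opNorm w)
    have h4 : 0 ≤ (β * ‖w‖ - ‖ξ‖)^2 / (2 * β) := by positivity
    have h5 : (β * ‖w‖ - ‖ξ‖)^2 / (2 * β) = β * ‖w‖^2 / 2 - ‖ξ‖ * ‖w‖ + ‖ξ‖^2 / (2 * β) := by
      field_simp; ring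
    simp only [hΦ]
    linarith
  set m := sInf (range Φ) with hm
  have hmle : ∀ w, m ≤ Φ w := fun w => csInf_le hbdd (mem_range_self w)
  have hex : ∀ n : ℕ, ∃ u, Φ u < m + 1 / ((n:ℝ) + 1) := by
    intro n
    have : sInf (range Φ) < m + 1 / ((n:ℝ) + 1) := by
      have : (0:ℝ) < 1 / ((n:ℝ) + 1) := by positivity
      linarith
    obtain ⟨_, ⟨u, rfl⟩, hu⟩ := exists_lt_of_csInf_lt (range_nonempty Φ) this
    exact ⟨u, hu⟩
  choose u hu using hex
  have hcau : CauchySeq u := by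
    refine cauchySeq_of_le_tendsto_0' (fun n => Real.sqrt (8 / β * (1 / ((n:ℝ) + 1)))) ?_ ?_
    · intro n k hnk
      rw [dist_eq_norm]
      apply Real.le_sqrt_of_sq_le
      have h1 := aux_mid r hr B hB ξ (u n) (u k)
      have h2 := hmle ((1/2 : ℝ) • (u n + u k))
      have h3 := hBe (u n - u k)
      have h4 := hu n
      have h5 := hu k
      have h6 : 1 / ((k:ℝ) + 1) ≤ 1 / ((n:ℝ) + 1) := by
        have : (n:ℝ) ≤ k := by exact_mod_cast hnk
        gcongr
      simp only [hΦ] at h2 h4 h5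
      rw [div_mul_eq_mul_div, le_div_iff₀ hβ]
      linarith
    · have : Tendsto (fun n : ℕ => 8 / β * (1 / ((n:ℝ) + 1))) atTop (𝓝 (8 / β * 0)) :=
        tendsto_one_div_add_atTop_nhds_zero_nat.const_mul _
      simpa using this.sqrt
  obtain ⟨x, hx⟩ := cauchySeq_tendsto_of_complete hcau
  have hxm : Φ x ≤ m := by
    have h1 : Tendsto (fun n => Φ (u n)) atTop (𝓝 (Φ x)) := (hΦc.tendsto x).comp hx
    have h2 : Tendsto (fun n : ℕ => m + 1 / ((n:ℝ) + 1)) atTop (𝓝 (m + 0)) :=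
      tendsto_one_div_add_atTop_nhds_zero_nat.const_add _
    rw [add_zero] at h2
    exact le_of_tendsto_of_tendsto' h1 h2 fun n => (hu n).le
  refine ⟨x, fun w => ?_⟩
  have := hxm.trans (hmle w)
  simp only [hΦ] at this
  rw [map_sub]
  linarith

lemma aux_lip (r : Z → ℝ) (hr : ConvexOn ℝ Set.univ r)
    (B : Z →L[ℝ] Z →L[ℝ] ℝ) (hB : ∀ z w, B z w = B w z) (β : ℝ) (hβ : 0 < β)
    (hBe : ∀ z, β * ‖z‖ ^ 2 ≤ B z z) (ξ η : Z →L[ℝ] ℝ) (u v : Z)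
    (hu : ∀ w, r u + 1/2 * B u u + ξ (w - u) ≤ r w + 1/2 * B w w)
    (hv : ∀ w, r v + 1/2 * B v v + η (w - v) ≤ r w + 1/2 * B w w) :
    ‖u - v‖ ≤ 2 / β * ‖ξ - η‖ := by
  have h1 := aux_mid r hr B hB ξ u v
  have h2 := aux_mid r hr B hB η u v
  have h3 := hu ((1/2 : ℝ) • (u + v))
  have h4 := hv ((1/2 : ℝ) • (u + v))
  have h5 := hBe (u - v)
  have h6 : (ξ - η) (u - v) ≤ ‖ξ - η‖ * ‖u - v‖ := (le_abs_self _).trans ((ξ - η).le_opNorm _)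
  rw [map_sub] at h3 h4
  simp only [_root_.sub_apply, map_sub] at h6
  simp only [map_sub, _root_.sub_apply] at h1 h2 h5
  have h7 : β / 2 * ‖u - v‖ ^ 2 ≤ ‖ξ - η‖ * ‖u - v‖ := by linarith
  rcases (norm_nonneg (u - v)).eq_or_lt with h | h
  · rw [← h]; positivity
  · have : β / 2 * ‖u - v‖ ≤ ‖ξ - η‖ := by
      apply le_of_mul_le_mul_right _ h
      linarith
    rw [div_mul_eq_mul_div, le_div_iff₀ hβ]
    linarith

lemma aux_ode {E : Type*} [NormedAddCommGroup E] [NormedSpace ℝ E] [CompleteSpace E]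
    (g : E → E) (K L : NNReal) (hg : LipschitzWith K g) (hL : ∀ x, ‖g x‖ ≤ L) (x₀ : E) :
    ∃ z : ℝ → E, z 0 = x₀ ∧ ∀ t ≥ (0:ℝ), HasDerivWithinAt z (g (z t)) (Ici 0) t := by
  have key : ∀ n : ℕ, ∃ z : ℝ → E, z 0 = x₀ ∧
      ∀ t ∈ Icc (0:ℝ) n, HasDerivWithinAt z (g (z t)) (Icc (0:ℝ) n) t := by
    intro n
    have hpl : IsPicardLindelof (fun _ => g) (tmin := 0) (tmax := (n:ℝ))
        ⟨0, left_mem_Icc.2 (Nat.cast_nonneg n)⟩ x₀ (L * n) 0 L K := by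
      refine IsPicardLindelof.of_time_independent (fun x _ => hL x) (hg.lipschitzOnWith) ?_
      simp
    obtain ⟨z, h0, hz⟩ := hpl.exists_eq_forall_mem_Icc_hasDerivWithinAt₀
    exact ⟨z, h0, hz⟩
  choose z h0 hz using key
  have huniq : ∀ n k : ℕ, n ≤ k → EqOn (z n) (z k) (Icc (0:ℝ) n) := by
    intro n k hnk
    have hnk' : (n:ℝ) ≤ k := by exact_mod_cast hnk
    have hr : ∀ m : ℕ, n ≤ m → ∀ t ∈ Ico (0:ℝ) n,
        HasDerivWithinAt (z m) (g (z m t)) (Ici t) t := by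
      intro m hm t ht
      have hm' : (n:ℝ) ≤ m := by exact_mod_cast hm
      refine (hz m t ⟨ht.1, ht.2.le.trans hm'⟩).mono_of_mem_nhdsWithin ?_
      exact mem_of_superset (Icc_mem_nhdsGE (ht.2.trans_le hm')) (Icc_subset_Icc_left ht.1)
    refine ODE_solution_unique_of_mem_Icc_right (v := fun _ => g) (s := fun _ => univ) (K := K)
      (fun t _ => hg.lipschitzOnWith) ?_ (hr n le_rfl) (fun _ _ => mem_univ _) ?_
      (hr k hnk) (fun _ _ => mem_univ _) (by rw [h0, h0])
    · exact HasDerivWithinAt.continuousOn (hz n)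
    · exact (HasDerivWithinAt.continuousOn (hz k)).mono (Icc_subset_Icc_right hnk')
  refine ⟨fun t => z (⌊t⌋₊ + 1) t, by simp [h0], fun t ht => ?_⟩
  set n := ⌊t⌋₊ + 1 with hn
  have htn : t < n := by rw [hn]; push_cast; exact Nat.lt_floor_add_one t
  have heq : EqOn (fun t => z (⌊t⌋₊ + 1) t) (z n) (Icc (0:ℝ) n) := by
    intro s hs
    have hsn : s < ((⌊s⌋₊ + 1 : ℕ) : ℝ) := by push_cast; exact Nat.lt_floor_add_one s
    rcases le_total (⌊s⌋₊ + 1) n with h | h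
    · exact huniq _ _ h ⟨hs.1, hsn.le⟩
    · exact (huniq _ _ h hs).symm
  have h1 := (hz n t ⟨ht, htn.le⟩).congr_of_mem heq ⟨ht, htn.le⟩
  refine h1.mono_of_mem_nhdsWithin ?_
  rw [← Ici_inter_Iic]
  exact inter_mem_nhdsWithin _ (Iic_mem_nhds htn)


lemma aux_cut (g : Z → Z) (M : ℝ) (hM : 0 ≤ M) (K : NNReal)
    (hg : LipschitzOnWith K g (Metric.closedBall 0 (M + 1))) :
    ∃ K' L : NNReal, LipschitzWith K' (fun z => (max 0 (min 1 (M + 1 - ‖z‖))) • g z) ∧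
      ∀ z, ‖(max 0 (min 1 (M + 1 - ‖z‖))) • g z‖ ≤ L := by
  set χ : Z → ℝ := fun z => max 0 (min 1 (M + 1 - ‖z‖)) with hχ
  have hχ0 : ∀ z, 0 ≤ χ z := fun z => le_max_left _ _
  have hχ1 : ∀ z, χ z ≤ 1 := fun z => max_le zero_le_one (min_le_left _ _)
  have hχl : ∀ x y, |χ x - χ y| ≤ ‖x - y‖ := by
    intro x y
    have h1 : |χ x - χ y| ≤ |min 1 (M + 1 - ‖x‖) - min 1 (M + 1 - ‖y‖)| :=
      by simpa using abs_max_sub_max_le_max 0 (min 1 (M + 1 - ‖x‖)) 0 (min 1 (M + 1 - ‖y‖))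
    have h2 : |min 1 (M + 1 - ‖x‖) - min 1 (M + 1 - ‖y‖)| ≤ |(M + 1 - ‖x‖) - (M + 1 - ‖y‖)| := by
      simpa using abs_min_sub_min_le_max 1 (M + 1 - ‖x‖) 1 (M + 1 - ‖y‖)
    have h3 : |(M + 1 - ‖x‖) - (M + 1 - ‖y‖)| ≤ ‖x - y‖ := by
      rw [show (M + 1 - ‖x‖) - (M + 1 - ‖y‖) = -(‖x‖ - ‖y‖) by ring, abs_neg]
      exact abs_norm_sub_norm_le x y
    exact h1.trans (h2.trans h3)
  have hχout : ∀ z, z ∉ Metric.closedBall (0:Z) (M + 1) → χ z = 0 := by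
    intro z hz
    have : M + 1 < ‖z‖ := by simpa using hz
    exact max_eq_left ((min_le_right _ _).trans (by linarith))
  obtain ⟨b, hb0, hb⟩ : ∃ b : ℝ, 0 ≤ b ∧ ∀ z ∈ Metric.closedBall (0:Z) (M + 1), ‖g z‖ ≤ b := by
    refine ⟨‖g 0‖ + K * (M + 1), by positivity, fun z hz => ?_⟩
    have h1 := hg.dist_le_mul z hz 0 (by simp; linarith)
    rw [dist_eq_norm, dist_zero_right] at h1
    have h2 : ‖z‖ ≤ M + 1 := by simpa using hz
    have h3 : ‖g z‖ ≤ ‖g 0‖ + ‖g z - g 0‖ := by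
      simpa using norm_add_le (g 0) (g z - g 0)
    have h4 : (K:ℝ) * ‖z‖ ≤ K * (M + 1) := by gcongr
    linarith
  have hout : ∀ x y, y ∉ Metric.closedBall (0:Z) (M + 1) →
      ‖χ x • g x - χ y • g y‖ ≤ b * ‖x - y‖ := by
    intro x y hy
    by_cases hx : x ∈ Metric.closedBall (0:Z) (M + 1)
    · have h1 := hχl x y
      rw [hχout y hy, sub_zero] at h1
      rw [hχout y hy, zero_smul, sub_zero, norm_smul, Real.norm_eq_abs, mul_comm]
      exact mul_le_mul (hb x hx) h1 (abs_nonneg _) hb0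
    · rw [hχout y hy, hχout x hx, zero_smul, zero_smul, sub_zero, norm_zero]
      positivity
  refine ⟨K + ⟨b, hb0⟩, ⟨b, hb0⟩, ?_, ?_⟩
  · refine LipschitzWith.of_dist_le_mul fun x y => ?_
    rw [dist_eq_norm, dist_eq_norm]
    change ‖χ x • g x - χ y • g y‖ ≤ ((K:ℝ) + b) * ‖x - y‖
    have hK : 0 ≤ (K:ℝ) * ‖x - y‖ := by positivity
    by_cases hy : y ∈ Metric.closedBall (0:Z) (M + 1)
    · by_cases hx : x ∈ Metric.closedBall (0:Z) (M + 1)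
      · have e : χ x • g x - χ y • g y = χ x • (g x - g y) + (χ x - χ y) • g y := by
          rw [smul_sub, sub_smul]; abel
        rw [e]
        refine (norm_add_le _ _).trans ?_
        rw [norm_smul, norm_smul, Real.norm_eq_abs, Real.norm_eq_abs, abs_of_nonneg (hχ0 x)]
        have h1 := hg.dist_le_mul x hx y hy
        rw [dist_eq_norm, dist_eq_norm] at h1
        have h2 : χ x * ‖g x - g y‖ ≤ 1 * (K * ‖x - y‖) :=
          mul_le_mul (hχ1 x) h1 (norm_nonneg _) zero_le_one
        have h3 : |χ x - χ y| * ‖g y‖ ≤ ‖x - y‖ * b :=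
          mul_le_mul (hχl x y) (hb y hy) (norm_nonneg _) (norm_nonneg _)
        linarith
      · have := hout y x hx
        rw [norm_sub_rev, norm_sub_rev x y]
        rw [norm_sub_rev x y] at hK
        linarith
    · have := hout x y hy
      linarith
  · intro z
    change ‖χ z • g z‖ ≤ b
    by_cases hz : z ∈ Metric.closedBall (0:Z) (M + 1)
    · rw [norm_smul, Real.norm_eq_abs, abs_of_nonneg (hχ0 z)]
      have := mul_le_mul (hχ1 z) (hb z hz) (norm_nonneg _) zero_le_one
      linarith
    · rw [hχout z hz, zero_smul, norm_zero]; exact hb0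

lemma aux_energy (E : Z → ℝ) (E' : Z → Z →L[ℝ] ℝ) (hE : ∀ z, HasFDerivAt E (E' z) z)
    (z zd : ℝ → Z) (hz : ∀ t ≥ (0:ℝ), HasDerivWithinAt z (zd t) (Ici 0) t)
    (h : ℝ → ℝ) (hh : ContinuousOn h (Ici 0)) (hle : ∀ t ≥ (0:ℝ), h t ≤ - E' (z t) (zd t))
    (T : ℝ) (hT : 0 ≤ T) :
    ∫ t in (0:ℝ)..T, h t ≤ E (z 0) - E (z T) := by
  have hd : ∀ t ≥ (0:ℝ), HasDerivWithinAt (fun t => - E (z t)) (- E' (z t) (zd t)) (Ici 0) t :=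
    fun t ht => ((hE (z t)).comp_hasDerivWithinAt t (hz t ht)).neg
  have hc : ContinuousOn (fun t => - E (z t)) (Ici 0) := HasDerivWithinAt.continuousOn hd
  have hsub : Icc (0:ℝ) T ⊆ Ici 0 := Icc_subset_Ici_self
  have := intervalIntegral.integral_le_sub_of_hasDeriv_right_of_le hT (hc.mono hsub)
    (fun x hx => (hd x hx.1.le).mono (fun y hy => (hx.1.trans hy).le))
    ((hh.mono hsub).integrableOn_Icc) (fun x hx => hle x hx.1.le)
  linarith

lemma aux_exist [CompleteSpace Z] (r : Z → ℝ) (hr : ConvexOn ℝ Set.univ r) (hrc : Continuous r)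
    (hr0 : ∀ z, 0 ≤ r z) (hr00 : r 0 = 0)
    (B : Z →L[ℝ] Z →L[ℝ] ℝ) (hB : ∀ z w, B z w = B w z) (β : ℝ) (hβ : 0 < β)
    (hBe : ∀ z, β * ‖z‖ ^ 2 ≤ B z z)
    (E : Z → ℝ) (E' : Z → Z →L[ℝ] ℝ) (hE : ∀ z, HasFDerivAt E (E' z) z)
    (hEl : ∀ M : ℝ, ∃ K : NNReal, LipschitzOnWith K E' (Metric.closedBall 0 M))
    (z₀ : Z) (M : ℝ) (hM : ∀ z, E z ≤ E z₀ → ‖z‖ ≤ M) :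
    ∃ z zd : ℝ → Z, z 0 = z₀ ∧
      (∃ K₁ : NNReal, LipschitzOnWith K₁ z (Set.Ici 0)) ∧
      (∃ K₂ : NNReal, LipschitzOnWith K₂ zd (Set.Ici 0)) ∧
      (∀ t ≥ (0:ℝ), HasDerivWithinAt z (zd t) (Set.Ici 0) t) ∧
      (∀ t ≥ (0:ℝ), ∀ w, r (zd t) + 1/2 * B (zd t) (zd t) + (- E' (z t)) (w - zd t)
        ≤ r w + 1/2 * B w w) := by
  have hM0 : 0 ≤ M := (norm_nonneg _).trans (hM z₀ le_rfl)
  choose G hG using aux_min r hr hrc hr0 B hB β hβ hBe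
  obtain ⟨KE, hKE⟩ := hEl (M + 1)
  set g : Z → Z := fun z => G (- E' z) with hgdef
  have hdiss : ∀ z, E' z (g z) ≤ 0 := by
    intro z
    have h1 := hG (- E' z) 0
    have h2 := hr0 (g z)
    have h3 := hBe (g z)
    have h4 : 0 ≤ β * ‖g z‖ ^ 2 := by positivity
    simp only [hr00, map_zero, zero_sub, map_neg, _root_.neg_apply, neg_neg, mul_zero,
      add_zero] at h1
    simp only [hgdef] at h2 h3 h4 ⊢
    linarith
  have hglip : LipschitzOnWith (⟨2 / β, by positivity⟩ * KE) g (Metric.closedBall 0 (M + 1)) := by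
    refine LipschitzOnWith.of_dist_le_mul fun x hx y hy => ?_
    have h1 := aux_lip r hr B hB β hβ hBe _ _ _ _ (hG (- E' x)) (hG (- E' y))
    have h2 := hKE.dist_le_mul x hx y hy
    rw [dist_eq_norm] at h2 ⊢
    have h3 : ‖-E' x - -E' y‖ = ‖E' x - E' y‖ := by rw [← norm_neg]; congr 1; abel
    rw [h3] at h1
    refine h1.trans ?_
    change _ ≤ 2 / β * (KE:ℝ) * _
    rw [mul_assoc]
    gcongr
  obtain ⟨K', L, hK', hL⟩ := aux_cut g M hM0 _ hglip
  obtain ⟨z, hz0, hz⟩ := aux_ode _ K' L hK' hL z₀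
  have hbd : ∀ t ≥ (0:ℝ), ‖z t‖ ≤ M := by
    intro t ht
    apply hM
    have := aux_energy E E' hE z _ hz (fun _ => 0) continuousOn_const (fun s hs => by
      rw [map_smul, smul_eq_mul, ← mul_neg]
      exact mul_nonneg (le_max_left _ _) (neg_nonneg.2 (hdiss _))) t ht
    rw [hz0] at this
    simp only [intervalIntegral.integral_zero] at this
    linarith
  have heq : ∀ t ≥ (0:ℝ), (max 0 (min 1 (M + 1 - ‖z t‖))) • g (z t) = g (z t) := by
    intro t ht
    have := hbd t ht
    rw [min_eq_left (by linarith), max_eq_right zero_le_one, one_smul]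
  have hz' : ∀ t ≥ (0:ℝ), HasDerivWithinAt z (g (z t)) (Ici 0) t := by
    intro t ht
    have := hz t ht
    rwa [heq t ht] at this
  have hzl : LipschitzOnWith L z (Ici 0) := by
    refine Convex.lipschitzOnWith_of_nnnorm_hasDerivWithin_le (convex_Ici 0) hz' (fun t ht => ?_)
    have := hL (z t)
    rw [heq t ht] at this
    exact this
  refine ⟨z, fun t => g (z t), hz0, ⟨L, hzl⟩, ⟨_, hglip.comp hzl ?_⟩, hz', fun t ht w => hG _ w⟩
  intro t ht
  have := hbd t ht
  simp
  linarith

lemma aux_unique (r : Z → ℝ) (hr : ConvexOn ℝ Set.univ r)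
    (B : Z →L[ℝ] Z →L[ℝ] ℝ) (hB : ∀ z w, B z w = B w z) (β : ℝ) (hβ : 0 < β)
    (hBe : ∀ z, β * ‖z‖ ^ 2 ≤ B z z)
    (E' : Z → Z →L[ℝ] ℝ)
    (hEl : ∀ M : ℝ, ∃ K : NNReal, LipschitzOnWith K E' (Metric.closedBall 0 M))
    (z zd y yd : ℝ → Z) (h0 : z 0 = y 0)
    (hz : ∀ t ≥ (0:ℝ), HasDerivWithinAt z (zd t) (Set.Ici 0) t)
    (hy : ∀ t ≥ (0:ℝ), HasDerivWithinAt y (yd t) (Set.Ici 0) t)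
    (hzv : ∀ t ≥ (0:ℝ), ∀ w, r (zd t) + 1/2 * B (zd t) (zd t) + (- E' (z t)) (w - zd t)
        ≤ r w + 1/2 * B w w)
    (hyv : ∀ t ≥ (0:ℝ), ∀ w, r (yd t) + 1/2 * B (yd t) (yd t) + (- E' (y t)) (w - yd t)
        ≤ r w + 1/2 * B w w) (M : ℝ)
    (hzM : ∀ t ≥ (0:ℝ), ‖z t‖ ≤ M) (hyM : ∀ t ≥ (0:ℝ), ‖y t‖ ≤ M) :
    ∀ t ≥ (0:ℝ), z t = y t := by
  obtain ⟨KE, hKE⟩ := hEl M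
  intro T hT
  have hd : ∀ t ≥ (0:ℝ), HasDerivWithinAt (fun t => z t - y t) (zd t - yd t) (Ici 0) t :=
    fun t ht => (hz t ht).sub (hy t ht)
  have := eq_zero_of_abs_deriv_le_mul_abs_self_of_eq_zero_right (f := fun t => z t - y t)
    (f' := fun t => zd t - yd t) (K := 2 / β * KE) (a := 0) (b := T)
    ((HasDerivWithinAt.continuousOn hd).mono Icc_subset_Ici_self)
    (fun t ht => (hd t ht.1).mono (Ici_subset_Ici.2 ht.1)) (by simp [h0])
    (fun t ht => by
      have h1 := aux_lip r hr B hB β hβ hBe _ _ _ _ (hzv t ht.1) (hyv t ht.1)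
      have h2 := hKE.dist_le_mul (z t) (by simpa using hzM t ht.1) (y t) (by simpa using hyM t ht.1)
      rw [dist_eq_norm, dist_eq_norm] at h2
      have h3 : ‖-E' (z t) - -E' (y t)‖ = ‖E' (z t) - E' (y t)‖ := by
        rw [← norm_neg]; congr 1; abel
      rw [h3] at h1
      refine h1.trans ?_
      rw [mul_assoc]
      gcongr) T ⟨hT, le_rfl⟩
  exact sub_eq_zero.1 this

lemma aux_lint (h : ℝ → ℝ) (hh : ContinuousOn h (Ici 0)) (h0 : ∀ t ≥ (0:ℝ), 0 ≤ h t) (D : ℝ)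
    (hD : ∀ T ≥ (0:ℝ), ∫ t in (0:ℝ)..T, h t ≤ D) :
    ∫⁻ t in Ioi (0:ℝ), ENNReal.ofReal (h t) ≤ ENNReal.ofReal D := by
  have hm : AEMeasurable (fun t => ENNReal.ofReal (h t))
      (MeasureTheory.volume.restrict (Ioi (0:ℝ))) :=
    ((hh.mono Ioi_subset_Ici_self).aemeasurable measurableSet_Ioi).ennreal_ofReal
  have hcov : MeasureTheory.AECover (MeasureTheory.volume.restrict (Ioi (0:ℝ))) atTop
      (fun n : ℕ => Iic (n:ℝ)) :=
    (MeasureTheory.aecover_Iic tendsto_natCast_atTop_atTop).restrict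
  refine le_of_tendsto' (hcov.lintegral_tendsto_of_nat hm) fun n => ?_
  rw [MeasureTheory.Measure.restrict_restrict measurableSet_Iic, inter_comm, Ioi_inter_Iic]
  have hi : MeasureTheory.IntegrableOn h (Ioc 0 (n:ℝ)) :=
    ((hh.mono Icc_subset_Ici_self).integrableOn_Icc).mono_set Ioc_subset_Icc_self
  rw [← MeasureTheory.ofReal_integral_eq_lintegral_ofReal hi]
  · apply ENNReal.ofReal_le_ofReal
    rw [← intervalIntegral.integral_of_le (Nat.cast_nonneg n)]
    exact hD n (Nat.cast_nonneg n)
  · filter_upwards [MeasureTheory.ae_restrict_mem measurableSet_Ioc] with t ht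
    exact h0 t ht.1.le


lemma aux_ball {W : Type*} [NormedAddCommGroup W] [NormedSpace ℝ W]
    (f : Z → W) (f' : Z → Z →L[ℝ] W) (hf : ∀ z, HasFDerivAt f (f' z) z) (M S : ℝ) (hM : 0 ≤ M)
    (hS : ∀ z, ‖z‖ ≤ M → ‖f' z‖ ≤ S) :
    LipschitzOnWith S.toNNReal f (Metric.closedBall 0 M) ∧
      ∀ z, ‖z‖ ≤ M → ‖f z‖ ≤ ‖f 0‖ + S * M := by
  have hS0 : 0 ≤ S := (norm_nonneg _).trans (hS 0 (by simpa using hM))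
  have key : ∀ x ∈ Metric.closedBall (0:Z) M, ∀ y ∈ Metric.closedBall (0:Z) M,
      ‖f y - f x‖ ≤ S * ‖y - x‖ := fun x hx y hy =>
    (convex_closedBall (0:Z) M).norm_image_sub_le_of_norm_hasFDerivWithin_le
      (fun z _ => (hf z).hasFDerivWithinAt) (fun z hz => hS z (by simpa using hz)) hx hy
  constructor
  · refine LipschitzOnWith.of_dist_le_mul fun x hx y hy => ?_
    rw [dist_eq_norm, dist_eq_norm, Real.coe_toNNReal _ hS0]
    exact key y hy x hx
  · intro z hz
    have h1 := key 0 (by simpa using hM) z (by simpa using hz)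
    rw [sub_zero] at h1
    have h3 : ‖f z‖ ≤ ‖f 0‖ + ‖f z - f 0‖ := by
      simpa using norm_add_le (f 0) (f z - f 0)
    have h4 : S * ‖z‖ ≤ S * M := by gcongr
    linarith

end RegAux

/-- Existence and uniqueness for the `δ`-regularized system
(Proposition `prop.exregularizedRplus` of the paper): for every `δ > 0`,
`z₀ ∈ Z` and `ℓ* ∈ V*` there is a unique `W^{2,∞}`-solution `z_δ` of
`0 ∈ ∂R_δ(ż_δ) + DI(z_δ) − ℓ*` with `z_δ(0) = z₀`; moreover, for every
`ρ > 0` there is `C(ρ) > 0`, independent of `δ`, with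
`sup_t ‖z_δ(t)‖_Z ≤ C(ρ)` and `∫₀^∞ R_δ(ż_δ) ≤ C(ρ)` whenever
`‖z₀‖_Z + ‖ℓ*‖_{V*} ≤ ρ`. -/
theorem stmt6
    {Z V X : Type*}
    [NormedAddCommGroup Z] [InnerProductSpace ℝ Z] [CompleteSpace Z]
    [TopologicalSpace.SeparableSpace Z]
    [NormedAddCommGroup V] [InnerProductSpace ℝ V] [CompleteSpace V]
    [TopologicalSpace.SeparableSpace V]
    [NormedAddCommGroup X] [NormedSpace ℝ X]
    (jZV : Z →L[ℝ] V) (hjZV_inj : Function.Injective jZV)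
    (hjZV_cpt : IsCompactOperator jZV)
    (jVX : V →L[ℝ] X) (hjVX_inj : Function.Injective jVX)
    (A : Z →L[ℝ] Z →L[ℝ] ℝ) (hA_symm : ∀ z w : Z, A z w = A w z)
    (α : ℝ) (hα : 0 < α) (hA_ell : ∀ z : Z, α * ‖z‖ ^ 2 ≤ A z z)
    (VV : V →L[ℝ] V →L[ℝ] ℝ) (hVV_symm : ∀ u v : V, VV u v = VV v u)
    (γ : ℝ) (hγ : 0 < γ) (hVV_ell : ∀ v : V, γ * ‖v‖ ^ 2 ≤ VV v v)
    (R : X → ℝ) (hR_conv : ConvexOn ℝ Set.univ R) (hR_cont : Continuous R)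
    (hR_hom : ∀ t : ℝ, 0 ≤ t → ∀ x : X, R (t • x) = t * R x)
    (c C : ℝ) (hc : 0 < c) (hC : 0 < C)
    (hR_low : ∀ x : X, c * ‖x‖ ≤ R x) (hR_up : ∀ x : X, R x ≤ C * ‖x‖)
    (F : Z → ℝ) (hF_nonneg : ∀ z : Z, 0 ≤ F z)
    (DF : Z → V →L[ℝ] ℝ)
    (hDF : ∀ z : Z, HasFDerivAt F ((DF z).comp jZV) z)
    (D2F : Z → Z →L[ℝ] V →L[ℝ] ℝ)
    (hD2F : ∀ z : Z, HasFDerivAt DF (D2F z) z)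
    (hD2F_cont : Continuous D2F)
    (C₀ q : ℝ) (hC₀ : 0 < C₀) (hq : 1 ≤ q)
    (hD2F_bound : ∀ z v : Z, ‖D2F z v‖ ≤ C₀ * (1 + ‖z‖ ^ q) * ‖v‖) :
    -- existence and uniqueness
    (∀ δ > (0:ℝ), ∀ (z₀ : Z) (lstar : V →L[ℝ] ℝ),
      ∃ (z zd : ℝ → Z),
        IsRegSol jZV jVX A VV R DF δ lstar z₀ z zd ∧
        ∀ (z' zd' : ℝ → Z),
          IsRegSol jZV jVX A VV R DF δ lstar z₀ z' zd' →
          ∀ t ≥ (0:ℝ), z' t = z t) ∧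
    -- uniform bounds, with C(ρ) independent of δ
    (∀ ρ > (0:ℝ), ∃ Cρ > (0:ℝ), ∀ δ > (0:ℝ), ∀ (z₀ : Z) (lstar : V →L[ℝ] ℝ),
      ‖z₀‖ + ‖lstar‖ ≤ ρ →
      ∀ (z zd : ℝ → Z),
        IsRegSol jZV jVX A VV R DF δ lstar z₀ z zd →
        (∀ t ≥ (0:ℝ), ‖z t‖ ≤ Cρ) ∧
        (∫⁻ t in Set.Ioi (0:ℝ),
          ENNReal.ofReal (R (jVX (jZV (zd t)))
            + 1 / 2 * VV (jZV (zd t)) (jZV (zd t))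
            + δ / 2 * A (zd t) (zd t))) ≤ ENNReal.ofReal Cρ) := by
    classical
  set J : ℝ := ‖jZV‖ with hJ
  have hJ0 : 0 ≤ J := norm_nonneg _
  -- Lipschitz and growth bounds for `DF` and `F`
  have hD2 : ∀ M : ℝ, 0 ≤ M → ∀ z : Z, ‖z‖ ≤ M → ‖D2F z‖ ≤ C₀ * (1 + M ^ q) := by
    intro M hM z hz
    have h1 : ‖z‖ ^ q ≤ M ^ q := Real.rpow_le_rpow (norm_nonneg _) hz (by linarith)
    have h2 : 0 ≤ M ^ q := Real.rpow_nonneg hM _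
    refine ContinuousLinearMap.opNorm_le_bound _ (by positivity) fun v => ?_
    refine (hD2F_bound z v).trans ?_
    gcongr
  have hDFl := fun (M : ℝ) (hM : 0 ≤ M) => aux_ball DF D2F hD2F M _ hM (hD2 M hM)
  have hFb : ∀ M : ℝ, 0 ≤ M → ∃ S : ℝ, 0 ≤ S ∧ ∀ z : Z, ‖z‖ ≤ M → F z ≤ S := by
    intro M hM
    obtain ⟨-, h1⟩ := hDFl M hM
    have h2 := (aux_ball F (fun z => (DF z).comp jZV) hDF M
      ((‖DF 0‖ + C₀ * (1 + M ^ q) * M) * J) hM (fun z hz =>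
        (ContinuousLinearMap.opNorm_comp_le _ _).trans
          (mul_le_mul_of_nonneg_right (h1 z hz) hJ0))).2
    have h3 : 0 ≤ M ^ q := Real.rpow_nonneg hM _
    refine ⟨_, by positivity, fun z hz => (le_abs_self _).trans (h2 z hz)⟩
  -- the energy
  set E : (V →L[ℝ] ℝ) → Z → ℝ := fun l z => 1 / 2 * A z z + F z - l (jZV z) with hEdef
  set E' : (V →L[ℝ] ℝ) → Z → Z →L[ℝ] ℝ := fun l z => A z + (DF z).comp jZV - l.comp jZV with hE'def
  have hE : ∀ l z, HasFDerivAt (E l) (E' l z) z := by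
    intro l z
    have h1 : HasFDerivAt (fun z => A z z) (A z + A.flip z) z := by
      have h2 := (A.hasFDerivAt (x := z)).clm_apply (hasFDerivAt_id z)
      refine h2.congr_fderiv ?_
      ext w
      simp
    have h2 := ((h1.const_mul (1 / 2 : ℝ)).add (hDF z)).sub (l.comp jZV).hasFDerivAt
    refine h2.congr_fderiv ?_
    ext w
    simp [hE'def, hA_symm w z]
    ring
  have hEl : ∀ l, ∀ M : ℝ, ∃ K : NNReal, LipschitzOnWith K (E' l) (Metric.closedBall 0 M) := by
    intro l M
    rcases lt_or_ge M 0 with hM | hM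
    · exact ⟨0, by rw [Metric.closedBall_eq_empty.2 hM]; exact fun x hx => hx.elim⟩
    · have h1 := (hDFl M hM).1
      have h2 := (((ContinuousLinearMap.compL ℝ Z V ℝ).flip jZV).lipschitz.comp_lipschitzOnWith h1)
      exact ⟨_, (A.lipschitz.lipschitzOnWith.add h2).sub
        (LipschitzWith.const (l.comp jZV)).lipschitzOnWith⟩
  have hlow : ∀ (l : V →L[ℝ] ℝ) (P : ℝ), ‖l‖ ≤ P → ∀ z, α / 4 * ‖z‖ ^ 2 ≤ E l z + (P * J) ^ 2 / α := by
    intro l P hP z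
    have h1 := hA_ell z
    have h2 := hF_nonneg z
    have h3 : l (jZV z) ≤ P * J * ‖z‖ := by
      refine (le_abs_self _).trans ((l.le_opNorm _).trans ?_)
      rw [mul_assoc]
      exact mul_le_mul hP (jZV.le_opNorm z) (norm_nonneg _) ((norm_nonneg _).trans hP)
    have h4 : 0 ≤ (α / 2 * ‖z‖ - P * J) ^ 2 / α := by positivity
    have h5 : (α / 2 * ‖z‖ - P * J) ^ 2 / α
        = α / 4 * ‖z‖ ^ 2 - P * J * ‖z‖ + (P * J) ^ 2 / α := by
      field_simp; ring
    simp only [hEdef]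
    linarith
  have hup : ∀ ρ > (0:ℝ), ∃ S : ℝ, 0 ≤ S ∧ ∀ (z₀ : Z) (l : V →L[ℝ] ℝ), ‖z₀‖ + ‖l‖ ≤ ρ →
      E l z₀ ≤ S := by
    intro ρ hρ
    obtain ⟨S, hS0, hS⟩ := hFb ρ hρ.le
    refine ⟨1 / 2 * (‖A‖ * ρ * ρ) + S + ρ * (J * ρ), by positivity, fun z₀ l h => ?_⟩
    have hz : ‖z₀‖ ≤ ρ := by linarith [norm_nonneg l]
    have hl : ‖l‖ ≤ ρ := by linarith [norm_nonneg z₀]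
    have h1 : A z₀ z₀ ≤ ‖A‖ * ρ * ρ := by
      refine (le_abs_self _).trans ((A.le_opNorm₂ z₀ z₀).trans ?_)
      gcongr
    have h2 : -l (jZV z₀) ≤ ρ * (J * ρ) := by
      refine (neg_le_abs _).trans ((l.le_opNorm _).trans ?_)
      have : ‖jZV z₀‖ ≤ J * ρ := (jZV.le_opNorm z₀).trans (by gcongr)
      gcongr
    have h3 := hS z₀ hz
    simp only [hEdef]
    linarith
  have hbnd : ∀ ρ > (0:ℝ), ∃ D > (0:ℝ), ∀ (z₀ : Z) (l : V →L[ℝ] ℝ), ‖z₀‖ + ‖l‖ ≤ ρ →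
      ∀ z, (E l z ≤ E l z₀ → ‖z‖ ≤ D) ∧ E l z₀ - E l z ≤ D := by
    intro ρ hρ
    obtain ⟨S, hS0, hS⟩ := hup ρ hρ
    have hp : 0 ≤ S + (ρ * J) ^ 2 / α := by positivity
    refine ⟨1 + 4 / α * (S + (ρ * J) ^ 2 / α) + (S + (ρ * J) ^ 2 / α), by positivity,
      fun z₀ l h z => ?_⟩
    have h1 := hS z₀ l h
    have h2 := hlow l ρ (by linarith [norm_nonneg z₀]) z
    have h3 : 0 ≤ α / 4 * ‖z‖ ^ 2 := by positivity
    have h6 : 0 ≤ 4 / α * (S + (ρ * J) ^ 2 / α) := by positivity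
    refine ⟨fun h4 => ?_, by linarith⟩
    have h5 : ‖z‖ ^ 2 ≤ 4 / α * (S + (ρ * J) ^ 2 / α) := by
      rw [div_mul_eq_mul_div, le_div_iff₀ hα]
      linarith
    nlinarith [sq_nonneg (‖z‖ - 1)]
  -- the dissipation potential
  set r : Z → ℝ := fun z => R (jVX (jZV z)) with hrdef
  have hr0 : ∀ z, 0 ≤ r z := fun z => (by positivity : 0 ≤ c * ‖jVX (jZV z)‖).trans (hR_low _)
  have hr00 : r 0 = 0 := by
    have := hR_hom 0 le_rfl 0
    simpa [hrdef] using this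
  have hrc : Continuous r := hR_cont.comp (jVX.continuous.comp jZV.continuous)
  have hr : ConvexOn ℝ Set.univ r := by
    have := hR_conv.comp_linearMap ((jVX.comp jZV : Z →L[ℝ] X) : Z →ₗ[ℝ] X)
    exact this
  set B : ℝ → Z →L[ℝ] Z →L[ℝ] ℝ := fun δ => VV.bilinearComp jZV jZV + δ • A with hBdef
  have hBa : ∀ δ z w, B δ z w = VV (jZV z) (jZV w) + δ * A z w := by
    intro δ z w
    simp [hBdef]
  have hBs : ∀ δ z w, B δ z w = B δ w z := by
    intro δ z w
    rw [hBa, hBa, hA_symm, hVV_symm]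
  have hBe : ∀ δ > (0:ℝ), ∀ z, (δ * α) * ‖z‖ ^ 2 ≤ B δ z z := by
    intro δ hδ z
    rw [hBa]
    have h1 := hVV_ell (jZV z)
    have h2 : 0 ≤ γ * ‖jZV z‖ ^ 2 := by positivity
    have h3 := mul_le_mul_of_nonneg_left (hA_ell z) hδ.le
    linarith
  have hiff : ∀ (δ : ℝ) (l : V →L[ℝ] ℝ) (x y w : Z),
      (R (jVX (jZV w)) + 1 / 2 * VV (jZV w) (jZV w) + δ / 2 * A w w ≥
      (R (jVX (jZV y)) + 1 / 2 * VV (jZV y) (jZV y) + δ / 2 * A y y) +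
      (l (jZV (w - y)) - (A x (w - y) + DF x (jZV (w - y))))) ↔
      r y + 1 / 2 * B δ y y + (- E' l x) (w - y) ≤ r w + 1 / 2 * B δ w w := by
    intro δ l x y w
    have e : (- E' l x) (w - y) = l (jZV (w - y)) - (A x (w - y) + DF x (jZV (w - y))) := by
      simp only [hE'def, _root_.neg_apply, _root_.sub_apply, _root_.add_apply,
        ContinuousLinearMap.comp_apply]
      ring
    rw [e, hBa, hBa]
    simp only [hrdef]
    constructor <;> intro h <;> linarith
  have huni : ∀ ρ > (0:ℝ), ∃ Cρ > (0:ℝ), ∀ δ > (0:ℝ), ∀ (z₀ : Z) (lstar : V →L[ℝ] ℝ),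
      ‖z₀‖ + ‖lstar‖ ≤ ρ →
      ∀ (z zd : ℝ → Z),
        IsRegSol jZV jVX A VV R DF δ lstar z₀ z zd →
        (∀ t ≥ (0:ℝ), ‖z t‖ ≤ Cρ) ∧
        (∫⁻ t in Set.Ioi (0:ℝ),
          ENNReal.ofReal (R (jVX (jZV (zd t)))
            + 1 / 2 * VV (jZV (zd t)) (jZV (zd t))
            + δ / 2 * A (zd t) (zd t))) ≤ ENNReal.ofReal Cρ := by
    intro ρ hρ
    obtain ⟨D, hD0, hD⟩ := hbnd ρ hρ
    refine ⟨D, hD0, fun δ hδ z₀ l hzl z zd hsol => ?_⟩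
    obtain ⟨h0, -, ⟨K₂, hK₂⟩, hder, hvi⟩ := hsol
    set h : ℝ → ℝ := fun t => R (jVX (jZV (zd t))) + 1 / 2 * VV (jZV (zd t)) (jZV (zd t))
            + δ / 2 * A (zd t) (zd t) with hhdef
    have hh' : ∀ t, h t = r (zd t) + 1 / 2 * B δ (zd t) (zd t) := by
      intro t
      rw [hBa]
      simp only [hhdef, hrdef]
      ring
    have hh0 : ∀ t ≥ (0:ℝ), 0 ≤ h t := by
      intro t _
      rw [hh']
      have h1 := hr0 (zd t)
      have h2 := hBe δ hδ (zd t)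
      have h3 : 0 ≤ (δ * α) * ‖zd t‖ ^ 2 := by positivity
      linarith
    have hhc : ContinuousOn h (Set.Ici 0) := by
      have hc1 : Continuous fun y : Z => r y + 1 / 2 * B δ y y := by
        have : Continuous fun w => B δ w w := (B δ).continuous.clm_apply continuous_id
        fun_prop
      rw [show h = fun t => r (zd t) + 1 / 2 * B δ (zd t) (zd t) from funext hh']
      exact hc1.comp_continuousOn hK₂.continuousOn
    have hle : ∀ t ≥ (0:ℝ), h t ≤ - E' l (z t) (zd t) := by
      intro t ht
      have h1 := (hiff δ l (z t) (zd t) 0).1 (hvi t ht 0)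
      rw [hh']
      simp only [hr00, map_zero, zero_sub, map_neg, _root_.neg_apply, neg_neg, mul_zero,
        add_zero] at h1
      linarith
    have hen := aux_energy (E l) (E' l) (hE l) z zd hder h hhc hle
    rw [h0] at hen
    constructor
    · intro t ht
      refine (hD z₀ l hzl (z t)).1 ?_
      have h1 := hen t ht
      have h2 : 0 ≤ ∫ s in (0:ℝ)..t, h s :=
        intervalIntegral.integral_nonneg ht fun s hs => hh0 s hs.1
      linarith
    · exact aux_lint h hhc hh0 D fun T hT => (hen T hT).trans (hD z₀ l hzl (z T)).2
  refine ⟨fun δ hδ z₀ l => ?_, huni⟩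
  have hρ : 0 < ‖z₀‖ + ‖l‖ + 1 := by positivity
  have hβ : 0 < δ * α := by positivity
  obtain ⟨D, hD0, hD⟩ := hbnd _ hρ
  obtain ⟨z, zd, hz0, hzl, hzdl, hzd, hzv⟩ := aux_exist r hr hrc hr0 hr00 (B δ) (hBs δ) (δ * α)
    hβ (hBe δ hδ) (E l) (E' l) (hE l) (hEl l) z₀ D
    (fun z => (hD z₀ l (by linarith) z).1)
  have hsol : IsRegSol jZV jVX A VV R DF δ l z₀ z zd :=
    ⟨hz0, hzl, hzdl, hzd, fun t ht w => (hiff δ l (z t) (zd t) w).2 (hzv t ht w)⟩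
  refine ⟨z, zd, hsol, fun y yd hy => ?_⟩
  obtain ⟨Cρ, -, hC'⟩ := huni _ hρ
  have hb1 := (hC' δ hδ z₀ l (by linarith) z zd hsol).1
  have hb2 := (hC' δ hδ z₀ l (by linarith) y yd hy).1
  obtain ⟨hy0, -, -, hyd, hyv⟩ := hy
  exact aux_unique r hr (B δ) (hBs δ) (δ * α) hβ (hBe δ hδ) (E' l) (hEl l) y yd z zd
    (by rw [hy0, hz0]) hyd hzd
    (fun t ht w => (hiff δ l (y t) (yd t) w).1 (hyv t ht w)) hzv Cρ hb2 hb1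
end

section
/- (Initial velocity estimate for the regularized inclusion.) Under the stated assumptions on Z, V, X, A, 𝕍 and R, let δ > 0, v ∈ Z and ξ ∈ V* be such that −ξ − 𝕍v − δAv is a subgradient of R at v over Z, i.e. for all w ∈ Z, R(w) ≥ R(v) + ⟨−ξ − 𝕍v − δAv, w − v⟩. Then (⟨𝕍v,v⟩ + δ⟨Av,v⟩)^{1/2} ≤ dist_𝕍(−ξ, ∂R(0)). (Applied with v = ż_δ(0) and ξ = DI(z₀) − ℓ*, this is the estimate ν_δ(0) ≤ dist_𝕍(−DI(z₀) + ℓ*, ∂R(0)) for solutions of the δ-regularized system.) -/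
/-- The dual norm `‖ξ‖_{𝕍⁻¹} = ⟨ξ, 𝕍⁻¹ξ⟩^{1/2}` of a functional `ξ ∈ V*`,
characterized as `sup {ξ v : ⟨𝕍v,v⟩ ≤ 1}`. -/
noncomputable def dualNormV {V : Type*} [NormedAddCommGroup V]
    [InnerProductSpace ℝ V] (VV : V →L[ℝ] V →L[ℝ] ℝ) (ξ : V →L[ℝ] ℝ) : ℝ :=
  sSup {r : ℝ | ∃ v : V, VV v v ≤ 1 ∧ r = ξ v}

/-- The subdifferential `∂R(0) = {σ ∈ V* : ⟨σ,w⟩ ≤ R(w) ∀ w ∈ V}`. -/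
def subdiffR0 {V X : Type*} [NormedAddCommGroup V] [InnerProductSpace ℝ V]
    [NormedAddCommGroup X] [NormedSpace ℝ X]
    (R : X → ℝ) (jVX : V →L[ℝ] X) : Set (V →L[ℝ] ℝ) :=
  {σ : V →L[ℝ] ℝ | ∀ w : V, σ w ≤ R (jVX w)}

/-- `dist_𝕍(ξ, ∂R(0)) = inf {‖ξ − σ‖_{𝕍⁻¹} : σ ∈ ∂R(0)}`. -/
noncomputable def distV {V X : Type*} [NormedAddCommGroup V]
    [InnerProductSpace ℝ V] [NormedAddCommGroup X] [NormedSpace ℝ X]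
    (VV : V →L[ℝ] V →L[ℝ] ℝ) (R : X → ℝ) (jVX : V →L[ℝ] X)
    (ξ : V →L[ℝ] ℝ) : ℝ :=
  sInf {r : ℝ | ∃ σ ∈ subdiffR0 R jVX, r = dualNormV VV (ξ - σ)}

/-- Initial velocity estimate for the `δ`-regularized inclusion
(estimate `est.initialdatumdelta` of the paper): if
`−ξ − 𝕍v − δAv ∈ ∂R(v)` (over `Z`), then
`ν_δ := (⟨𝕍v,v⟩ + δ⟨Av,v⟩)^{1/2} ≤ dist_𝕍(−ξ, ∂R(0))`. -/
theorem stmt7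
    {Z V X : Type*}
    [NormedAddCommGroup Z] [InnerProductSpace ℝ Z] [CompleteSpace Z]
    [TopologicalSpace.SeparableSpace Z]
    [NormedAddCommGroup V] [InnerProductSpace ℝ V] [CompleteSpace V]
    [TopologicalSpace.SeparableSpace V]
    [NormedAddCommGroup X] [NormedSpace ℝ X]
    (jZV : Z →L[ℝ] V) (hjZV_inj : Function.Injective jZV)
    (hjZV_cpt : IsCompactOperator jZV)
    (jVX : V →L[ℝ] X) (hjVX_inj : Function.Injective jVX)
    (A : Z →L[ℝ] Z →L[ℝ] ℝ) (hA_symm : ∀ z w : Z, A z w = A w z)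
    (α : ℝ) (hα : 0 < α) (hA_ell : ∀ z : Z, α * ‖z‖ ^ 2 ≤ A z z)
    (VV : V →L[ℝ] V →L[ℝ] ℝ) (hVV_symm : ∀ u v : V, VV u v = VV v u)
    (γ : ℝ) (hγ : 0 < γ) (hVV_ell : ∀ v : V, γ * ‖v‖ ^ 2 ≤ VV v v)
    (R : X → ℝ) (hR_conv : ConvexOn ℝ Set.univ R) (hR_cont : Continuous R)
    (hR_hom : ∀ t : ℝ, 0 ≤ t → ∀ x : X, R (t • x) = t * R x)
    (c C : ℝ) (hc : 0 < c) (hC : 0 < C)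
    (hR_low : ∀ x : X, c * ‖x‖ ≤ R x) (hR_up : ∀ x : X, R x ≤ C * ‖x‖)
    (δ : ℝ) (hδ : 0 < δ) (v : Z) (ξ : V →L[ℝ] ℝ)
    (hsubgrad : ∀ w : Z, R (jVX (jZV w)) ≥ R (jVX (jZV v)) +
      (-ξ (jZV (w - v)) - VV (jZV v) (jZV (w - v)) - δ * A v (w - v))) :
    Real.sqrt (VV (jZV v) (jZV v) + δ * A v v) ≤ distV VV R jVX (-ξ) := by
  have h0 := hsubgrad 0
  have hR0 : R 0 = 0 := by simpa using hR_hom 0 le_rfl 0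
  simp only [map_zero, zero_sub, map_neg, hR0] at h0
  set u := jZV v with hu
  set N := VV u u + δ * A v v with hN
  have hAv : 0 ≤ δ * A v v :=
    mul_nonneg hδ.le (le_trans (by positivity) (hA_ell v))
  have hVu : 0 ≤ VV u u := le_trans (by positivity) (hVV_ell u)
  unfold distV
  refine le_csInf ?_ ?_
  · refine ⟨_, 0, ?_, rfl⟩
    intro w
    exact le_trans (by positivity) (hR_low (jVX w))
  rintro r ⟨σ, hσ, rfl⟩
  have hση := hσ u
  have hη : N ≤ (-ξ - σ) u := by
    simp only [ContinuousLinearMap.sub_apply, ContinuousLinearMap.neg_apply]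
    linarith
  generalize (-ξ - σ) = η at hη
  have hbdd : BddAbove {r : ℝ | ∃ v : V, VV v v ≤ 1 ∧ r = η v} := by
    refine ⟨‖η‖ * (1 + 1 / γ), ?_⟩
    rintro r ⟨w, hw, rfl⟩
    have h1 : ‖w‖ ^ 2 ≤ 1 / γ := by
      rw [le_div_iff₀ hγ]
      linarith [hVV_ell w]
    have h2 : ‖w‖ ≤ 1 + 1 / γ := by nlinarith [sq_nonneg (‖w‖ - 1)]
    calc η w ≤ ‖η w‖ := Real.le_norm_self _
      _ ≤ ‖η‖ * ‖w‖ := η.le_opNorm w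
      _ ≤ _ := by gcongr
  have hD0 : 0 ≤ dualNormV VV η := le_csSup hbdd ⟨0, by simp, by simp⟩
  by_cases hu0 : u = 0
  · rw [hu0, map_zero] at hη
    rw [Real.sqrt_eq_zero_of_nonpos hη]
    exact hD0
  have hpos : 0 < VV u u := by
    have := norm_pos_iff.mpr hu0
    exact lt_of_lt_of_le (by positivity) (hVV_ell u)
  set s := Real.sqrt (VV u u) with hs
  have hspos : 0 < s := Real.sqrt_pos.mpr hpos
  have hss : s * s = VV u u := Real.mul_self_sqrt hVu
  have hD : s⁻¹ * η u ≤ dualNormV VV η := by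
    refine le_csSup hbdd ⟨s⁻¹ • u, ?_, by simp⟩
    simp only [map_smul, ContinuousLinearMap.smul_apply, smul_eq_mul, ← hss]
    apply le_of_eq
    field_simp
  have hD2 : η u ≤ dualNormV VV η * s := by
    rw [inv_mul_le_iff₀ hspos] at hD
    linarith
  have hsN : s ≤ Real.sqrt N := Real.sqrt_le_sqrt (by linarith)
  have hNN : Real.sqrt N * Real.sqrt N = N := Real.mul_self_sqrt (by linarith)
  have hNp : 0 < Real.sqrt N := lt_of_lt_of_le hspos hsN
  have h3 : dualNormV VV η * s ≤ dualNormV VV η * Real.sqrt N := by gcongr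
  exact le_of_mul_le_mul_right (by linarith) hNp
end

section
/- (A priori estimates for the δ-regularized solutions, uniform in δ.) Under the stated assumptions on Z, V, X, A, 𝕍, R and F, for every ρ > 0 there exists C(ρ) > 0 such that for all δ ∈ (0,1], all ℓ* ∈ V* and all z₀ ∈ Z with DI(z₀) ∈ V* and ‖z₀‖_Z + ‖ℓ*‖_{V*} ≤ ρ, the unique solution z_δ ∈ W^{2,∞}((0,∞);Z) of the δ-regularized inclusion 0 ∈ ∂R_δ(ż_δ(t)) + DI(z_δ(t)) − ℓ* with z_δ(0) = z₀ satisfies ess sup_{t>0} ‖ż_δ(t)‖_V + √δ · ess sup_{t>0} ‖ż_δ(t)‖_Z + ∫₀^∞ ‖ż_δ(t)‖_Z dt ≤ C(ρ)·(1 + dist_𝕍(−DI(z₀) + ℓ*, ∂R(0))). -/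
open MeasureTheory

section helpers
open Filter Topology Set

lemma aux_lin {a b : ℝ} (h : ∀ s : ℝ, 0 < s → s ≤ 1 → 0 ≤ s * a + s ^ 2 * b) : 0 ≤ a := by
  by_contra ha
  push Not at ha
  have hb : 0 < |b| + 1 := by positivity
  have hd : 0 < -a + 2 * (|b| + 1) := by linarith
  have hs : 0 < -a / (-a + 2 * (|b| + 1)) := div_pos (by linarith) hd
  have hs1 : -a / (-a + 2 * (|b| + 1)) ≤ 1 := by rw [div_le_one hd]; linarith
  have := h _ hs hs1
  set s := -a / (-a + 2 * (|b| + 1)) with hsdef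
  have h2 : s * (-a + 2 * (|b| + 1)) = -a := by rw [hsdef]; field_simp
  have h3 : 0 ≤ a + s * b := by
    have : 0 ≤ s * (a + s * b) := by nlinarith
    exact nonneg_of_mul_nonneg_right this hs
  have h4 : s * b ≤ s * |b| := mul_le_mul_of_nonneg_left (le_abs_self b) hs.le
  nlinarith

lemma aux_cs {Z : Type*} [NormedAddCommGroup Z] [NormedSpace ℝ Z]
    (B : Z →L[ℝ] Z →L[ℝ] ℝ) (hs : ∀ u w, B u w = B w u) (hp : ∀ u, 0 ≤ B u u) (u w : Z) :
    B u w ≤ √(B u u) * √(B w w) := by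
  rw [← Real.sqrt_mul (hp u)]
  apply Real.le_sqrt_of_sq_le
  have h : ∀ x : ℝ, 0 ≤ B w w * (x * x) + (2 * B u w) * x + B u u := by
    intro x
    have := hp (u + x • w)
    simp only [map_add, map_smul, _root_.add_apply, _root_.smul_apply,
      smul_eq_mul, hs w u] at this
    linarith
  have := discrim_le_zero h
  unfold discrim at this
  nlinarith

lemma aux_vi {Z : Type*} [NormedAddCommGroup Z] [NormedSpace ℝ Z]
    (B : Z →L[ℝ] Z →L[ℝ] ℝ) (hs : ∀ u w, B u w = B w u)
    (r : Z → ℝ) (hadd : ∀ u w, r (u + w) ≤ r u + r w)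
    (hhom : ∀ s : ℝ, 0 ≤ s → ∀ u, r (s • u) = s * r u)
    (g : Z →L[ℝ] ℝ) (v : Z)
    (h : ∀ w, r v + 1 / 2 * B v v - g (w - v) ≤ r w + 1 / 2 * B w w) :
    r v + B v v + g v = 0 ∧ ∀ w, 0 ≤ r w + B v w + g w := by
  have h2 : ∀ w, 0 ≤ r w + B v w + g w := by
    intro w
    apply aux_lin (b := 1 / 2 * B w w)
    intro s hs0 hs1
    have := h (v + s • w)
    have h3 := hadd v (s • w)
    rw [hhom s hs0.le] at h3
    simp only [add_sub_cancel_left, map_add, map_smul, _root_.add_apply,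
      _root_.smul_apply, smul_eq_mul, hs w v] at this
    nlinarith
  refine ⟨le_antisymm ?_ (h2 v), h2⟩
  have : 0 ≤ -(r v + B v v + g v) := by
    apply aux_lin (b := 1 / 2 * B v v)
    intro s hs0 hs1
    have := h ((1 - s) • v)
    rw [hhom (1 - s) (by linarith)] at this
    have e : (1 - s) • v - v = (-s) • v := by module
    rw [e] at this
    simp only [map_smul, _root_.smul_apply, smul_eq_mul] at this
    nlinarith
  linarith

lemma aux_ehrling {Z V X : Type*} [NormedAddCommGroup Z] [NormedSpace ℝ Z]
    [NormedAddCommGroup V] [NormedSpace ℝ V] [NormedAddCommGroup X] [NormedSpace ℝ X]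
    (j : Z →L[ℝ] V) (hj : IsCompactOperator j) (k : V →L[ℝ] X) (hk : Function.Injective k)
    {ε : ℝ} (hε : 0 < ε) : ∃ K : ℝ, 0 < K ∧ ∀ z, ‖j z‖ ≤ ε * ‖z‖ + K * ‖k (j z)‖ := by
  have hcpt : IsCompact (closure (j '' Metric.closedBall 0 1)) :=
    hj.isCompact_closure_image_closedBall 1
  have hS : IsCompact (closure (j '' Metric.closedBall 0 1) ∩ {v | ε ≤ ‖v‖}) :=
    hcpt.inter_right (isClosed_le continuous_const continuous_norm)
  have hm : ∃ m : ℝ, 0 < m ∧ ∀ v ∈ closure (j '' Metric.closedBall 0 1) ∩ {v | ε ≤ ‖v‖}, m ≤ ‖k v‖ := by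
    rcases (closure (j '' Metric.closedBall 0 1) ∩ {v | ε ≤ ‖v‖}).eq_empty_or_nonempty with h | h
    · exact ⟨1, one_pos, by simp [h]⟩
    · obtain ⟨v, hv, hmin⟩ := hS.exists_isMinOn h (f := fun v => ‖k v‖) (by fun_prop)
      refine ⟨‖k v‖, ?_, fun w hw => hmin hw⟩
      rw [norm_pos_iff]
      intro h0
      have : v = 0 := hk (by simpa using h0)
      have h1 : ε ≤ ‖v‖ := hv.2
      rw [this, norm_zero] at h1
      linarith
  obtain ⟨m, hm0, hm⟩ := hm
  refine ⟨(‖j‖ + 1) / m, by positivity, ?_⟩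
  have unit : ∀ z, ‖z‖ = 1 → ‖j z‖ ≤ ε + (‖j‖ + 1) / m * ‖k (j z)‖ := by
    intro z hz
    by_cases h : ε ≤ ‖j z‖
    · have h1 := hm (j z) ⟨subset_closure ⟨z, by simp [hz], rfl⟩, h⟩
      have h2 : ‖j z‖ ≤ ‖j‖ := by simpa [hz] using j.le_opNorm z
      have h3 : ‖j‖ + 1 ≤ (‖j‖ + 1) / m * ‖k (j z)‖ := by
        rw [div_mul_eq_mul_div, le_div_iff₀ hm0]
        exact mul_le_mul_of_nonneg_left h1 (by positivity)
      linarith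
    · push Not at h
      have : 0 ≤ (‖j‖ + 1) / m * ‖k (j z)‖ := by positivity
      linarith
  intro z
  by_cases hz : z = 0
  · simp [hz]
  have hz' : 0 < ‖z‖ := norm_pos_iff.2 hz
  have := unit (‖z‖⁻¹ • z) (by rw [norm_smul, norm_inv, norm_norm, inv_mul_cancel₀ hz'.ne'])
  simp only [map_smul, norm_smul, norm_inv, norm_norm] at this
  have h2 := mul_le_mul_of_nonneg_left this hz'.le
  have e1 : ‖z‖ * (‖z‖⁻¹ * ‖j z‖) = ‖j z‖ := by field_simp
  have e2 : ‖z‖ * (ε + (‖j‖ + 1) / m * (‖z‖⁻¹ * ‖k (j z)‖))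
    = ε * ‖z‖ + (‖j‖ + 1) / m * ‖k (j z)‖ := by field_simp
  rw [e1, e2] at h2
  exact h2

lemma aux_dini {Z : Type*} [NormedAddCommGroup Z] [NormedSpace ℝ Z]
    (B : Z →L[ℝ] Z →L[ℝ] ℝ) (hs : ∀ u w, B u w = B w u)
    {β : ℝ} (hβ : 0 < β) (hp : ∀ u, β * ‖u‖ ^ 2 ≤ B u u)
    (g : ℝ → Z →L[ℝ] ℝ) (g' : Z →L[ℝ] ℝ) (v : ℝ → Z) (t : ℝ)
    (hv : ContinuousWithinAt v (Ici t) t) (hg : HasDerivWithinAt g g' (Ici t) t)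
    (hvi : ∀ s, t < s → B (v s - v t) (v s) ≤ - (g s - g t) (v s))
    (b : ℝ) (hb : - g' (v t) ≤ √(B (v t) (v t)) * b)
    (h0 : v t = 0 → 0 ≤ b ∧ g' = 0) :
    ∀ r, b < r → ∃ᶠ s in 𝓝[>] t, slope (fun s => √(B (v s) (v s))) t s < r := by
  intro r hr
  apply Eventually.frequently
  have hpos : ∀ u, 0 ≤ B u u := fun u => le_trans (by positivity) (hp u)
  have hv' : Tendsto v (𝓝[>] t) (𝓝 (v t)) := hv.tendsto.mono_left (nhdsWithin_mono _ Ioi_subset_Ici_self)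
  have hg' : Tendsto (slope g t) (𝓝[>] t) (𝓝 g') := by
    have := hasDerivWithinAt_iff_tendsto_slope.1 hg
    simpa using this
  have hy : Tendsto (fun s => √(B (v s) (v s))) (𝓝[>] t) (𝓝 (√(B (v t) (v t)))) := by
    have : Continuous fun u => √(B u u) := by fun_prop
    exact (this.tendsto _).comp hv'
  have key : ∀ s, t < s → slope (fun s => √(B (v s) (v s))) t s * √(B (v s) (v s))
      ≤ - slope g t s (v s) := by
    intro s hts
    have h1 := hvi s hts
    have h2 := aux_cs B hs hpos (v t) (v s)
    have h3 := Real.mul_self_sqrt (hpos (v s))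
    have h4 : 0 < s - t := by linarith
    have h5 : 0 < (s - t)⁻¹ := by positivity
    simp only [map_sub, _root_.sub_apply] at h1
    simp only [slope_def_module, smul_eq_mul, _root_.smul_apply,
      _root_.sub_apply]
    have h6 : (√(B (v s) (v s)) - √(B (v t) (v t))) * √(B (v s) (v s)) ≤ -(g s (v s) - g t (v s)) := by
      nlinarith
    have := mul_le_mul_of_nonneg_left h6 h5.le
    linarith
  by_cases hz : v t = 0
  · obtain ⟨hb0, hg0⟩ := h0 hz
    have hn : Tendsto (fun s => ‖slope g t s‖) (𝓝[>] t) (𝓝 0) := by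
      have := hg'.norm
      rwa [hg0, norm_zero] at this
    have hsb : 0 < √β := Real.sqrt_pos.2 hβ
    have hr0 : 0 < r := by linarith
    filter_upwards [hn.eventually_lt_const (mul_pos hr0 hsb), self_mem_nhdsWithin] with s hs1 hs2
    have hk := key s hs2
    rcases (Real.sqrt_nonneg (B (v s) (v s))).eq_or_lt with h | h
    · simp only [slope_def_module]
      rw [← h, hz]; simpa using hr0
    · have h1 : √β * ‖v s‖ ≤ √(B (v s) (v s)) := by
        apply Real.le_sqrt_of_sq_le
        rw [mul_pow, Real.sq_sqrt hβ.le]; exact hp _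
      have h2 : - slope g t s (v s) ≤ ‖slope g t s‖ * ‖v s‖ :=
        (neg_le_abs _).trans ((slope g t s).le_opNorm _)
      by_contra hcon
      push Not at hcon
      have h3 := mul_le_mul_of_nonneg_right hcon h.le
      have h4 : r * (√β * ‖v s‖) ≤ r * √(B (v s) (v s)) := mul_le_mul_of_nonneg_left h1 hr0.le
      have h5 : 0 < ‖v s‖ := by
        rw [norm_pos_iff]; intro h; simp [h] at *
      have h6 := mul_lt_mul_of_pos_right hs1 h5
      nlinarith
  · have hvp : 0 < ‖v t‖ := norm_pos_iff.2 hz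
    have hyp : 0 < √(B (v t) (v t)) := Real.sqrt_pos.2 (lt_of_lt_of_le (by positivity) (hp _))
    have hl : Tendsto (fun s => - slope g t s (v s)) (𝓝[>] t) (𝓝 (- g' (v t))) :=
      ((isBoundedBilinearMap_apply.continuous.tendsto (g', v t)).comp (hg'.prodMk_nhds hv')).neg
    have hr' : Tendsto (fun s => r * √(B (v s) (v s))) (𝓝[>] t) (𝓝 (r * √(B (v t) (v t)))) :=
      hy.const_mul r
    have hlt : - g' (v t) < r * √(B (v t) (v t)) := by nlinarith
    filter_upwards [hl.eventually_lt hr' hlt, hy.eventually_const_lt hyp, self_mem_nhdsWithin] with s h1 h2 h3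
    have := (key s h3).trans_lt h1
    exact lt_of_mul_lt_mul_right this h2.le

lemma aux_dual {V X : Type*} [NormedAddCommGroup V] [InnerProductSpace ℝ V]
    [NormedAddCommGroup X] [NormedSpace ℝ X]
    (VV : V →L[ℝ] V →L[ℝ] ℝ) {γ : ℝ} (hγ : 0 < γ) (hVV : ∀ v, γ * ‖v‖ ^ 2 ≤ VV v v)
    (R : X → ℝ) (hR : ∀ x, 0 ≤ R x) (k : V →L[ℝ] X) (η : V →L[ℝ] ℝ) (v : V) (y : ℝ) (hy : 0 ≤ y)
    (hvy : VV v v ≤ y ^ 2) (h : R (k v) + y ^ 2 ≤ η v) : y ≤ distV VV R k η := by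
  apply le_csInf
  · exact ⟨_, 0, fun w => by simpa using hR _, rfl⟩
  rintro _ ⟨σ, hσ, rfl⟩
  have hb : BddAbove {r : ℝ | ∃ v : V, VV v v ≤ 1 ∧ r = (η - σ) v} := by
    refine ⟨‖η - σ‖ * √(1 / γ), ?_⟩
    rintro _ ⟨w, hw, rfl⟩
    have h1 : ‖w‖ ≤ √(1 / γ) := by
      apply Real.le_sqrt_of_sq_le
      rw [le_div_iff₀ hγ]; linarith [hVV w]
    exact (le_abs_self _).trans (((η - σ).le_opNorm w).trans
      (mul_le_mul_of_nonneg_left h1 (norm_nonneg _)))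
  rcases hy.eq_or_lt with h0 | h0
  · rw [← h0]; exact le_csSup hb ⟨0, by simp, by simp⟩
  · have h1 : (η - σ) (y⁻¹ • v) ≤ dualNormV VV (η - σ) := by
      refine le_csSup hb ⟨y⁻¹ • v, ?_, rfl⟩
      simp only [map_smul, _root_.smul_apply, smul_eq_mul]
      rw [← mul_assoc, ← mul_inv, inv_mul_le_iff₀ (by positivity)]; nlinarith
    refine le_trans ?_ h1
    have h2 := hσ v
    simp only [map_smul, smul_eq_mul, _root_.sub_apply]
    rw [le_inv_mul_iff₀ h0]; nlinarith

lemma aux_energy_s8 {Z : Type*} [NormedAddCommGroup Z] [NormedSpace ℝ Z]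
    (B : Z →L[ℝ] Z →L[ℝ] ℝ) (hp : ∀ u, 0 ≤ B u u)
    (r : Z → ℝ) (hr0 : ∀ u, 0 ≤ r u)
    (g : ℝ → Z →L[ℝ] ℝ) (v : ℝ → Z) (E : ℝ → ℝ)
    (hE : ∀ t ≥ (0:ℝ), HasDerivWithinAt E (g t (v t)) (Ici 0) t)
    (h : ∀ t ≥ (0:ℝ), r (v t) + B (v t) (v t) + g t (v t) = 0) :
    ∀ t ≥ (0:ℝ), E t ≤ E 0 := by
  intro t ht
  have : AntitoneOn E (Ici 0) := by
    apply antitoneOn_of_deriv_nonpos (convex_Ici 0)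
    · exact fun t ht => (hE t ht).continuousWithinAt
    · intro t ht
      rw [interior_Ici] at ht
      exact ((hE t (le_of_lt ht)).mono interior_subset).differentiableWithinAt
    · intro t ht
      rw [interior_Ici] at ht
      have ht' : (0:ℝ) < t := ht
      rw [((hE t ht'.le).hasDerivAt (Ici_mem_nhds ht')).deriv]
      linarith [h t ht'.le, hp (v t), hr0 (v t)]
  exact this (by simp) ht ht

lemma aux_core {Z : Type*} [NormedAddCommGroup Z] [NormedSpace ℝ Z]
    (B : Z →L[ℝ] Z →L[ℝ] ℝ) (hs : ∀ u w, B u w = B w u)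
    {β : ℝ} (hβ : 0 < β) (hp : ∀ u, β * ‖u‖ ^ 2 ≤ B u u)
    (r : Z → ℝ) (hr0 : ∀ u, 0 ≤ r u)
    (g g' : ℝ → Z →L[ℝ] ℝ) (v : ℝ → Z) (E : ℝ → ℝ)
    (hE : ∀ t ≥ (0:ℝ), HasDerivWithinAt E (g t (v t)) (Ici 0) t)
    (hg : ∀ t ≥ (0:ℝ), HasDerivWithinAt g (g' t) (Ici 0) t)
    (hv : ContinuousOn v (Ici 0))
    (h1 : ∀ t ≥ (0:ℝ), r (v t) + B (v t) (v t) + g t (v t) = 0)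
    (h2 : ∀ t ≥ (0:ℝ), ∀ w, 0 ≤ r w + B (v t) w + g t w)
    {a c1 D k : ℝ} (ha : 0 < a) (hc1 : 0 < c1) (hD : 0 ≤ D)
    (hDr : ∀ u, r u ≤ D * √(B u u)) (hc1u : ∀ u, √(B u u) ≤ c1 * ‖u‖)
    (hg'b : ∀ t ≥ (0:ℝ), - g' t (v t) ≤ - a * ‖v t‖ ^ 2 + k * r (v t) * ‖v t‖)
    (hg'0 : ∀ t ≥ (0:ℝ), v t = 0 → g' t = 0) :
    ∀ t ≥ (0:ℝ), √(B (v t) (v t)) + a / (2 * c1) * (∫ s in (0:ℝ)..t, ‖v (max s 0)‖)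
      ≤ √(B (v 0) (v 0)) + k ^ 2 * D / (2 * a) * (E 0 - E t) := by
  intro T hT
  have hpos : ∀ u, 0 ≤ B u u := fun u => le_trans (by positivity) (hp u)
  have hw : Continuous fun s : ℝ => ‖v (max s 0)‖ :=
    (hv.comp_continuous (by fun_prop) (fun s => by simp)).norm
  have hN : ∀ t, HasDerivAt (fun t => ∫ s in (0:ℝ)..t, ‖v (max s 0)‖) ‖v (max t 0)‖ t :=
    fun t => (hw.integral_hasStrictDerivAt 0 t).hasDerivAt
  have hyc : ContinuousOn (fun s => √(B (v s) (v s))) (Icc 0 T) := by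
    have : Continuous fun u => √(B u u) := by fun_prop
    exact this.comp_continuousOn (hv.mono Icc_subset_Ici_self)
  set Bf : ℝ → ℝ := fun t => √(B (v 0) (v 0)) + k ^ 2 * D / (2 * a) * (E 0 - E t)
    - a / (2 * c1) * (∫ s in (0:ℝ)..t, ‖v (max s 0)‖) with hBf
  set Bf' : ℝ → ℝ := fun t => k ^ 2 * D / (2 * a) * (- g t (v t)) - a / (2 * c1) * ‖v (max t 0)‖ with hBf'
  have hBd : ∀ t ≥ (0:ℝ), HasDerivWithinAt Bf (Bf' t) (Ici 0) t := by
    intro t ht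
    have e1 := ((hE t ht).const_sub (E 0)).const_mul (k ^ 2 * D / (2 * a))
    have e2 := ((hN t).hasDerivWithinAt (s := Ici 0)).const_mul (a / (2 * c1))
    exact (e1.const_add _).sub e2
  have main := image_le_of_liminf_slope_right_le_deriv_boundary (f := fun s => √(B (v s) (v s)))
    (a := 0) (b := T) (B := Bf) (B' := Bf') hyc (by simp [hBf])
    (fun t ht => ((hBd t ht.1).continuousWithinAt).mono Icc_subset_Ici_self)
    (fun t ht => (hBd t ht.1).mono (Ici_subset_Ici.2 ht.1)) ?_
  · have := main (right_mem_Icc.2 hT)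
    simp only [hBf] at this
    linarith
  intro t ht
  have ht0 : (0:ℝ) ≤ t := ht.1
  have hsub : Ici t ⊆ Ici (0:ℝ) := Ici_subset_Ici.2 ht0
  apply aux_dini B hs hβ hp g (g' t) v t ((hv t ht0).mono hsub) ((hg t ht0).mono hsub)
  · intro s hts
    have e1 := h1 s (ht0.trans hts.le)
    have e2 := h2 t ht0 (v s)
    simp only [map_sub, _root_.sub_apply]
    linarith
  · refine (hg'b t ht0).trans ?_
    have e1 := h1 t ht0
    simp only [hBf', max_eq_left ht0]
    have hgv : - g t (v t) = r (v t) + B (v t) (v t) := by linarith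
    rw [hgv]
    have hDr := hDr (v t)
    have hc1u := hc1u (v t)
    have hr := hr0 (v t)
    have hB0 := hpos (v t)
    set y := √(B (v t) (v t)) with hy
    have hy0 : 0 ≤ y := Real.sqrt_nonneg _
    set n := ‖v t‖ with hn
    have hn0 : 0 ≤ n := norm_nonneg _
    set rr := r (v t)
    have i1 : k * rr * n - a / 2 * n ^ 2 ≤ k ^ 2 / (2 * a) * rr ^ 2 := by
      have : k ^ 2 / (2 * a) * rr ^ 2 - (k * rr * n - a / 2 * n ^ 2) = (k * rr - a * n) ^ 2 / (2 * a) := by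
        field_simp; ring
      have h' : 0 ≤ (k * rr - a * n) ^ 2 / (2 * a) := by positivity
      linarith
    have i2 : k ^ 2 / (2 * a) * rr ^ 2 ≤ k ^ 2 / (2 * a) * (rr * (D * y)) := by
      apply mul_le_mul_of_nonneg_left _ (by positivity)
      nlinarith
    have i3 : a / (2 * c1) * n * y ≤ a / (2 * c1) * n * (c1 * n) :=
      mul_le_mul_of_nonneg_left hc1u (by positivity)
    have i4 : a / (2 * c1) * n * (c1 * n) = a / 2 * n ^ 2 := by field_simp
    have i5 : 0 ≤ y * (k ^ 2 * D / (2 * a) * B (v t) (v t)) := by positivity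
    have i6 : k ^ 2 / (2 * a) * (rr * (D * y)) = y * (k ^ 2 * D / (2 * a) * rr) := by ring
    linarith
  · intro hz
    refine ⟨?_, hg'0 t ht0 hz⟩
    simp [hBf', max_eq_left ht0, hz]

lemma aux_final {Z V : Type*} [NormedAddCommGroup Z] [NormedSpace ℝ Z]
    [NormedAddCommGroup V] [NormedSpace ℝ V] (j : Z →L[ℝ] V)
    (v : ℝ → Z) (hv : ContinuousOn v (Ici 0)) {δ Q b1 b2 b3 : ℝ} 
    (hQ : 0 ≤ Q) (hb1 : 0 ≤ b1) (hb2 : 0 ≤ b2) (hb3 : 0 ≤ b3)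
    (h1 : ∀ t ≥ (0:ℝ), ‖j (v t)‖ ≤ b1 * Q) (h2 : ∀ t ≥ (0:ℝ), √δ * ‖v t‖ ≤ b2 * Q)
    (h3 : ∀ t ≥ (0:ℝ), (∫ s in (0:ℝ)..t, ‖v (max s 0)‖) ≤ b3 * Q) :
    eLpNorm (fun t => j (v t)) ⊤ (volume.restrict (Set.Ioi 0)) +
          ENNReal.ofReal (Real.sqrt δ) *
            eLpNorm v ⊤ (volume.restrict (Set.Ioi 0)) +
          (∫⁻ t in Set.Ioi (0:ℝ), (‖v t‖₊ : ENNReal)) ≤ ENNReal.ofReal ((b1 + b2 + b3) * Q) := by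
  have hae : ∀ {p : ℝ → Prop}, (∀ t ≥ (0:ℝ), p t) → ∀ᵐ t ∂(volume.restrict (Set.Ioi (0:ℝ))), p t := by
    intro p hp
    filter_upwards [ae_restrict_mem measurableSet_Ioi] with t ht using hp t (le_of_lt ht)
  rw [add_mul, add_mul, ENNReal.ofReal_add (by positivity) (by positivity),
    ENNReal.ofReal_add (by positivity) (by positivity)]
  gcongr
  · rw [eLpNorm_exponent_top]
    exact eLpNormEssSup_le_of_ae_bound (hae h1)
  · have : ENNReal.ofReal (√δ) * eLpNorm v ⊤ (volume.restrict (Set.Ioi 0))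
      = eLpNorm (√δ • v) ⊤ (volume.restrict (Set.Ioi 0)) := by
      rw [eLpNorm_const_smul, Real.enorm_of_nonneg (Real.sqrt_nonneg _)]
    rw [this, eLpNorm_exponent_top]
    apply eLpNormEssSup_le_of_ae_bound (hae _)
    intro t ht
    rw [Pi.smul_apply, norm_smul, Real.norm_of_nonneg (Real.sqrt_nonneg _)]
    exact h2 t ht
  · have hw : Continuous fun s : ℝ => v (max s 0) :=
      (hv.comp_continuous (by fun_prop) (fun s => by simp))
    have e : (∫⁻ t in Set.Ioi (0:ℝ), (‖v t‖₊ : ENNReal))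
      = ∫⁻ t in Set.Ioi (0:ℝ), (‖v (max t 0)‖₊ : ENNReal) := by
      apply setLIntegral_congr_fun measurableSet_Ioi
      intro t ht
      simp only
      rw [max_eq_left (le_of_lt ht)]
    rw [e]
    have hint : IntegrableOn (fun t : ℝ => v (max t 0)) (Ioi 0) := by
      apply integrableOn_Ioi_of_intervalIntegral_norm_bounded (b3 * Q) 0
        (l := atTop) (b := fun n : ℝ => n) _ tendsto_id
      · filter_upwards [eventually_ge_atTop (0:ℝ)] with t ht using h3 t ht
      · intro n
        exact hw.integrableOn_Ioc
    have e2 : (∫⁻ t in Set.Ioi (0:ℝ), (‖v (max t 0)‖₊ : ENNReal))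
      = ENNReal.ofReal (∫ t in Set.Ioi (0:ℝ), ‖v (max t 0)‖) := by
      rw [ofReal_integral_norm_eq_lintegral_enorm hint]; rfl
    rw [e2]
    apply ENNReal.ofReal_le_ofReal
    refine le_of_tendsto (intervalIntegral_tendsto_integral_Ioi 0 hint.norm tendsto_id) ?_
    filter_upwards [eventually_ge_atTop (0:ℝ)] with t ht using h3 t ht

lemma aux_Fbound {Z V : Type*} [NormedAddCommGroup Z] [NormedSpace ℝ Z]
    [NormedAddCommGroup V] [NormedSpace ℝ V] (j : Z →L[ℝ] V)
    (F : Z → ℝ) (DF : Z → V →L[ℝ] ℝ)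
    (hDF : ∀ z : Z, HasFDerivAt F ((DF z).comp j) z)
    (D2F : Z → Z →L[ℝ] V →L[ℝ] ℝ) (hD2F : ∀ z : Z, HasFDerivAt DF (D2F z) z)
    {C₀ q : ℝ} (hC₀ : 0 < C₀) (hq : 1 ≤ q)
    (hb : ∀ z v : Z, ‖D2F z v‖ ≤ C₀ * (1 + ‖z‖ ^ q) * ‖v‖) {ρ : ℝ} (hρ : 0 < ρ) :
    ∃ M : ℝ, 0 ≤ M ∧ ∀ z, ‖z‖ ≤ ρ → F z ≤ M := by
  have hmem : (0 : Z) ∈ Metric.closedBall (0 : Z) ρ := by simp [hρ.le]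
  have hcv := convex_closedBall (0 : Z) ρ
  have s1 : ∀ z ∈ Metric.closedBall (0 : Z) ρ, ‖DF z‖ ≤ ‖DF 0‖ + C₀ * (1 + ρ ^ q) * ρ := by
    intro z hz
    have := hcv.norm_image_sub_le_of_norm_hasFDerivWithin_le (f := DF) (f' := D2F)
      (C := C₀ * (1 + ρ ^ q))
      (fun x _ => (hD2F x).hasFDerivWithinAt) (fun x hx => by
        apply ContinuousLinearMap.opNorm_le_bound _ (by positivity)
        intro v
        refine (hb x v).trans ?_
        have : ‖x‖ ≤ ρ := by simpa using hx
        gcongr) hmem hz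
    have hz' : ‖z‖ ≤ ρ := by simpa using hz
    rw [sub_zero] at this
    have h2 := norm_sub_norm_le (DF z) (DF 0)
    have h3 : C₀ * (1 + ρ ^ q) * ‖z‖ ≤ C₀ * (1 + ρ ^ q) * ρ := by gcongr
    linarith
  set D := ‖DF 0‖ + C₀ * (1 + ρ ^ q) * ρ with hD
  have hD0 : 0 ≤ D := by positivity
  refine ⟨|F 0| + D * ‖j‖ * ρ, by positivity, ?_⟩
  intro z hz'
  have hz : z ∈ Metric.closedBall (0 : Z) ρ := by simpa using hz'
  have := hcv.norm_image_sub_le_of_norm_hasFDerivWithin_le (f := F) (f' := fun z => (DF z).comp j)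
      (C := D * ‖j‖)
      (fun x _ => (hDF x).hasFDerivWithinAt) (fun x hx => by
        refine (ContinuousLinearMap.opNorm_comp_le _ _).trans ?_
        have := s1 x hx
        gcongr) hmem hz
  rw [sub_zero] at this
  have h2 := le_abs_self (F z - F 0)
  rw [← Real.norm_eq_abs] at h2
  have h3 : D * ‖j‖ * ‖z‖ ≤ D * ‖j‖ * ρ := by gcongr
  linarith [le_abs_self (F 0)]

end helpers

set_option maxHeartbeats 2000000 in
/-- A priori estimates for the `δ`-regularized solutions, uniform
in `δ` (Proposition `prop.regestregularizedRplus` of the paper): for every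
`ρ > 0` there is `C(ρ) > 0` such that for all `δ ∈ (0,1]`, all data
`(z₀, ℓ*)` with `DI(z₀) ∈ V*` and `‖z₀‖_Z + ‖ℓ*‖_{V*} ≤ ρ`, the solution
`z_δ` satisfies
`ess sup ‖ż_δ‖_V + √δ · ess sup ‖ż_δ‖_Z + ∫₀^∞ ‖ż_δ‖_Z
  ≤ C(ρ)(1 + dist_𝕍(−DI(z₀) + ℓ*, ∂R(0)))`. -/
theorem stmt8
    {Z V X : Type*}
    [NormedAddCommGroup Z] [InnerProductSpace ℝ Z] [CompleteSpace Z]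
    [TopologicalSpace.SeparableSpace Z]
    [NormedAddCommGroup V] [InnerProductSpace ℝ V] [CompleteSpace V]
    [TopologicalSpace.SeparableSpace V]
    [NormedAddCommGroup X] [NormedSpace ℝ X]
    (jZV : Z →L[ℝ] V) (hjZV_inj : Function.Injective jZV)
    (hjZV_cpt : IsCompactOperator jZV)
    (jVX : V →L[ℝ] X) (hjVX_inj : Function.Injective jVX)
    (A : Z →L[ℝ] Z →L[ℝ] ℝ) (hA_symm : ∀ z w : Z, A z w = A w z)
    (α : ℝ) (hα : 0 < α) (hA_ell : ∀ z : Z, α * ‖z‖ ^ 2 ≤ A z z)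
    (VV : V →L[ℝ] V →L[ℝ] ℝ) (hVV_symm : ∀ u v : V, VV u v = VV v u)
    (γ : ℝ) (hγ : 0 < γ) (hVV_ell : ∀ v : V, γ * ‖v‖ ^ 2 ≤ VV v v)
    (R : X → ℝ) (hR_conv : ConvexOn ℝ Set.univ R) (hR_cont : Continuous R)
    (hR_hom : ∀ t : ℝ, 0 ≤ t → ∀ x : X, R (t • x) = t * R x)
    (c C : ℝ) (hc : 0 < c) (hC : 0 < C)
    (hR_low : ∀ x : X, c * ‖x‖ ≤ R x) (hR_up : ∀ x : X, R x ≤ C * ‖x‖)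
    (F : Z → ℝ) (hF_nonneg : ∀ z : Z, 0 ≤ F z)
    (DF : Z → V →L[ℝ] ℝ)
    (hDF : ∀ z : Z, HasFDerivAt F ((DF z).comp jZV) z)
    (D2F : Z → Z →L[ℝ] V →L[ℝ] ℝ)
    (hD2F : ∀ z : Z, HasFDerivAt DF (D2F z) z)
    (hD2F_cont : Continuous D2F)
    (C₀ q : ℝ) (hC₀ : 0 < C₀) (hq : 1 ≤ q)
    (hD2F_bound : ∀ z v : Z, ‖D2F z v‖ ≤ C₀ * (1 + ‖z‖ ^ q) * ‖v‖) :
    ∀ ρ > (0:ℝ), ∃ Cρ > (0:ℝ), ∀ δ : ℝ, 0 < δ → δ ≤ 1 →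
      ∀ (lstar : V →L[ℝ] ℝ) (z₀ : Z) (ξ₀ : V →L[ℝ] ℝ),
      -- DI(z₀) ∈ V*: ξ₀ is the V*-extension of DI(z₀) = A z₀ + DF z₀
      (∀ w : Z, ξ₀ (jZV w) = A z₀ w + DF z₀ (jZV w)) →
      ‖z₀‖ + ‖lstar‖ ≤ ρ →
      ∀ (z zd : ℝ → Z),
        IsRegSol jZV jVX A VV R DF δ lstar z₀ z zd →
        eLpNorm (fun t => jZV (zd t)) ⊤ (volume.restrict (Set.Ioi 0)) +
          ENNReal.ofReal (Real.sqrt δ) *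
            eLpNorm zd ⊤ (volume.restrict (Set.Ioi 0)) +
          (∫⁻ t in Set.Ioi (0:ℝ), (‖zd t‖₊ : ENNReal)) ≤
        ENNReal.ofReal (Cρ * (1 + distV VV R jVX (lstar - ξ₀))) := by
  intro ρ hρ
  obtain ⟨F0, hF00, hF0⟩ := aux_Fbound jZV F DF hDF D2F hD2F hC₀ hq hD2F_bound hρ
  set J := ‖jZV‖ with hJ
  have hJ0 : 0 ≤ J := norm_nonneg _
  set E1 : ℝ := 1 / 2 * ‖A‖ * ρ ^ 2 + F0 + ρ * J * ρ with hE1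
  have hE10 : 0 ≤ E1 := by positivity
  set M : ℝ := 1 + 2 / α * (E1 + ρ * J) with hM
  have hM1 : 1 ≤ M := by
    have : 0 ≤ 2 / α * (E1 + ρ * J) := by positivity
    linarith
  have hM0 : 0 ≤ M := by linarith
  set L : ℝ := C₀ * (1 + M ^ q) with hL
  have hL0 : 0 < L := by positivity
  obtain ⟨K, hK0, hK⟩ := aux_ehrling jZV hjZV_cpt jVX hjVX_inj (ε := α / (2 * L)) (by positivity)
  set c1 : ℝ := √(‖VV‖ * J ^ 2 + ‖A‖ + 1) with hc1
  have hc10 : 0 < c1 := by positivity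
  set D : ℝ := C * ‖jVX‖ / √γ with hD
  have hD0 : 0 ≤ D := by positivity
  set k : ℝ := L * (K / c) with hk
  set P : ℝ := k ^ 2 * D / (2 * (α / 2)) with hP
  have hP0 : 0 ≤ P := by positivity
  set M2 : ℝ := E1 + ρ * J * M with hM2
  have hM20 : 0 ≤ M2 := by positivity
  set a' : ℝ := (α / 2) / (2 * c1) with ha'
  have ha'0 : 0 < a' := by positivity
  have hsγ : 0 < √γ := Real.sqrt_pos.2 hγ
  have hsα : 0 < √α := Real.sqrt_pos.2 hα
  refine ⟨(1 / √γ + 1 / √α + 1 / a') * (1 + P * M2), by positivity, ?_⟩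
  intro δ hδ hδ1 lstar z₀ ξ₀ hξ₀ hz₀ z zd ⟨hz0, ⟨K₁, hK₁⟩, ⟨K₂, hK₂⟩, hzd, hvi⟩
  have hz₀ρ : ‖z₀‖ ≤ ρ := by linarith [norm_nonneg lstar]
  have hlρ : ‖lstar‖ ≤ ρ := by linarith [norm_nonneg z₀]
  have hv : ContinuousOn zd (Set.Ici 0) := hK₂.continuousOn
  have hR0 : ∀ x, 0 ≤ R x := fun x => le_trans (by positivity) (hR_low x)
  set r : Z → ℝ := fun u => R (jVX (jZV u)) with hr
  have hr0 : ∀ u, 0 ≤ r u := fun u => hR0 _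
  have hhom : ∀ s : ℝ, 0 ≤ s → ∀ u, r (s • u) = s * r u := by
    intro s hs u
    simp only [hr, map_smul]
    exact hR_hom s hs _
  have hadd : ∀ u w, r (u + w) ≤ r u + r w := by
    intro u w
    have h1 := hR_conv.2 (Set.mem_univ (jVX (jZV ((2:ℝ) • u)))) (Set.mem_univ (jVX (jZV ((2:ℝ) • w))))
      (show (0:ℝ) ≤ 1 / 2 by norm_num) (show (0:ℝ) ≤ 1 / 2 by norm_num) (by norm_num)
    have e : (1 / 2 : ℝ) • jVX (jZV ((2:ℝ) • u)) + (1 / 2 : ℝ) • jVX (jZV ((2:ℝ) • w))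
        = jVX (jZV (u + w)) := by
      simp only [map_smul, map_add]; module
    rw [e] at h1
    have h2 := hhom 2 (by norm_num) u
    have h3 := hhom 2 (by norm_num) w
    simp only [hr, smul_eq_mul] at h1 h2 h3 ⊢
    rw [h2, h3] at h1
    linarith
  set B : Z →L[ℝ] Z →L[ℝ] ℝ := VV.bilinearComp jZV jZV + δ • A with hB
  have hBe : ∀ u w, B u w = VV (jZV u) (jZV w) + δ * A u w := by
    intro u w; simp [hB]
  have hBs : ∀ u w, B u w = B w u := by
    intro u w; rw [hBe, hBe, hVV_symm, hA_symm]
  have hVVp : ∀ v, 0 ≤ VV v v := fun v => le_trans (by positivity) (hVV_ell v)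
  have hAp : ∀ v, 0 ≤ A v v := fun v => le_trans (by positivity) (hA_ell v)
  have hBp : ∀ u, δ * α * ‖u‖ ^ 2 ≤ B u u := by
    intro u; rw [hBe]
    have := mul_le_mul_of_nonneg_left (hA_ell u) hδ.le
    linarith [hVVp (jZV u)]
  have hBp0 : ∀ u, 0 ≤ B u u := fun u => le_trans (by positivity) (hBp u)
  set G : Z → Z →L[ℝ] ℝ := fun x => A x + (DF x).comp jZV - lstar.comp jZV with hG
  have hGe : ∀ x w, G x w = A x w + DF x (jZV w) - lstar (jZV w) := fun x w => rfl
  set G' : Z → Z →L[ℝ] Z →L[ℝ] ℝ := fun x =>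
    A + ((ContinuousLinearMap.compL ℝ Z V ℝ).flip jZV).comp (D2F x) with hG'
  have hG'e : ∀ x u w, G' x u w = A u w + D2F x u (jZV w) := fun x u w => rfl
  have hGd : ∀ x, HasFDerivAt G (G' x) x := by
    intro x
    have e1 := ((ContinuousLinearMap.compL ℝ Z V ℝ).flip jZV).hasFDerivAt.comp x (hD2F x)
    exact (A.hasFDerivAt.add e1).sub_const _
  have hvi2 : ∀ t ≥ (0:ℝ), r (zd t) + B (zd t) (zd t) + G (z t) (zd t) = 0 ∧
      ∀ w, 0 ≤ r w + B (zd t) w + G (z t) w := by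
    intro t ht
    apply aux_vi B hBs r hadd hhom
    intro w
    have := hvi t ht w
    rw [hBe, hBe, hGe]
    simp only [hr]
    linarith
  set E : ℝ → ℝ := fun t => 1 / 2 * A (z t) (z t) + F (z t) - lstar (jZV (z t)) with hE
  have hEd : ∀ t ≥ (0:ℝ), HasDerivWithinAt E (G (z t) (zd t)) (Set.Ici 0) t := by
    intro t ht
    have hz' := hzd t ht
    have e1 : HasDerivWithinAt (fun t => A (z t) (z t)) (A (zd t) (z t) + A (z t) (zd t)) (Set.Ici 0) t :=
      (A.hasFDerivAt.comp_hasDerivWithinAt t hz').clm_apply hz'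
    have e2 := (hDF (z t)).comp_hasDerivWithinAt t hz'
    have e3 := (lstar.comp jZV).hasFDerivAt.comp_hasDerivWithinAt t hz'
    have := ((e1.const_mul (1 / 2)).add e2).sub e3
    refine this.congr_deriv ?_
    rw [hGe, hA_symm (zd t) (z t)]
    simp only [ContinuousLinearMap.comp_apply]
    ring
  have hEdec := aux_energy_s8 B hBp0 r hr0 (fun t => G (z t)) zd E hEd (fun t ht => (hvi2 t ht).1)
  have hlJ : ∀ x, |lstar (jZV x)| ≤ ρ * J * ‖x‖ := by
    intro x
    calc |lstar (jZV x)| ≤ ‖lstar‖ * ‖jZV x‖ := lstar.le_opNorm _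
      _ ≤ ρ * (J * ‖x‖) := by gcongr; exact jZV.le_opNorm x
      _ = _ := by ring
  have hE0 : E 0 ≤ E1 := by
    simp only [hE, hz0, hE1]
    have i1 : A z₀ z₀ ≤ ‖A‖ * ρ ^ 2 := by
      calc A z₀ z₀ ≤ ‖A z₀ z₀‖ := le_abs_self _
        _ ≤ ‖A‖ * ‖z₀‖ * ‖z₀‖ := A.le_opNorm₂ _ _
        _ ≤ ‖A‖ * ρ * ρ := by gcongr
        _ = _ := by ring
    have i2 := hF0 z₀ hz₀ρ
    have i3 := neg_le_abs (lstar (jZV z₀))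
    have i4 := hlJ z₀
    have i5 : ρ * J * ‖z₀‖ ≤ ρ * J * ρ := by gcongr
    linarith
  have hzM : ∀ t ≥ (0:ℝ), ‖z t‖ ≤ M := by
    intro t ht
    have i1 := (hEdec t ht).trans hE0
    simp only [hE] at i1
    have i2 := hA_ell (z t)
    have i3 := hF_nonneg (z t)
    have i4 := (le_abs_self _).trans (hlJ (z t))
    have i5 : α / 2 * ‖z t‖ ^ 2 ≤ E1 + ρ * J * ‖z t‖ := by linarith
    by_contra hcon
    push Not at hcon
    have i6 : 1 ≤ ‖z t‖ := by linarith
    have i7 : α / 2 * ‖z t‖ * ‖z t‖ ≤ (E1 + ρ * J) * ‖z t‖ := by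
      have i10 := mul_le_mul_of_nonneg_left i6 hE10
      linarith
    have i8 : α / 2 * ‖z t‖ ≤ E1 + ρ * J := le_of_mul_le_mul_right i7 (by linarith)
    have i9 : ‖z t‖ ≤ 2 / α * (E1 + ρ * J) := by
      rw [div_mul_eq_mul_div, le_div_iff₀ hα]; linarith
    linarith
  have hEdiff : ∀ t ≥ (0:ℝ), E 0 - E t ≤ M2 := by
    intro t ht
    have i4 := (le_abs_self _).trans (hlJ (z t))
    have i5 : ρ * J * ‖z t‖ ≤ ρ * J * M := by gcongr; exact hzM t ht
    have i6 := hAp (z t)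
    have i7 := hF_nonneg (z t)
    have : - (ρ * J * M) ≤ E t := by simp only [hE]; linarith
    simp only [hM2]; linarith
  have hyV : ∀ u, √γ * ‖jZV u‖ ≤ √(B u u) := by
    intro u
    apply Real.le_sqrt_of_sq_le
    rw [mul_pow, Real.sq_sqrt hγ.le, hBe]
    linarith [hVV_ell (jZV u), mul_nonneg hδ.le (hAp u)]
  have hyZ : ∀ u, √α * (√δ * ‖u‖) ≤ √(B u u) := by
    intro u
    apply Real.le_sqrt_of_sq_le
    rw [mul_pow, mul_pow, Real.sq_sqrt hα.le, Real.sq_sqrt hδ.le]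
    linarith [hBp u]
  have hDr : ∀ u, r u ≤ D * √(B u u) := by
    intro u
    calc r u ≤ C * ‖jVX (jZV u)‖ := hR_up _
      _ ≤ C * (‖jVX‖ * ‖jZV u‖) := by gcongr; exact jVX.le_opNorm _
      _ = D * (√γ * ‖jZV u‖) := by rw [hD]; field_simp
      _ ≤ D * √(B u u) := by gcongr; exact hyV u
  have hc1u : ∀ u, √(B u u) ≤ c1 * ‖u‖ := by
    intro u
    apply Real.sqrt_le_iff.2 ⟨by positivity, ?_⟩
    rw [mul_pow, hc1, Real.sq_sqrt (by positivity), hBe]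
    have i1 : VV (jZV u) (jZV u) ≤ ‖VV‖ * J ^ 2 * ‖u‖ ^ 2 := by
      calc VV (jZV u) (jZV u) ≤ ‖VV (jZV u) (jZV u)‖ := le_abs_self _
        _ ≤ ‖VV‖ * ‖jZV u‖ * ‖jZV u‖ := VV.le_opNorm₂ _ _
        _ ≤ ‖VV‖ * (J * ‖u‖) * (J * ‖u‖) := by
            have := jZV.le_opNorm u
            gcongr
        _ = _ := by ring
    have i2 : A u u ≤ ‖A‖ * ‖u‖ ^ 2 := by
      calc A u u ≤ ‖A u u‖ := le_abs_self _
        _ ≤ ‖A‖ * ‖u‖ * ‖u‖ := A.le_opNorm₂ _ _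
        _ = _ := by ring
    have i3 : δ * A u u ≤ A u u := mul_le_of_le_one_left (hAp u) hδ1
    linarith [sq_nonneg ‖u‖]
  have core := aux_core B hBs (β := δ * α) (by positivity) hBp r hr0 (fun t => G (z t))
    (fun t => G' (z t) (zd t)) zd E hEd
    (fun t ht => (hGd (z t)).comp_hasDerivWithinAt t (hzd t ht)) hv
    (fun t ht => (hvi2 t ht).1) (fun t ht => (hvi2 t ht).2)
    (a := α / 2) (c1 := c1) (D := D) (k := k) (by positivity) hc10 hD0 hDr hc1u ?_ ?_
  rotate_left
  · intro t ht
    rw [hG'e]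
    have i1 := hA_ell (zd t)
    have i2 : - D2F (z t) (zd t) (jZV (zd t)) ≤ L * ‖zd t‖ * ‖jZV (zd t)‖ := by
      calc - D2F (z t) (zd t) (jZV (zd t)) ≤ ‖D2F (z t) (zd t) (jZV (zd t))‖ := neg_le_abs _
        _ ≤ ‖D2F (z t) (zd t)‖ * ‖jZV (zd t)‖ := ContinuousLinearMap.le_opNorm _ _
        _ ≤ (C₀ * (1 + ‖z t‖ ^ q) * ‖zd t‖) * ‖jZV (zd t)‖ := by gcongr; exact hD2F_bound _ _
        _ ≤ _ := by
          have := hzM t ht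
          rw [hL]
          gcongr
    have i3 : ‖jVX (jZV (zd t))‖ ≤ r (zd t) / c := by
      rw [le_div_iff₀ hc]; linarith [hR_low (jVX (jZV (zd t)))]
    have i4 : ‖jZV (zd t)‖ ≤ α / (2 * L) * ‖zd t‖ + K * (r (zd t) / c) :=
      (hK (zd t)).trans (by gcongr)
    have i5 : L * ‖zd t‖ * ‖jZV (zd t)‖ ≤ L * ‖zd t‖ * (α / (2 * L) * ‖zd t‖ + K * (r (zd t) / c)) := by
      gcongr
    have i6 : L * ‖zd t‖ * (α / (2 * L) * ‖zd t‖ + K * (r (zd t) / c))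
      = α / 2 * ‖zd t‖ ^ 2 + k * r (zd t) * ‖zd t‖ := by rw [hk]; field_simp
    linarith
  · intro t ht h0
    simp [h0]
  set d := distV VV R jVX (lstar - ξ₀) with hd
  have hy0 : √(B (zd 0) (zd 0)) ≤ d := by
    apply aux_dual VV hγ hVV_ell R hR0 jVX _ (jZV (zd 0)) _ (Real.sqrt_nonneg _)
    · rw [Real.sq_sqrt (hBp0 _), hBe]
      linarith [mul_nonneg hδ.le (hAp (zd 0))]
    · rw [Real.sq_sqrt (hBp0 _)]
      have i1 := (hvi2 0 le_rfl).1
      rw [hz0, hGe] at i1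
      have i2 := hξ₀ (zd 0)
      simp only [_root_.sub_apply]
      simp only [hr] at i1
      linarith
  have hd0 : 0 ≤ d := (Real.sqrt_nonneg _).trans hy0
  set Q := d + P * M2 with hQ
  have hQ0 : 0 ≤ Q := by positivity
  have hN0 : ∀ t ≥ (0:ℝ), 0 ≤ ∫ s in (0:ℝ)..t, ‖zd (max s 0)‖ := fun t ht =>
    intervalIntegral.integral_nonneg ht (fun _ _ => norm_nonneg _)
  have core2 : ∀ t ≥ (0:ℝ), √(B (zd t) (zd t)) + a' * (∫ s in (0:ℝ)..t, ‖zd (max s 0)‖) ≤ Q := by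
    intro t ht
    have := core t ht
    have i2 := mul_le_mul_of_nonneg_left (hEdiff t ht) hP0
    linarith
  have hyQ : ∀ t ≥ (0:ℝ), √(B (zd t) (zd t)) ≤ Q := fun t ht => by
    linarith [core2 t ht, mul_nonneg ha'0.le (hN0 t ht)]
  refine (aux_final jZV zd hv (δ := δ) (Q := Q) (b1 := 1 / √γ) (b2 := 1 / √α) (b3 := 1 / a') hQ0
    (by positivity) (by positivity) (by positivity) ?_ ?_ ?_).trans ?_
  · intro t ht
    rw [one_div_mul_eq_div, le_div_iff₀ hsγ]
    linarith [hyQ t ht, hyV (zd t)]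
  · intro t ht
    rw [one_div_mul_eq_div, le_div_iff₀ hsα]
    linarith [hyQ t ht, hyZ (zd t)]
  · intro t ht
    rw [one_div_mul_eq_div, le_div_iff₀ ha'0]
    linarith [core2 t ht, Real.sqrt_nonneg (B (zd t) (zd t))]
  · apply ENNReal.ofReal_le_ofReal
    rw [mul_assoc]
    apply mul_le_mul_of_nonneg_left _ (by positivity)
    have : 0 ≤ P * M2 := by positivity
    linarith [mul_nonneg this hd0]
end

section
/- (Lower semicontinuity of products under weak L¹ convergence.) Let I ⊂ ℝ be a bounded interval and let f, fₙ : I → [0,∞) be measurable with liminf_{n→∞} fₙ(s) ≥ f(s) for almost all s ∈ I, and let g, gₙ ∈ L¹(I) be nonnegative with gₙ ⇀ g weakly in L¹(I), i.e. ∫_I gₙ(s)φ(s) ds → ∫_I g(s)φ(s) ds for every φ ∈ L^∞(I). Then liminf_{n→∞} ∫_I fₙ(s) gₙ(s) ds ≥ ∫_I f(s) g(s) ds (with both sides valued in [0,∞]). -/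
open MeasureTheory Filter

/-- Lower semicontinuity of products under weak `L¹`
convergence (Lemma `app_prop:lsc2`, cited from [MRS12, Lemma 4.3]): on a
bounded interval `I`, if `fₙ, f ≥ 0` are measurable with `liminf fₙ ≥ f`
a.e., and `gₙ, g ≥ 0` are integrable with `gₙ ⇀ g` weakly in `L¹(I)`, then
`liminf ∫_I fₙ gₙ ≥ ∫_I f g`, both sides valued in `[0,∞]`. -/
theorem stmt14
    (I : Set ℝ) (hI_meas : MeasurableSet I)
    (hI_bdd : Bornology.IsBounded I) (hI_conn : I.OrdConnected)
    (f : ℝ → ℝ) (fn : ℕ → ℝ → ℝ)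
    (hf_meas : Measurable f) (hfn_meas : ∀ n, Measurable (fn n))
    (hf_nonneg : ∀ s, 0 ≤ f s) (hfn_nonneg : ∀ n s, 0 ≤ fn n s)
    (hliminf : ∀ᵐ s : ℝ ∂volume, s ∈ I → f s ≤ liminf (fun n => fn n s) atTop)
    (g : ℝ → ℝ) (gn : ℕ → ℝ → ℝ)
    (hg_nonneg : ∀ s, 0 ≤ g s) (hgn_nonneg : ∀ n s, 0 ≤ gn n s)
    (hg_int : IntegrableOn g I volume)
    (hgn_int : ∀ n, IntegrableOn (gn n) I volume)
    -- gₙ ⇀ g weakly in L¹(I): testing against bounded measurable φ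
    (hweak : ∀ φ : ℝ → ℝ, Measurable φ → (∃ Cφ : ℝ, ∀ s, |φ s| ≤ Cφ) →
      Tendsto (fun n => ∫ s in I, gn n s * φ s) atTop
        (nhds (∫ s in I, g s * φ s))) :
    (∫⁻ s in I, ENNReal.ofReal (f s * g s)) ≤
      liminf (fun n => ∫⁻ s in I, ENNReal.ofReal (fn n s * gn n s)) atTop := by
  set h : ℕ → ℝ → ℝ := fun k s => min (⨅ n, fn (n + k) s) (k : ℝ) with hh
  have hbdd : ∀ k s, BddBelow (Set.range fun n => fn (n + k) s) := fun k s =>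
    ⟨0, by rintro _ ⟨n, rfl⟩; exact hfn_nonneg _ _⟩
  have h_meas : ∀ k, Measurable (h k) := fun k =>
    (Measurable.iInf fun n => hfn_meas (n + k)).min measurable_const
  have h_nonneg : ∀ k s, 0 ≤ h k s := fun k s =>
    le_min (le_ciInf fun n => hfn_nonneg _ _) (Nat.cast_nonneg k)
  have h_abs : ∀ k s, |h k s| ≤ k := fun k s => by
    rw [abs_of_nonneg (h_nonneg k s)]; exact min_le_right _ _
  have h_le : ∀ k n s, k ≤ n → h k s ≤ fn n s := fun k n s hkn => by
    refine (min_le_left _ _).trans ?_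
    have := ciInf_le (hbdd k s) (n - k)
    simpa [Nat.sub_add_cancel hkn] using this
  have h_int : ∀ (u : ℝ → ℝ) k, IntegrableOn u I volume →
      Integrable (fun s => u s * h k s) (volume.restrict I) := fun u k hu =>
    Integrable.mul_bdd (c := (k : ℝ)) hu (h_meas k).aestronglyMeasurable
      (Eventually.of_forall fun s => h_abs k s)
  have h_eq : ∀ (u : ℝ → ℝ) k, IntegrableOn u I volume → (∀ s, 0 ≤ u s) →
      ∫⁻ s in I, ENNReal.ofReal (u s * h k s) = ENNReal.ofReal (∫ s in I, u s * h k s) :=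
    fun u k hu hu0 => (ofReal_integral_eq_lintegral_ofReal (h_int u k hu)
      (Eventually.of_forall fun s => mul_nonneg (hu0 s) (h_nonneg k s))).symm
  have key : ∀ k, ∫⁻ s in I, ENNReal.ofReal (g s * h k s) ≤
      liminf (fun n => ∫⁻ s in I, ENNReal.ofReal (fn n s * gn n s)) atTop := by
    intro k
    have ht := (ENNReal.continuous_ofReal.tendsto _).comp
      (hweak (h k) (h_meas k) ⟨k, h_abs k⟩)
    rw [h_eq g k hg_int hg_nonneg, ← ht.liminf_eq]
    refine liminf_le_liminf ?_
    filter_upwards [eventually_ge_atTop k] with n hn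
    simp only [Function.comp]
    rw [← h_eq (gn n) k (hgn_int n) (hgn_nonneg n)]
    refine lintegral_mono fun s => ENNReal.ofReal_le_ofReal ?_
    rw [mul_comm]
    exact mul_le_mul_of_nonneg_right (h_le k n s hn) (hgn_nonneg n s)
  have hpt : ∀ᵐ s ∂(volume.restrict I), ENNReal.ofReal (f s * g s) ≤
      liminf (fun k => ENNReal.ofReal (g s * h k s)) atTop := by
    rw [ae_restrict_iff' hI_meas]
    filter_upwards [hliminf] with s hs hsI
    have hs := hs hsI
    have hc : ∀ c < f s, ENNReal.ofReal (c * g s) ≤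
        liminf (fun k => ENNReal.ofReal (g s * h k s)) atTop := by
      intro c hc
      have hc' := hc.trans_le hs
      rw [liminf_eq] at hc'
      have hne : {a : ℝ | ∀ᶠ n in atTop, a ≤ fn n s}.Nonempty :=
        ⟨0, Eventually.of_forall fun n => hfn_nonneg n s⟩
      obtain ⟨a, ha, hca⟩ := exists_lt_of_lt_csSup hne hc'
      obtain ⟨N, hN⟩ := eventually_atTop.1 ha
      obtain ⟨M, hM⟩ := exists_nat_ge c
      refine le_liminf_of_le (by isBoundedDefault) ?_
      filter_upwards [eventually_ge_atTop N, eventually_ge_atTop M] with k hkN hkM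
      refine ENNReal.ofReal_le_ofReal ?_
      rw [mul_comm]
      refine mul_le_mul_of_nonneg_left (le_min (le_ciInf fun n => ?_) ?_) (hg_nonneg s)
      · exact hca.le.trans (hN _ (by omega))
      · exact hM.trans (by exact_mod_cast hkM)
    have hcont : Tendsto (fun c : ℝ => ENNReal.ofReal (c * g s)) (nhdsWithin (f s) (Set.Iio (f s)))
        (nhds (ENNReal.ofReal (f s * g s))) :=
      ((ENNReal.continuous_ofReal.comp (continuous_id.mul continuous_const)).tendsto
        (f s)).mono_left nhdsWithin_le_nhds
    refine le_of_tendsto hcont ?_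
    filter_upwards [self_mem_nhdsWithin] with c hcm
    exact hc c hcm
  calc _ ≤ ∫⁻ s in I, liminf (fun k => ENNReal.ofReal (g s * h k s)) atTop :=
        lintegral_mono_ae hpt
    _ ≤ liminf (fun k => ∫⁻ s in I, ENNReal.ofReal (g s * h k s)) atTop :=
        lintegral_liminf_le' fun k => (h_int g k hg_int).aemeasurable.ennreal_ofReal
    _ ≤ liminf (fun _ : ℕ => liminf (fun n => ∫⁻ s in I, ENNReal.ofReal (fn n s * gn n s)) atTop)
          atTop := liminf_le_liminf (Eventually.of_forall key)
    _ = _ := liminf_const _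
end

section
/- (Lower semicontinuity of the regularized conjugates.) Under the stated assumptions on Z, V, X, A, 𝕍 and R, for δ > 0 define R_δ : Z → [0,∞) by R_δ(v) := R(v) + ½⟨𝕍v,v⟩ + (δ/2)⟨Av,v⟩, and for η ∈ Z* define the conjugates R_δ*(η) := sup_{v∈Z} (⟨η,v⟩ − R_δ(v)) ∈ [0,∞) and R_𝕍*(η) := sup_{v∈Z} (⟨η,v⟩ − R(v) − ½⟨𝕍v,v⟩) ∈ [0,∞]. If (δₙ) ⊂ (0,∞) with δₙ ↓ 0 and (ηₙ) ⊂ Z* with ηₙ ⇀ η weakly in Z*, then liminf_{n→∞} R_{δₙ}*(ηₙ) ≥ R_𝕍*(η). -/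
open Filter

/-- Lower semicontinuity of the regularized conjugates (Lemma
`app_prop:lsc3` of the paper): with
`R_δ(v) = R(v) + ½⟨𝕍v,v⟩ + (δ/2)⟨Av,v⟩` and the convex conjugates
`R_δ*(η) = sup_v (⟨η,v⟩ − R_δ(v))`, `R_𝕍*(η) = sup_v (⟨η,v⟩ − R(v) − ½⟨𝕍v,v⟩)`
(valued in `[0,∞]`), if `δₙ ↓ 0` and `ηₙ ⇀ η` weakly in `Z*`, then
`liminf R_{δₙ}*(ηₙ) ≥ R_𝕍*(η)`. -/
theorem stmt15
    {Z V X : Type*}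
    [NormedAddCommGroup Z] [InnerProductSpace ℝ Z] [CompleteSpace Z]
    [TopologicalSpace.SeparableSpace Z]
    [NormedAddCommGroup V] [InnerProductSpace ℝ V] [CompleteSpace V]
    [TopologicalSpace.SeparableSpace V]
    [NormedAddCommGroup X] [NormedSpace ℝ X]
    (jZV : Z →L[ℝ] V) (hjZV_inj : Function.Injective jZV)
    (hjZV_cpt : IsCompactOperator jZV)
    (jVX : V →L[ℝ] X) (hjVX_inj : Function.Injective jVX)
    (A : Z →L[ℝ] Z →L[ℝ] ℝ) (hA_symm : ∀ z w : Z, A z w = A w z)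
    (α : ℝ) (hα : 0 < α) (hA_ell : ∀ z : Z, α * ‖z‖ ^ 2 ≤ A z z)
    (VV : V →L[ℝ] V →L[ℝ] ℝ) (hVV_symm : ∀ u v : V, VV u v = VV v u)
    (γ : ℝ) (hγ : 0 < γ) (hVV_ell : ∀ v : V, γ * ‖v‖ ^ 2 ≤ VV v v)
    (R : X → ℝ) (hR_conv : ConvexOn ℝ Set.univ R) (hR_cont : Continuous R)
    (hR_hom : ∀ t : ℝ, 0 ≤ t → ∀ x : X, R (t • x) = t * R x)
    (c C : ℝ) (hc : 0 < c) (hC : 0 < C)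
    (hR_low : ∀ x : X, c * ‖x‖ ≤ R x) (hR_up : ∀ x : X, R x ≤ C * ‖x‖)
    (δn : ℕ → ℝ) (hδn_pos : ∀ n, 0 < δn n) (hδn_anti : Antitone δn)
    (hδn_lim : Tendsto δn atTop (nhds 0))
    (ηn : ℕ → Z →L[ℝ] ℝ) (η : Z →L[ℝ] ℝ)
    (hηweak : ∀ z : Z, Tendsto (fun n => ηn n z) atTop (nhds (η z))) :
    (⨆ v : Z, ENNReal.ofReal (η v -
        (R (jVX (jZV v)) + 1 / 2 * VV (jZV v) (jZV v)))) ≤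
      liminf (fun n => ⨆ v : Z, ENNReal.ofReal (ηn n v -
        (R (jVX (jZV v)) + 1 / 2 * VV (jZV v) (jZV v)
          + δn n / 2 * A v v))) atTop := by
  refine iSup_le fun v => ?_
  have h1 : Tendsto (fun n => ηn n v -
        (R (jVX (jZV v)) + 1 / 2 * VV (jZV v) (jZV v)
          + δn n / 2 * A v v)) atTop (nhds (η v -
        (R (jVX (jZV v)) + 1 / 2 * VV (jZV v) (jZV v) + 0 / 2 * A v v))) :=
    (hηweak v).sub (((hδn_lim.div_const 2).mul_const (A v v)).const_add _)
  have h2 := ENNReal.tendsto_ofReal h1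
  rw [zero_div, zero_mul, add_zero] at h2
  rw [← h2.liminf_eq]
  refine liminf_le_liminf (Eventually.of_forall fun n => ?_)
  exact le_iSup (fun v : Z => ENNReal.ofReal (ηn n v -
        (R (jVX (jZV v)) + 1 / 2 * VV (jZV v) (jZV v)
          + δn n / 2 * A v v))) v
end

section
/- (Integrated chain rule for the energy.) Under the stated assumptions on Z, V, X, A, R and F, let T > 0 and let z : [0,T] → Z be such that sup_{t∈[0,T]} ‖z(t)‖_Z < ∞, z is absolutely continuous as a map into V with a.e. derivative ż ∈ L¹((0,T);V) (i.e. z(t) = z(0) + ∫₀ᵗ ż(r) dr in V), for every t ∈ [0,T] the functional DI(z(t)) ∈ Z* extends to an element ξ(t) ∈ V* with ess sup_{t} ‖ξ(t)‖_{V*} < ∞, and the map t ↦ I(z(t)) is continuous on [0,T]. Then for all 0 ≤ t₁ ≤ t₂ ≤ T, I(z(t₂)) − I(z(t₁)) = ∫_{t₁}^{t₂} ⟨ξ(r), ż(r)⟩_{V*,V} dr. -/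
open MeasureTheory

theorem aux_taylor
    {Z V : Type*}
    [NormedAddCommGroup Z] [InnerProductSpace ℝ Z]
    [NormedAddCommGroup V] [InnerProductSpace ℝ V]
    (jZV : Z →L[ℝ] V) (F : Z → ℝ) (DF : Z → V →L[ℝ] ℝ)
    (hDF : ∀ z : Z, HasFDerivAt F ((DF z).comp jZV) z)
    (D2F : Z → Z →L[ℝ] V →L[ℝ] ℝ)
    (hD2F : ∀ z : Z, HasFDerivAt DF (D2F z) z)
    (M L : ℝ) (hL : 0 ≤ L)
    (hb : ∀ z : Z, ‖z‖ ≤ M → ‖D2F z‖ ≤ L) (u w : Z) (hu : ‖u‖ ≤ M) (hw : ‖w‖ ≤ M) :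
    |F u - F w - DF w (jZV (u - w))| ≤ L * ‖u - w‖ * ‖jZV (u - w)‖ := by
  have hconv : Convex ℝ (Metric.closedBall (0:Z) M) := convex_closedBall 0 M
  have hmem : ∀ s ∈ Set.Icc (0:ℝ) 1, w + s • (u - w) ∈ Metric.closedBall (0:Z) M := by
    intro s hs
    exact hconv.add_smul_sub_mem (by simpa using hw) (by simpa using hu) hs
  have hlip : ∀ s ∈ Set.Icc (0:ℝ) 1, ‖DF (w + s • (u - w)) - DF w‖ ≤ L * ‖u - w‖ := by
    intro s hs
    have h := hconv.norm_image_sub_le_of_norm_hasFDerivWithin_le (f := DF) (f' := D2F) (C := L)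
      (x := w) (y := w + s • (u - w))
      (fun x _ => (hD2F x).hasFDerivWithinAt) (fun x hx => hb x (by simpa using hx))
      (by simpa using hw) (hmem s hs)
    refine h.trans ?_
    gcongr
    rw [add_sub_cancel_left, norm_smul, Real.norm_of_nonneg hs.1]
    exact mul_le_of_le_one_left (norm_nonneg _) hs.2
  have hd : ∀ s : ℝ, HasDerivAt (fun s : ℝ => F (w + s • (u - w)) - s * DF w (jZV (u - w)))
      (DF (w + s • (u - w)) (jZV (u - w)) - DF w (jZV (u - w))) s := by
    intro s
    have h1 : HasDerivAt (fun s : ℝ => w + s • (u - w)) (u - w) s := by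
      simpa using ((hasDerivAt_id s).smul_const (u - w)).const_add w
    have h2 := (hDF (w + s • (u - w))).comp_hasDerivAt s h1
    have h3 := (hasDerivAt_id s).mul_const (DF w (jZV (u - w)))
    convert! h2.sub h3 using 1
    simp
  have key := norm_image_sub_le_of_norm_deriv_le_segment_01' (C := L * ‖u - w‖ * ‖jZV (u - w)‖)
    (fun s _ => (hd s).hasDerivWithinAt) (by
      intro s hs
      rw [← sub_apply]
      refine (ContinuousLinearMap.le_opNorm _ _).trans ?_
      gcongr
      exact hlip s ⟨hs.1, hs.2.le⟩)
  have e : F u - F w - DF w (jZV (u - w)) = (F (w + (1:ℝ) • (u - w)) - 1 * DF w (jZV (u - w)))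
      - (F (w + (0:ℝ) • (u - w)) - 0 * DF w (jZV (u - w))) := by
    simp; ring
  rw [e]
  exact key

theorem aux_chain {V : Type*}
    [NormedAddCommGroup V] [InnerProductSpace ℝ V] [CompleteSpace V]
    (T : ℝ) (hT : 0 < T) (φ : ℝ → ℝ) (zd : ℝ → V)
    (hzd : IntegrableOn zd (Set.Ioc 0 T) volume)
    (y : ℝ → V) (hy : ∀ t, y t = ∫ r in (0:ℝ)..t, zd r)
    (ξ : ℝ → V →L[ℝ] ℝ) (C' : ℝ) (hC' : 0 ≤ C')
    (hlow : ∀ s ∈ Set.Icc 0 T, ∀ t ∈ Set.Icc 0 T,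
      ξ s (y t - y s) - C' * ‖y t - y s‖ ^ 2 ≤ φ t - φ s)
    (K : ℝ) (hK : ∀ᵐ t : ℝ ∂volume, t ∈ Set.Ioc (0:ℝ) T → ‖ξ t‖ ≤ K)
    (hφ : ContinuousOn φ (Set.Icc 0 T)) :
    ∀ t₁ t₂ : ℝ, 0 ≤ t₁ → t₁ ≤ t₂ → t₂ ≤ T →
      φ t₂ - φ t₁ = ∫ r in Set.Ioc t₁ t₂, ξ r (zd r) := by
  have hII : IntervalIntegrable zd volume 0 T :=
    (intervalIntegrable_iff_integrableOn_Ioc_of_le hT.le).2 hzd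
  have hycont : ContinuousOn y (Set.Icc 0 T) := by
    have h := intervalIntegral.continuousOn_primitive_interval' hII (a := 0) (by simp)
    rw [Set.uIcc_of_le hT.le] at h
    exact h.congr fun t _ => hy t
  obtain ⟨B, hB⟩ := isCompact_Icc.exists_bound_of_continuousOn hycont
  have hB0 : 0 ≤ B := (norm_nonneg _).trans (hB 0 ⟨le_rfl, hT.le⟩)
  set K' := |K| + C' * (2 * B) with hK'
  have hK'0 : 0 ≤ K' := by positivity
  have hone : ∀ t ∈ Set.Icc 0 T, ∀ s ∈ Set.Icc 0 T, φ s - φ t ≤ K' * ‖y t - y s‖ := by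
    intro t ht
    have hc : ContinuousOn (fun s => φ t - φ s + K' * ‖y t - y s‖) (Set.Icc 0 T) := by
      fun_prop
    have hae : (fun s => min (φ t - φ s + K' * ‖y t - y s‖) 0)
        =ᵐ[volume.restrict (Set.Icc 0 T)] fun _ => (0:ℝ) := by
      rw [← restrict_Ioc_eq_restrict_Icc]
      refine (ae_restrict_iff' measurableSet_Ioc).2 ?_
      filter_upwards [hK] with s hs hsm
      have hsI : s ∈ Set.Icc 0 T := ⟨hsm.1.le, hsm.2⟩
      have h1 := hlow s hsI t ht
      have h2 : -(|K| * ‖y t - y s‖) ≤ ξ s (y t - y s) := by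
        have h3 := (ξ s).le_opNorm (y t - y s)
        have h4 : ‖ξ s‖ * ‖y t - y s‖ ≤ |K| * ‖y t - y s‖ := by
          gcongr
          exact (hs hsm).trans (le_abs_self K)
        rw [Real.norm_eq_abs] at h3
        linarith [neg_abs_le (ξ s (y t - y s))]
      have h5 : ‖y t - y s‖ ≤ 2 * B := by
        linarith [norm_sub_le (y t) (y s), hB t ht, hB s hsI]
      have h6 : C' * ‖y t - y s‖ ^ 2 ≤ C' * (2 * B) * ‖y t - y s‖ := by
        rw [pow_two, mul_assoc]
        gcongr
      apply min_eq_right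
      rw [hK', add_mul]
      linarith
    have := Measure.eqOn_Icc_of_ae_eq volume hT.ne hae (ContinuousOn.inf hc continuousOn_const) continuousOn_const
    intro s hs
    have h := min_eq_right_iff.1 (this hs)
    linarith
  have habs : ∀ s ∈ Set.Icc 0 T, ∀ t ∈ Set.Icc 0 T, dist (φ s) (φ t) ≤ K' * ‖y t - y s‖ := by
    intro s hs t ht
    rw [Real.dist_eq, abs_le]
    have h1 := hone t ht s hs
    have h2 := hone s hs t ht
    rw [norm_sub_rev] at h2
    constructor <;> linarith
  have hAC : AbsolutelyContinuousOnInterval φ 0 T := by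
    have h1 := (hII.norm.const_mul K').absolutelyContinuousOnInterval_intervalIntegral
      (c := 0) (by simp)
    refine squeeze_zero' (Filter.Eventually.of_forall fun E => Finset.sum_nonneg fun _ _ => dist_nonneg) ?_ h1
    have : ∀ᶠ (E : ℕ × (ℕ → ℝ × ℝ)) in AbsolutelyContinuousOnInterval.totalLengthFilter ⊓ Filter.principal (AbsolutelyContinuousOnInterval.disjWithin 0 T),
        E ∈ AbsolutelyContinuousOnInterval.disjWithin 0 T :=
      Filter.eventually_inf_principal.mpr (by simp)
    filter_upwards [this] with E hE
    refine Finset.sum_le_sum fun i hi => ?_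
    obtain ⟨ha, hb⟩ := hE.1 i hi
    have sub : ∀ x ∈ Set.uIcc (0:ℝ) T, IntervalIntegrable zd volume 0 x := by
      intro x hx
      exact hII.mono_set (Set.uIcc_subset_uIcc_left hx)
    have ia := sub _ ha
    have ib := sub _ hb
    rw [Real.dist_eq (∫ v in (0:ℝ)..(E.2 i).1, K' * ‖zd v‖), intervalIntegral.integral_interval_sub_left (ia.norm.const_mul K') (ib.norm.const_mul K'),
      intervalIntegral.integral_const_mul, abs_mul, abs_of_nonneg hK'0]
    rw [Set.uIcc_of_le hT.le] at ha hb
    refine (habs _ ha _ hb).trans ?_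
    gcongr
    rw [norm_sub_rev, hy, hy, intervalIntegral.integral_interval_sub_left ia ib]
    exact intervalIntegral.norm_integral_le_abs_integral_norm
  intro t₁ t₂ h1 h12 h2
  have hAC' : AbsolutelyContinuousOnInterval φ t₁ t₂ := by
    apply hAC.mono
    rw [Set.uIcc_of_le h12, Set.uIcc_of_le hT.le]
    exact Set.Icc_subset_Icc h1 h2
  rw [← hAC'.integral_deriv_eq_sub, intervalIntegral.integral_of_le h12]
  apply setIntegral_congr_ae measurableSet_Ioc
  filter_upwards [hAC.ae_differentiableAt, hII.ae_hasDerivAt_integral,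
    Measure.ae_ne volume T] with t hd hder hne htm
  have htI : t ∈ Set.Ioo 0 T := ⟨h1.trans_lt htm.1, lt_of_le_of_ne (htm.2.trans h2) hne⟩
  have htI' : t ∈ Set.uIcc 0 T := by
    rw [Set.uIcc_of_le hT.le]; exact ⟨htI.1.le, htI.2.le⟩
  have hd1 := (hd htI').hasDerivAt
  have hd2 : HasDerivAt y (zd t) t := by
    have h := hder htI' 0 (by simp)
    rwa [← funext hy] at h
  have hd3 : HasDerivAt (fun s => y s - y t) (zd t) t := hd2.sub_const _
  have hG := ((hd1.sub_const (φ t)).sub ((ξ t).hasFDerivAt.comp_hasDerivAt t hd3)).add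
    (hd3.norm_sq.const_mul C')
  have hmin : IsLocalMin ((((fun s => φ s - φ t) - (ξ t) ∘ (fun s => y s - y t))
      + fun s => C' * ‖y s - y t‖ ^ 2)) t := by
    filter_upwards [Ioo_mem_nhds htI.1 htI.2] with s hs
    have := hlow t ⟨htI.1.le, htI.2.le⟩ s ⟨hs.1.le, hs.2.le⟩
    simp only [Pi.add_apply, Pi.sub_apply, Function.comp_apply, sub_self, map_zero, norm_zero]
    norm_num
    simp only [map_sub] at this
    linarith
  have := hmin.hasDerivAt_eq_zero hG
  simp at this
  linarith

/-- Integrated chain rule for the energy (Proposition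
`prop.chainrules` of the paper): if `z ∈ W^{1,1}((0,T);V) ∩ L^∞((0,T);Z)`,
`DI(z(t)) = A z(t) + DF(z(t))` extends for every `t` to `ξ(t) ∈ V*` with
`ess sup ‖ξ(t)‖_{V*} < ∞`, and `t ↦ I(z(t))` is continuous, then
`I(z(t₂)) − I(z(t₁)) = ∫_{t₁}^{t₂} ⟨ξ(r), ż(r)⟩ dr` for all
`0 ≤ t₁ ≤ t₂ ≤ T`, where `I(z) = ½⟨Az,z⟩ + F(z)`. -/
theorem stmt19
    {Z V X : Type*}
    [NormedAddCommGroup Z] [InnerProductSpace ℝ Z] [CompleteSpace Z]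
    [TopologicalSpace.SeparableSpace Z]
    [NormedAddCommGroup V] [InnerProductSpace ℝ V] [CompleteSpace V]
    [TopologicalSpace.SeparableSpace V]
    [NormedAddCommGroup X] [NormedSpace ℝ X]
    (jZV : Z →L[ℝ] V) (hjZV_inj : Function.Injective jZV)
    (hjZV_cpt : IsCompactOperator jZV)
    (jVX : V →L[ℝ] X) (hjVX_inj : Function.Injective jVX)
    (A : Z →L[ℝ] Z →L[ℝ] ℝ) (hA_symm : ∀ z w : Z, A z w = A w z)
    (α : ℝ) (hα : 0 < α) (hA_ell : ∀ z : Z, α * ‖z‖ ^ 2 ≤ A z z)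
    (R : X → ℝ) (hR_conv : ConvexOn ℝ Set.univ R) (hR_cont : Continuous R)
    (hR_hom : ∀ t : ℝ, 0 ≤ t → ∀ x : X, R (t • x) = t * R x)
    (c C : ℝ) (hc : 0 < c) (hC : 0 < C)
    (hR_low : ∀ x : X, c * ‖x‖ ≤ R x) (hR_up : ∀ x : X, R x ≤ C * ‖x‖)
    (F : Z → ℝ) (hF_nonneg : ∀ z : Z, 0 ≤ F z)
    (DF : Z → V →L[ℝ] ℝ)
    (hDF : ∀ z : Z, HasFDerivAt F ((DF z).comp jZV) z)
    (D2F : Z → Z →L[ℝ] V →L[ℝ] ℝ)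
    (hD2F : ∀ z : Z, HasFDerivAt DF (D2F z) z)
    (hD2F_cont : Continuous D2F)
    (C₀ q : ℝ) (hC₀ : 0 < C₀) (hq : 1 ≤ q)
    (hD2F_bound : ∀ z v : Z, ‖D2F z v‖ ≤ C₀ * (1 + ‖z‖ ^ q) * ‖v‖)
    (T : ℝ) (hT : 0 < T)
    (z : ℝ → Z) (zd : ℝ → V)
    -- z ∈ L^∞((0,T);Z)
    (hbd : ∃ M : ℝ, ∀ t ∈ Set.Icc (0:ℝ) T, ‖z t‖ ≤ M)
    -- z absolutely continuous into V with a.e. derivative ż ∈ L¹((0,T);V)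
    (hzd_int : IntegrableOn zd (Set.Ioc 0 T) volume)
    (hAC : ∀ t ∈ Set.Icc (0:ℝ) T,
      jZV (z t) = jZV (z 0) + ∫ r in Set.Ioc 0 t, zd r)
    -- DI(z(t)) extends to ξ(t) ∈ V*, essentially bounded
    (ξ : ℝ → V →L[ℝ] ℝ)
    (hξ : ∀ t ∈ Set.Icc (0:ℝ) T, ∀ w : Z,
      ξ t (jZV w) = A (z t) w + DF (z t) (jZV w))
    (hξ_bd : ∃ K : ℝ, ∀ᵐ t : ℝ ∂volume, t ∈ Set.Ioc (0:ℝ) T → ‖ξ t‖ ≤ K)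
    -- t ↦ I(z(t)) is continuous
    (hIcont : ContinuousOn (fun t => 1 / 2 * A (z t) (z t) + F (z t))
      (Set.Icc 0 T)) :
    ∀ t₁ t₂ : ℝ, 0 ≤ t₁ → t₁ ≤ t₂ → t₂ ≤ T →
      (1 / 2 * A (z t₂) (z t₂) + F (z t₂))
          - (1 / 2 * A (z t₁) (z t₁) + F (z t₁)) =
        ∫ r in Set.Ioc t₁ t₂, ξ r (zd r) := by
  obtain ⟨M, hM⟩ := hbd
  obtain ⟨K, hK⟩ := hξ_bd
  have hM0 : 0 ≤ M := (norm_nonneg _).trans (hM 0 ⟨le_rfl, hT.le⟩)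
  set L := C₀ * (1 + M ^ q) with hLdef
  have hL : 0 ≤ L := by positivity
  have hb : ∀ z : Z, ‖z‖ ≤ M → ‖D2F z‖ ≤ L := by
    intro x hx
    refine ContinuousLinearMap.opNorm_le_bound _ hL fun v => (hD2F_bound x v).trans ?_
    have : ‖x‖ ^ q ≤ M ^ q := Real.rpow_le_rpow (norm_nonneg _) hx (by linarith)
    rw [hLdef]
    gcongr
  have hdiff : ∀ s ∈ Set.Icc 0 T, ∀ t ∈ Set.Icc 0 T,
      (∫ r in (0:ℝ)..t, zd r) - (∫ r in (0:ℝ)..s, zd r) = jZV (z t - z s) := by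
    intro s hs t ht
    rw [map_sub, hAC t ht, hAC s hs, intervalIntegral.integral_of_le hs.1,
      intervalIntegral.integral_of_le ht.1]
    abel
  refine aux_chain T hT (fun t => 1 / 2 * A (z t) (z t) + F (z t)) zd hzd_int
    (fun t => ∫ r in (0:ℝ)..t, zd r) (fun _ => rfl) ξ (L ^ 2 / (2 * α)) (by positivity) ?_ K hK hIcont
  intro s hs t ht
  have h1 := aux_taylor jZV F DF hDF D2F hD2F M L hL hb (z t) (z s) (hM t ht) (hM s hs)
  have h2 := hA_ell (z t - z s)
  simp only [hdiff s hs t ht, hξ s hs]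
  have h3 := (abs_le.1 h1).1
  have h4 : A (z t) (z t) = A (z s) (z s) + 2 * A (z s) (z t - z s)
      + A (z t - z s) (z t - z s) := by
    simp only [map_sub, sub_apply]
    linarith [hA_symm (z t) (z s)]
  have h5 : L * ‖z t - z s‖ * ‖jZV (z t - z s)‖ ≤
      α / 2 * ‖z t - z s‖ ^ 2 + L ^ 2 / (2 * α) * ‖jZV (z t - z s)‖ ^ 2 := by
    have h6 : α / 2 * ‖z t - z s‖ ^ 2 + L ^ 2 / (2 * α) * ‖jZV (z t - z s)‖ ^ 2
      - L * ‖z t - z s‖ * ‖jZV (z t - z s)‖ =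
      (α * ‖z t - z s‖ - L * ‖jZV (z t - z s)‖) ^ 2 / (2 * α) := by
      field_simp
      ring
    have h7 : 0 ≤ (α * ‖z t - z s‖ - L * ‖jZV (z t - z s)‖) ^ 2 / (2 * α) := by positivity
    linarith
  rw [h4]
  linarith
end
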